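/- Let Ω ⊆ ℝⁿ be a C¹ domain, let a : [0,∞) → ℝ be C¹ with locally Lipschitz derivative, a(t) > 0 and (t·a(t))′ > 0 for all t ≥ 0, let f ∈ C¹(ℝ), and let u ∈ C³(Ω) ∩ C¹(cl Ω) be a non-constant stable weak solution of Δ_a u + f(u) = 0 in Ω. Let Ω₀ ⊆ Ω be a nonempty open connected subset such that ∇u = 0 at every point of ∂Ω₀. If u has moderate energy growth in Ω₀, then Ω₀ = Ω, crit(u) = ∅, and there exists a unit vector e ∈ ℝⁿ with ⟨∇u, e⟩ > 0 everywhere in Ω. -/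

import Mathlib

open MeasureTheory Set Metric Filter
open scoped RealInnerProductSpace Topology ENNReal

noncomputable section

variable {n : ℕ}

/-- The quasilinear operator matrix `A(p)` applied to a vector `v`:
`A(p)v = a(|p|) v + (a'(|p|)/|p|) ⟨p,v⟩ p` (with the second term vanishing at `p = 0`). -/
def Aop (a : ℝ → ℝ) (p v : EuclideanSpace ℝ (Fin n)) : EuclideanSpace ℝ (Fin n) :=
  a ‖p‖ • v + ((deriv a ‖p‖ / ‖p‖) * ⟪p, v⟫) • p

/-- `λ₁(t) = a(t) + t·a'(t) = (t a(t))'`. -/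
def lam1 (a : ℝ → ℝ) (t : ℝ) : ℝ := a t + t * deriv a t

/-- `λ₂(t) = a(t)`. -/
def lam2 (a : ℝ → ℝ) (t : ℝ) : ℝ := a t

/-- `λmax(t) = max{λ₁(t), λ₂(t)}`. -/
def lamMax (a : ℝ → ℝ) (t : ℝ) : ℝ := max (lam1 a t) (lam2 a t)

/-- A Lipschitz test function with compact support contained in `Ω`. -/
def IsTestOn (Ω : Set (EuclideanSpace ℝ (Fin n))) (φ : EuclideanSpace ℝ (Fin n) → ℝ) : Prop :=
  (∃ K, LipschitzWith K φ) ∧ HasCompactSupport φ ∧ tsupport φ ⊆ Ω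

/-- `u` is a weak solution of `div(a(|∇u|)∇u) + f(u) = 0` in `Ω`. -/
def IsWeakSolution (a f : ℝ → ℝ) (Ω : Set (EuclideanSpace ℝ (Fin n)))
    (u : EuclideanSpace ℝ (Fin n) → ℝ) : Prop :=
  ∀ φ : EuclideanSpace ℝ (Fin n) → ℝ, IsTestOn Ω φ →
    ∫ x in Ω, a ‖gradient u x‖ * ⟪gradient u x, gradient φ x⟫
      = ∫ x in Ω, f (u x) * φ x

/-- The stability inequality for a solution `u`. -/
def IsStable (a f : ℝ → ℝ) (Ω : Set (EuclideanSpace ℝ (Fin n)))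
    (u : EuclideanSpace ℝ (Fin n) → ℝ) : Prop :=
  ∀ φ : EuclideanSpace ℝ (Fin n) → ℝ, IsTestOn Ω φ →
    ∫ x in Ω, deriv f (u x) * φ x ^ 2
      ≤ ∫ x in Ω, ⟪Aop a (gradient u x) (gradient φ x), gradient φ x⟫

/-- `u` has moderate energy growth in `Ω₀`. -/
def ModerateEnergyGrowth (a : ℝ → ℝ) (u : EuclideanSpace ℝ (Fin n) → ℝ)
    (Ω₀ : Set (EuclideanSpace ℝ (Fin n))) : Prop :=
  ∃ φ : ℕ → EuclideanSpace ℝ (Fin n) → ℝ,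
    (∀ j, ∃ K, LipschitzWith K (φ j)) ∧
    (∀ j, HasCompactSupport (φ j)) ∧
    (∀ j x, 0 ≤ φ j x) ∧
    (∀ K : Set (EuclideanSpace ℝ (Fin n)), IsCompact K → K ⊆ closure Ω₀ →
      TendstoUniformlyOn (fun j => φ j) (fun _ => (1 : ℝ)) atTop K) ∧
    Tendsto (fun j => ∫ x in Ω₀, ‖gradient u x‖ ^ 2 *
        ⟪Aop a (gradient u x) (gradient (φ j) x), gradient (φ j) x⟫)
      atTop (nhds 0)

/-- A `C^k` domain: nonempty, open, connected, with boundary locally given by a regular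
`C^k` defining function. -/
def IsCkDomain (k : ℕ∞) (Ω : Set (EuclideanSpace ℝ (Fin n))) : Prop :=
  Ω.Nonempty ∧ IsOpen Ω ∧ IsConnected Ω ∧
    ∀ p ∈ frontier Ω, ∃ V : Set (EuclideanSpace ℝ (Fin n)),
      ∃ g : EuclideanSpace ℝ (Fin n) → ℝ,
        IsOpen V ∧ p ∈ V ∧ ContDiffOn ℝ k g V ∧ (∀ x ∈ V, gradient g x ≠ 0) ∧
        Ω ∩ V = {x ∈ V | g x < 0}

/-- A `C^k` domain together with its interior unit normal field `η`. -/
def IsCkDomainWithNormal (k : ℕ∞) (Ω : Set (EuclideanSpace ℝ (Fin n)))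
    (η : EuclideanSpace ℝ (Fin n) → EuclideanSpace ℝ (Fin n)) : Prop :=
  Ω.Nonempty ∧ IsOpen Ω ∧ IsConnected Ω ∧
    ∀ p ∈ frontier Ω, ∃ V : Set (EuclideanSpace ℝ (Fin n)),
      ∃ g : EuclideanSpace ℝ (Fin n) → ℝ,
        IsOpen V ∧ p ∈ V ∧ ContDiffOn ℝ k g V ∧ (∀ x ∈ V, gradient g x ≠ 0) ∧
        Ω ∩ V = {x ∈ V | g x < 0} ∧
        η p = -(‖gradient g p‖⁻¹ • gradient g p)

/-- `a ∈ C^{1,1}_loc([0,∞))`: `C¹` on `[0,∞)` with locally Lipschitz derivative. -/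
def C11Loc (a : ℝ → ℝ) : Prop :=
  ContDiffOn ℝ 1 a (Ici 0) ∧
    ∀ t ∈ Ici (0 : ℝ), ∃ V ∈ 𝓝[Ici (0 : ℝ)] t, ∃ K, LipschitzOnWith K (deriv a) V

abbrev Eu (n : ℕ) := EuclideanSpace ℝ (Fin n)

/-! ### Part 1: the operator `A(p)` and the field `V(p) = a(|p|) p` -/

lemma c11_cont {a : ℝ → ℝ} (ha : C11Loc a) : ContinuousOn a (Ici 0) := ha.1.continuousOn

lemma c11_locLip {a : ℝ → ℝ} (ha : C11Loc a) : LocallyLipschitzOn (Ici 0) (deriv a) := by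
  intro t ht
  obtain ⟨V, hV, K, hK⟩ := ha.2 t ht
  exact ⟨K, V, hV, hK⟩

lemma c11_deriv_cont {a : ℝ → ℝ} (ha : C11Loc a) : ContinuousOn (deriv a) (Ici 0) :=
  (c11_locLip ha).continuousOn

lemma c11_hasDerivAt {a : ℝ → ℝ} (ha : C11Loc a) {t : ℝ} (ht : 0 < t) :
    HasDerivAt a (deriv a t) t := by
  have h := ha.1.differentiableOn (by norm_num) t (le_of_lt ht)
  exact (h.differentiableAt (Ici_mem_nhds ht)).hasDerivAt

lemma cont_a_norm {a : ℝ → ℝ} (ha : C11Loc a) : Continuous (fun p : Eu n => a ‖p‖) :=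
  (c11_cont ha).comp_continuous continuous_norm (fun p => norm_nonneg p)

lemma cont_da_norm {a : ℝ → ℝ} (ha : C11Loc a) : Continuous (fun p : Eu n => deriv a ‖p‖) :=
  (c11_deriv_cont ha).comp_continuous continuous_norm (fun p => norm_nonneg p)

/-- the linear operator `A(p)` -/
def AL (a : ℝ → ℝ) (p : Eu n) : Eu n →L[ℝ] Eu n :=
  a ‖p‖ • ContinuousLinearMap.id ℝ (Eu n) + (deriv a ‖p‖ / ‖p‖) • (innerSL ℝ p).smulRight p

lemma AL_apply (a : ℝ → ℝ) (p v : Eu n) : AL a p v = Aop a p v := by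
  simp [AL, Aop, smul_smul]

/-- the nonlinear flux -/
def Vf (a : ℝ → ℝ) (p : Eu n) : Eu n := a ‖p‖ • p

lemma Vf_hasFDerivAt {a : ℝ → ℝ} (ha : C11Loc a) (p : Eu n) :
    HasFDerivAt (Vf a) (AL a p) p := by
  by_cases hp : p = 0
  · subst hp
    rw [hasFDerivAt_iff_isLittleO_nhds_zero]
    have h0 : Tendsto (fun h : Eu n => a ‖h‖ - a 0) (𝓝 0) (𝓝 0) := by
      have h : Continuous (fun h : Eu n => a ‖h‖ - a 0) := (cont_a_norm ha).sub continuous_const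
      have := h.tendsto 0
      simpa using this
    have h1 : (fun h : Eu n => a ‖h‖ - a 0) =o[𝓝 0] (fun _ => (1:ℝ)) := by
      rw [Asymptotics.isLittleO_one_iff]; exact h0
    have h2 := h1.smul_isBigO (Asymptotics.isBigO_refl (fun h : Eu n => h) (𝓝 0))
    simp only [one_smul] at h2
    refine h2.congr_left (fun h => ?_)
    simp [Vf, AL, sub_smul]
  · have hn : 0 < ‖p‖ := norm_pos_iff.2 hp
    have h1 : HasFDerivAt (fun q : Eu n => ‖q‖) ((1 / ‖p‖) • innerSL ℝ p) p := by
      have h2 : HasFDerivAt (fun q : Eu n => ‖q‖ ^ 2) (2 • innerSL ℝ p) p :=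
        (hasStrictFDerivAt_norm_sq p).hasFDerivAt
      have h3 := h2.sqrt (by positivity)
      have h4 : (fun q : Eu n => √(‖q‖ ^ 2)) = fun q => ‖q‖ := by
        funext q; rw [Real.sqrt_sq (norm_nonneg q)]
      rw [h4, Real.sqrt_sq (norm_nonneg p)] at h3
      refine h3.congr_fderiv ?_
      ext v
      simp; field_simp
    have h5 := (c11_hasDerivAt ha hn).comp_hasFDerivAt p h1
    have h6 := h5.smul (hasFDerivAt_id p)
    refine h6.congr_fderiv ?_
    ext1 v
    simp [AL, smul_smul, div_eq_mul_inv]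

lemma AL_continuous {a : ℝ → ℝ} (ha : C11Loc a) : Continuous (fun p : Eu n => AL a p) := by
  unfold AL
  refine ((cont_a_norm ha).smul continuous_const).add ?_
  rw [continuous_iff_continuousAt]
  intro p
  have hB : Continuous (fun p : Eu n => (innerSL ℝ p).smulRight p) := by
    have : (fun p : Eu n => (innerSL ℝ p).smulRight p) =
      fun p => ContinuousLinearMap.smulRightL ℝ (Eu n) (Eu n) (innerSL ℝ p) p := rfl
    rw [this]
    fun_prop
  by_cases hp : p = 0
  · subst hp
    have : Tendsto (fun p : Eu n => |deriv a ‖p‖| * ‖p‖) (𝓝 0) (𝓝 0) := by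
      have h : Continuous (fun p : Eu n => |deriv a ‖p‖| * ‖p‖) :=
        ((cont_da_norm (n := n) ha).abs).mul continuous_norm
      have := h.tendsto 0
      simpa using this
    unfold ContinuousAt
    simp only [norm_zero, div_zero, zero_smul]
    refine squeeze_zero_norm (fun q => ?_) this
    rw [norm_smul, ContinuousLinearMap.norm_smulRight_apply, innerSL_apply_norm,
      Real.norm_eq_abs, abs_div, abs_norm]
    by_cases hq : ‖q‖ = 0
    · simp [hq]
    · apply le_of_eq; field_simp
  · have hn : ‖p‖ ≠ 0 := norm_ne_zero_iff.2 hp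
    exact (((cont_da_norm ha).continuousAt).div continuous_norm.continuousAt hn).smul
      hB.continuousAt

lemma Vf_contDiff {a : ℝ → ℝ} (ha : C11Loc a) : ContDiff ℝ 1 (Vf (n := n) a) := by
  rw [contDiff_one_iff_hasFDerivAt]
  exact ⟨AL a, AL_continuous ha, Vf_hasFDerivAt ha⟩

/-- bilinear form -/
lemma Aop_inner (a : ℝ → ℝ) (p v w : Eu n) :
    ⟪Aop a p v, w⟫ = a ‖p‖ * ⟪v, w⟫ + (deriv a ‖p‖ / ‖p‖) * ⟪p, v⟫ * ⟪p, w⟫ := by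
  simp [Aop, inner_add_left, inner_smul_left]

lemma Aop_symm (a : ℝ → ℝ) (p v w : Eu n) : ⟪Aop a p v, w⟫ = ⟪Aop a p w, v⟫ := by
  rw [Aop_inner, Aop_inner, real_inner_comm v w]; ring

lemma Aop_add (a : ℝ → ℝ) (p v w : Eu n) : Aop a p (v + w) = Aop a p v + Aop a p w := by
  simp only [← AL_apply, map_add]

lemma Aop_smul (a : ℝ → ℝ) (p v : Eu n) (c : ℝ) : Aop a p (c • v) = c • Aop a p v := by
  simp only [← AL_apply, map_smul]

lemma Aop_zero (a : ℝ → ℝ) (p : Eu n) : Aop a p 0 = 0 := by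
  simp only [← AL_apply, map_zero]

/-- ellipticity -/
lemma Aop_ge (a : ℝ → ℝ) (p v : Eu n) :
    min (a ‖p‖) (lam1 a ‖p‖) * ‖v‖ ^ 2 ≤ ⟪Aop a p v, v⟫ := by
  rw [Aop_inner, real_inner_self_eq_norm_sq]
  by_cases hp : ‖p‖ = 0
  · simp only [hp, div_zero, zero_mul, add_zero]
    exact mul_le_mul_of_nonneg_right (min_le_left _ _) (by positivity)
  have hpp : 0 < ‖p‖ := lt_of_le_of_ne (norm_nonneg p) (Ne.symm hp)
  have hcs : ⟪p, v⟫ ^ 2 ≤ ‖p‖ ^ 2 * ‖v‖ ^ 2 := by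
    have := abs_real_inner_le_norm p v
    rw [← sq_abs, ← mul_pow]
    exact pow_le_pow_left₀ (abs_nonneg _) this 2
  rcases le_total 0 (deriv a ‖p‖) with h | h
  · have h1 : 0 ≤ (deriv a ‖p‖ / ‖p‖) * ⟪p, v⟫ * ⟪p, v⟫ := by
      rw [mul_assoc, ← sq]; positivity
    have h2 : min (a ‖p‖) (lam1 a ‖p‖) * ‖v‖ ^ 2 ≤ a ‖p‖ * ‖v‖ ^ 2 :=
      mul_le_mul_of_nonneg_right (min_le_left _ _) (by positivity)
    linarith
  · have h2 : min (a ‖p‖) (lam1 a ‖p‖) * ‖v‖ ^ 2 ≤ lam1 a ‖p‖ * ‖v‖ ^ 2 :=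
      mul_le_mul_of_nonneg_right (min_le_right _ _) (by positivity)
    have h3 : (deriv a ‖p‖ / ‖p‖) * (‖p‖ ^ 2 * ‖v‖ ^ 2) ≤ (deriv a ‖p‖ / ‖p‖) * ⟪p, v⟫ ^ 2 :=
      mul_le_mul_of_nonpos_left hcs (div_nonpos_of_nonpos_of_nonneg h hpp.le)
    have h4 : (deriv a ‖p‖ / ‖p‖) * (‖p‖ ^ 2 * ‖v‖ ^ 2) = ‖p‖ * deriv a ‖p‖ * ‖v‖ ^ 2 := by
      field_simp
    unfold lam1 at h2
    unfold lam1
    nlinarith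

lemma Aop_nonneg {a : ℝ → ℝ} (hapos : ∀ t ≥ (0 : ℝ), 0 < a t)
    (hlam : ∀ t ≥ (0 : ℝ), 0 < lam1 a t) (p v : Eu n) : 0 ≤ ⟪Aop a p v, v⟫ := by
  refine le_trans ?_ (Aop_ge a p v)
  have h1 := hapos ‖p‖ (norm_nonneg p)
  have h2 := hlam ‖p‖ (norm_nonneg p)
  have : 0 < min (a ‖p‖) (lam1 a ‖p‖) := lt_min h1 h2
  positivity

lemma Aop_amgm {a : ℝ → ℝ} (hapos : ∀ t ≥ (0 : ℝ), 0 < a t)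
    (hlam : ∀ t ≥ (0 : ℝ), 0 < lam1 a t) (p v w : Eu n) :
    2 * ⟪Aop a p v, w⟫ ≤ ⟪Aop a p v, v⟫ + ⟪Aop a p w, w⟫ := by
  have h := Aop_nonneg hapos hlam p (v + (-1 : ℝ) • w)
  rw [Aop_add, Aop_smul] at h
  simp only [inner_add_left, inner_add_right, inner_smul_left, inner_smul_right] at h
  have hs := Aop_symm a p v w
  simp at h
  linarith

/-- norm bound -/
lemma Aop_abs_le (a : ℝ → ℝ) (p v w : Eu n) : |⟪Aop a p v, w⟫| ≤ ‖AL a p‖ * ‖v‖ * ‖w‖ := by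
  rw [← AL_apply]
  refine (abs_real_inner_le_norm _ _).trans ?_
  gcongr
  exact ContinuousLinearMap.le_opNorm _ _

/-- uniform ellipticity for bounded gradients -/
lemma exists_ellip {a : ℝ → ℝ} (ha : C11Loc a) (hapos : ∀ t ≥ (0 : ℝ), 0 < a t)
    (hlam : ∀ t ≥ (0 : ℝ), 0 < lam1 a t) (T : ℝ) :
    ∃ l > 0, ∀ p v : Eu n, ‖p‖ ≤ T → l * ‖v‖ ^ 2 ≤ ⟪Aop a p v, v⟫ := by
  by_cases hT : 0 ≤ T
  swap
  · exact ⟨1, one_pos, fun p v hp => absurd ((norm_nonneg p).trans hp) hT⟩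
  have hc : ContinuousOn (fun t => min (a t) (lam1 a t)) (Icc 0 T) := by
    have hs : Icc 0 T ⊆ Ici (0:ℝ) := fun x hx => hx.1
    unfold lam1
    exact ((c11_cont ha).mono hs).inf (((c11_cont ha).mono hs).add
      (continuousOn_id.mul ((c11_deriv_cont ha).mono hs)))
  obtain ⟨t, ht, hmin⟩ := isCompact_Icc.exists_isMinOn (nonempty_Icc.2 hT) hc
  refine ⟨min (a t) (lam1 a t), lt_min (hapos t ht.1) (hlam t ht.1), fun p v hp => ?_⟩
  refine le_trans ?_ (Aop_ge a p v)
  exact mul_le_mul_of_nonneg_right (hmin (a := ‖p‖) ⟨norm_nonneg p, hp⟩) (by positivity)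

/-! ### Part 2: gradients, cutoffs, integrability -/

lemma grad_def (f : Eu n → ℝ) (x : Eu n) :
    gradient f x = (InnerProductSpace.toDual ℝ (Eu n)).symm (fderiv ℝ f x) := rfl

lemma grad_inner (f : Eu n → ℝ) (x v : Eu n) : ⟪gradient f x, v⟫ = fderiv ℝ f x v := by
  simp [grad_def]

lemma grad_add {f g : Eu n → ℝ} {x : Eu n} (hf : DifferentiableAt ℝ f x)
    (hg : DifferentiableAt ℝ g x) :
    gradient (fun y => f y + g y) x = gradient f x + gradient g x := by
  simp only [grad_def]
  rw [fderiv_fun_add hf hg, map_add]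

lemma grad_const_mul {f : Eu n → ℝ} {x : Eu n} (hf : DifferentiableAt ℝ f x) (c : ℝ) :
    gradient (fun y => c * f y) x = c • gradient f x := by
  simp only [grad_def]
  rw [fderiv_const_mul hf c, map_smulₛₗ]
  simp

lemma grad_mul {f g : Eu n → ℝ} {x : Eu n} (hf : DifferentiableAt ℝ f x)
    (hg : DifferentiableAt ℝ g x) :
    gradient (fun y => f y * g y) x = f x • gradient g x + g x • gradient f x := by
  simp only [grad_def]
  rw [fderiv_fun_mul hf hg, map_add, map_smulₛₗ, map_smulₛₗ]
  simp

lemma grad_zero_of_min {f : Eu n → ℝ} {x : Eu n} (h : IsLocalMin f x) : gradient f x = 0 := by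
  rw [grad_def, h.fderiv_eq_zero, map_zero]

lemma grad_congr {f g : Eu n → ℝ} {x : Eu n} (h : f =ᶠ[𝓝 x] g) : gradient f x = gradient g x := by
  rw [grad_def, grad_def, h.fderiv_eq]

lemma grad_zero_off {f : Eu n → ℝ} {x : Eu n} (h : x ∉ tsupport f) : gradient f x = 0 := by
  have : f =ᶠ[𝓝 x] fun _ => 0 := notMem_tsupport_iff_eventuallyEq.1 h
  rw [grad_congr this]; simp [grad_def]

lemma grad_norm (f : Eu n → ℝ) (x : Eu n) : ‖gradient f x‖ = ‖fderiv ℝ f x‖ := by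
  simp [grad_def]

lemma grad_norm_le {f : Eu n → ℝ} {K : NNReal} (h : LipschitzWith K f) (x : Eu n) :
    ‖gradient f x‖ ≤ K := by
  rw [grad_norm]; exact norm_fderiv_le_of_lipschitz ℝ h

lemma grad_meas (f : Eu n → ℝ) : Measurable (gradient f) := by
  have : gradient f = fun x => (InnerProductSpace.toDual ℝ (Eu n)).symm (fderiv ℝ f x) := rfl
  rw [this]
  exact ((InnerProductSpace.toDual ℝ (Eu n)).symm.continuous.measurable).comp (measurable_fderiv ℝ f)

lemma grad_pospart {f : Eu n → ℝ} {x : Eu n} (hf : ContinuousAt f x) (h : 0 < f x) :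
    gradient (fun y => max (f y) 0) x = gradient f x := by
  apply grad_congr
  filter_upwards [hf.eventually (lt_mem_nhds h)] with y hy using max_eq_left (le_of_lt hy)

lemma grad_pospart_zero {f : Eu n → ℝ} {x : Eu n} (h : f x ≤ 0) :
    gradient (fun y => max (f y) 0) x = 0 := by
  apply grad_zero_of_min
  apply Filter.Eventually.of_forall
  intro y
  simp [max_eq_right h]

lemma grad_comp_sub (f : Eu n → ℝ) (c x : Eu n) :
    gradient (fun y => f (y - c)) x = gradient f (x - c) := by
  rw [grad_def, grad_def, fderiv_comp_sub]

/-- gradient of a `C^(k+1)` function is `C^k` on open sets -/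
lemma grad_contDiffOn {k : ℕ} {f : Eu n → ℝ} {s : Set (Eu n)} (hs : IsOpen s)
    (hf : ContDiffOn ℝ (k + 1) f s) : ContDiffOn ℝ k (gradient f) s := by
  have h : ContDiffOn ℝ k (fun x => fderiv ℝ f x) s := hf.fderiv_of_isOpen hs le_rfl
  exact ((InnerProductSpace.toDual ℝ (Eu n)).symm.contDiff).comp_contDiffOn h

lemma grad_contDiff {k : ℕ} {f : Eu n → ℝ}
    (hf : ContDiff ℝ (k + 1) f) : ContDiff ℝ k (gradient f) := by
  rw [← contDiffOn_univ] at *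
  exact grad_contDiffOn isOpen_univ hf

/-- directional derivative of gradient = gradient of directional derivative -/
lemma fderiv_grad_symm {f : Eu n → ℝ} {x : Eu n} (hf : ContDiffAt ℝ 2 f x) (e : Eu n) :
    fderiv ℝ (gradient f) x e = gradient (fun y => ⟪gradient f y, e⟫) x := by
  have hd : DifferentiableAt ℝ (fderiv ℝ f) x :=
    (hf.fderiv_right (m := 1) (by norm_num)).differentiableAt (by norm_num)
  have hg : DifferentiableAt ℝ (gradient f) x := by
    have h := ((InnerProductSpace.toDual ℝ (Eu n)).symm.contDiff (n := 1)).contDiffAt.comp x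
      (hf.fderiv_right (m := 1) (by norm_num))
    exact h.differentiableAt (by norm_num)
  refine ext_inner_right ℝ (fun v => ?_)
  rw [grad_inner]
  have h1 : ⟪fderiv ℝ (gradient f) x e, v⟫ = fderiv ℝ (fderiv ℝ f) x e v := by
    have h5 : HasFDerivAt (fun y => ⟪gradient f y, v⟫)
        ((innerSL ℝ v).comp (fderiv ℝ (gradient f) x)) x := by
      have := (innerSL ℝ v).hasFDerivAt.comp x hg.hasFDerivAt
      refine this.congr_of_eventuallyEq (Filter.Eventually.of_forall fun y => ?_)
      simp [real_inner_comm]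
    have h6 : (fun y => ⟪gradient f y, v⟫) = fun y => fderiv ℝ f y v := by
      funext y; exact grad_inner f y v
    rw [h6] at h5
    have h7 : HasFDerivAt (fun y => fderiv ℝ f y v) ((fderiv ℝ (fderiv ℝ f) x).flip v) x := by
      have := hd.hasFDerivAt.clm_apply (hasFDerivAt_const v x)
      simpa using this
    have h8 := congrArg (fun L => L e) (h5.unique h7)
    simp only [ContinuousLinearMap.flip_apply] at h8
    rw [← h8, real_inner_comm]; rfl
  rw [h1]
  have h2 : (fun y => ⟪gradient f y, e⟫) = fun y => fderiv ℝ f y e := by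
    funext y; exact grad_inner f y e
  rw [h2]
  have h3 : HasFDerivAt (fun y => fderiv ℝ f y e) ((fderiv ℝ (fderiv ℝ f) x).flip e) x := by
    have := hd.hasFDerivAt.clm_apply (hasFDerivAt_const e x)
    simpa using this
  rw [h3.fderiv]
  simp only [ContinuousLinearMap.flip_apply]
  exact (hf.isSymmSndFDerivAt (by simp)) e v

lemma exists_cutoff {K U : Set (Eu n)} (hK : IsCompact K) (hU : IsOpen U) (hKU : K ⊆ U) :
    ∃ χ : Eu n → ℝ, ContDiff ℝ (⊤ : ℕ∞) χ ∧ HasCompactSupport χ ∧ tsupport χ ⊆ U ∧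
      (∃ N, IsOpen N ∧ K ⊆ N ∧ ∀ x ∈ N, χ x = 1) ∧ ∀ x, 0 ≤ χ x ∧ χ x ≤ 1 := by
  obtain ⟨K2, hK2, hKK2, hK2U⟩ := exists_compact_between hK hU hKU
  obtain ⟨K1, hK1, hKK1, hK1K2⟩ := exists_compact_between hK isOpen_interior hKK2
  obtain ⟨f, hf, hr, hs, h1⟩ := exists_contMDiff_support_eq_eq_one_iff (n := (⊤ : ℕ∞))
    (modelWithCornersSelf ℝ (Eu n))
    (isOpen_interior (s := K2)) hK1.isClosed hK1K2
  have hts : tsupport f ⊆ K2 := by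
    rw [tsupport, hs]
    exact closure_minimal interior_subset hK2.isClosed
  refine ⟨f, hf.contDiff, hK2.of_isClosed_subset (isClosed_tsupport _) hts,
    hts.trans hK2U, ⟨interior K1, isOpen_interior, hKK1, fun x hx => ?_⟩, fun x => ?_⟩
  · exact (h1 x).1 (interior_subset hx)
  · have := hr (mem_range_self x)
    exact this

lemma contDiff_cutoff_mul {k : ℕ} {χ u : Eu n → ℝ} {U : Set (Eu n)} (hU : IsOpen U)
    (hχ : ContDiff ℝ (⊤ : ℕ∞) χ) (hs : tsupport χ ⊆ U) (hu : ContDiffOn ℝ k u U) :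
    ContDiff ℝ k (fun x => χ x * u x) := by
  rw [contDiff_iff_contDiffAt]
  intro x
  by_cases hx : x ∈ tsupport (fun x => χ x * u x)
  swap
  · exact (contDiffAt_const (c := (0:ℝ))).congr_of_eventuallyEq
      (notMem_tsupport_iff_eventuallyEq.1 hx)
  have hx' : x ∈ U := hs (closure_mono (fun y hy => by
    simp only [Function.mem_support] at *; exact left_ne_zero_of_mul hy) hx)
  exact ((hχ.of_le (by exact_mod_cast le_top)).contDiffAt).mul (hu.contDiffAt (hU.mem_nhds hx'))

/-- local `C^k` extension -/
lemma exists_ext {k : ℕ} {u : Eu n → ℝ} {K U : Set (Eu n)} (hK : IsCompact K) (hU : IsOpen U)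
    (hKU : K ⊆ U) (hu : ContDiffOn ℝ k u U) :
    ∃ w : Eu n → ℝ, ContDiff ℝ k w ∧ HasCompactSupport w ∧
      ∃ N, IsOpen N ∧ K ⊆ N ∧ N ⊆ U ∧ ∀ x ∈ N, w x = u x := by
  obtain ⟨χ, h1, h2, h3, ⟨N, hN, hKN, hN1⟩, -⟩ := exists_cutoff hK hU hKU
  refine ⟨fun x => χ x * u x, contDiff_cutoff_mul hU h1 h3 hu, h2.mul_right, N, hN, hKN, ?_, ?_⟩
  · intro x hx
    refine h3 (subset_tsupport _ ?_)
    simp [hN1 x hx]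
  · intro x hx
    simp [hN1 x hx]

/-- integrability criterion -/
lemma integrable_of_bdd {F : Eu n → ℝ} {μ : Measure (Eu n)} [IsFiniteMeasureOnCompacts μ]
    (hm : AEStronglyMeasurable F μ)
    {K : Set (Eu n)} (hK : IsCompact K) {C : ℝ} (hC : ∀ᵐ x ∂μ, x ∈ K → |F x| ≤ C)
    (h0 : ∀ x ∉ K, F x = 0) : Integrable F μ := by
  have : IntegrableOn F K μ := by
    refine Measure.integrableOn_of_bounded (M := C) (hK.measure_lt_top.ne) hm ?_
    rw [ae_restrict_iff' hK.measurableSet]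
    exact hC
  rwa [integrableOn_iff_integrable_of_support_subset] at this
  intro x hx
  by_contra h
  exact hx (h0 x h)

/-- products of bounded Lipschitz functions -/
lemma lip_mul {f g : Eu n → ℝ} {K L : NNReal} {C D : ℝ} (hf : LipschitzWith K f)
    (hg : LipschitzWith L g) (hC : ∀ x, |f x| ≤ C) (hD : ∀ x, |g x| ≤ D) :
    ∃ M, LipschitzWith M (fun x => f x * g x) := by
  have hC0 : 0 ≤ C := (abs_nonneg _).trans (hC 0)
  have hD0 : 0 ≤ D := (abs_nonneg _).trans (hD 0)
  refine ⟨⟨C * L + D * K, by positivity⟩, LipschitzWith.of_dist_le_mul fun x y => ?_⟩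
  have h1 := hf.dist_le_mul x y
  have h2 := hg.dist_le_mul x y
  rw [Real.dist_eq] at *
  have : f x * g x - f y * g y = f x * (g x - g y) + g y * (f x - f y) := by ring
  rw [this]
  refine (abs_add_le _ _).trans ?_
  rw [abs_mul, abs_mul]
  change _ ≤ (C * L + D * K) * dist x y
  have h3 : |f x| * |g x - g y| ≤ C * (L * dist x y) :=
    mul_le_mul (hC x) h2 (abs_nonneg _) hC0
  have h4 : |g y| * |f x - f y| ≤ D * (K * dist x y) :=
    mul_le_mul (hD y) h1 (abs_nonneg _) hD0
  linarith

lemma bdd_of_cs {f : Eu n → ℝ} (hf : Continuous f) (hc : HasCompactSupport f) :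
    ∃ C, ∀ x, |f x| ≤ C := by
  obtain ⟨C, hC⟩ := hf.bounded_above_of_compact_support hc
  exact ⟨C, hC⟩

/-! ### Part 3: the linearized equation -/

lemma deriv_shift {F : Type*} [NormedAddCommGroup F] [InnerProductSpace ℝ F]
    {Y : Eu n → F} {Z : Eu n → F} {e : Eu n} {C D : ℝ} (hY : ContDiff ℝ 1 Y)
    (hD : ∀ z, ‖Y z‖ ≤ D) (hC : ∀ z, ‖fderiv ℝ Y z e‖ ≤ C) (hZ : Integrable Z) :
    HasDerivAt (fun h : ℝ => ∫ x, ⟪Y (x + h • e), Z x⟫) (∫ x, ⟪fderiv ℝ Y x e, Z x⟫) 0 := by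
  have hmeas : ∀ W : Eu n → F, Continuous W → AEStronglyMeasurable (fun x => ⟪W x, Z x⟫) volume :=
    fun W hW => (hW.aestronglyMeasurable).inner hZ.aestronglyMeasurable
  have hYc := hY.continuous
  have hdc : Continuous (fun z => fderiv ℝ Y z e) :=
    (hY.continuous_fderiv (by norm_num)).clm_apply continuous_const
  have key := hasDerivAt_integral_of_dominated_loc_of_deriv_le (μ := (volume : Measure (Eu n)))
    (F := fun (h : ℝ) (x : Eu n) => ⟪Y (x + h • e), Z x⟫) (x₀ := (0:ℝ)) (s := univ)
    (F' := fun (h : ℝ) (x : Eu n) => ⟪fderiv ℝ Y (x + h • e) e, Z x⟫)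
    (bound := fun x => C * ‖Z x‖) univ_mem
    (Filter.Eventually.of_forall fun h => hmeas _ (hYc.comp (by fun_prop)))
    ?_ (hmeas _ (hdc.comp (by fun_prop))) ?_ (hZ.norm.const_mul C) ?_
  · simpa using key.2
  · refine (hZ.norm.const_mul D).mono' (hmeas _ (hYc.comp (by fun_prop))) ?_
    refine Filter.Eventually.of_forall fun x => ?_
    refine (norm_inner_le_norm _ _).trans ?_
    gcongr; exact hD _
  · refine Filter.Eventually.of_forall fun x h _ => ?_
    refine (norm_inner_le_norm _ _).trans ?_
    gcongr; exact hC _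
  · refine Filter.Eventually.of_forall fun x h _ => ?_
    have h1 : HasDerivAt (fun h : ℝ => x + h • e) e h := by
      have := ((hasDerivAt_id h).smul_const e).const_add x
      simpa using this
    have h2 := ((hY.differentiable (by norm_num)) (x + h • e)).hasFDerivAt.comp_hasDerivAt h h1
    have h3 := h2.inner ℝ (hasDerivAt_const h (Z x))
    simpa using h3

lemma test_integrable_grad {Ω : Set (Eu n)} {ζ : Eu n → ℝ} (hζ : IsTestOn Ω ζ) :
    Integrable (gradient ζ) := by
  obtain ⟨⟨K, hK⟩, hc, -⟩ := hζ
  rw [← integrable_norm_iff (grad_meas ζ).aestronglyMeasurable]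
  refine integrable_of_bdd (grad_meas ζ).norm.aestronglyMeasurable hc (C := K) ?_ ?_
  · refine Filter.Eventually.of_forall fun x _ => ?_
    rw [abs_norm]; exact grad_norm_le hK x
  · intro x hx
    rw [grad_zero_off hx, norm_zero]

lemma test_integrable {Ω : Set (Eu n)} {ζ : Eu n → ℝ} (hζ : IsTestOn Ω ζ) :
    Integrable ζ := by
  obtain ⟨⟨K, hK⟩, hc, -⟩ := hζ
  exact hK.continuous.integrable_of_hasCompactSupport hc

lemma test_shift {Ω : Set (Eu n)} {ζ : Eu n → ℝ} (hζ : IsTestOn Ω ζ) (c : Eu n)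
    (h : ∀ x, x - c ∈ tsupport ζ → x ∈ Ω) : IsTestOn Ω (fun x => ζ (x - c)) := by
  obtain ⟨⟨K, hK⟩, hc, -⟩ := hζ
  have h1 : (fun x => ζ (x - c)) = ζ ∘ (Homeomorph.subRight c) := rfl
  refine ⟨⟨K, ?_⟩, ?_, ?_⟩
  · refine LipschitzWith.of_dist_le_mul fun x y => ?_
    have := hK.dist_le_mul (x - c) (y - c)
    rwa [dist_sub_right] at this
  · rw [h1]; exact hc.comp_homeomorph _
  · rw [h1, tsupport_comp_eq_preimage]
    intro x hx; exact h x hx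

lemma linearized {Ω : Set (Eu n)} (hΩ : IsOpen Ω) {a f : ℝ → ℝ} (ha : C11Loc a)
    (hf : ContDiff ℝ 1 f) {u : Eu n → ℝ} (hu : ContDiffOn ℝ 3 u Ω)
    (hsol : IsWeakSolution a f Ω u) (e : Eu n) {ζ : Eu n → ℝ} (hζ : IsTestOn Ω ζ) :
    ∫ x in Ω, ⟪Aop a (gradient u x) (gradient (fun y => ⟪gradient u y, e⟫) x), gradient ζ x⟫
      = ∫ x in Ω, deriv f (u x) * ⟪gradient u x, e⟫ * ζ x := by
  have hKc : IsCompact (tsupport ζ) := hζ.2.1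
  obtain ⟨δ, hδ, hδΩ⟩ := hKc.exists_cthickening_subset_open hΩ hζ.2.2
  obtain ⟨w, hw, hwc, N, hN, hKN, hNΩ, hwu⟩ := exists_ext (k := 3) hKc.cthickening hΩ hδΩ hu
  have hKN' : tsupport ζ ⊆ N := (self_subset_cthickening _).trans hKN
  have hev : ∀ x ∈ N, w =ᶠ[𝓝 x] u := fun x hx => by
    filter_upwards [hN.mem_nhds hx] with y hy using hwu y hy
  have hgr : ∀ x ∈ N, gradient w x = gradient u x := fun x hx => grad_congr (hev x hx)
  have hg2 : ∀ x ∈ N, gradient (fun y => ⟪gradient w y, e⟫) x =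
      gradient (fun y => ⟪gradient u y, e⟫) x := fun x hx => by
    apply grad_congr
    filter_upwards [hN.mem_nhds hx] with y hy
    rw [hgr y hy]
  have hGw : ContDiff ℝ 2 (gradient w) := grad_contDiff (k := 2) hw
  have hGc : HasCompactSupport (gradient w) := by
    refine hwc.mono' ?_
    intro x hx
    by_contra h
    exact hx (grad_zero_off h)
  set Y : Eu n → Eu n := fun x => Vf a (gradient w x) with hYdef
  have hY : ContDiff ℝ 1 Y := (Vf_contDiff ha).comp (hGw.of_le (by norm_num))
  have hYc : HasCompactSupport Y := hGc.comp_left (g := Vf a) (by simp [Vf])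
  obtain ⟨D1, hD1⟩ := hY.continuous.bounded_above_of_compact_support hYc
  have hYd : Continuous (fun z => fderiv ℝ Y z e) :=
    (hY.continuous_fderiv (by norm_num)).clm_apply continuous_const
  have hYdc : HasCompactSupport (fun z => fderiv ℝ Y z e) :=
    (hYc.fderiv ℝ).comp_left (g := fun L : Eu n →L[ℝ] Eu n => L e) rfl
  obtain ⟨C1, hC1⟩ := hYd.bounded_above_of_compact_support hYdc
  have J1 := deriv_shift hY hD1 hC1 (test_integrable_grad hζ)
  set P : Eu n → ℝ := fun x => f (w x) with hPdef
  have hP : ContDiff ℝ 1 P := hf.comp (hw.of_le (by norm_num))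
  have hPder : ∀ z, HasFDerivAt P (deriv f (w z) • fderiv ℝ w z) z := fun z =>
    ((hf.differentiable (by norm_num)) (w z)).hasDerivAt.comp_hasFDerivAt z
      ((hw.differentiable (by norm_num)) z).hasFDerivAt
  obtain ⟨Mw, hMw⟩ := hw.continuous.bounded_above_of_compact_support hwc
  have hPb : ∃ D, ∀ z, ‖P z‖ ≤ D := by
    obtain ⟨D, hD⟩ := (isCompact_closedBall (0:ℝ) Mw).exists_bound_of_continuousOn
      hf.continuous.continuousOn
    exact ⟨D, fun z => hD _ (by simpa using hMw z)⟩
  obtain ⟨D2, hD2⟩ := hPb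
  have hPd : Continuous (fun z => fderiv ℝ P z e) :=
    (hP.continuous_fderiv (by norm_num)).clm_apply continuous_const
  have hPdc : HasCompactSupport (fun z => fderiv ℝ P z e) := by
    refine hwc.mono' ?_
    intro x hx
    by_contra h
    apply hx
    have : fderiv ℝ w x = 0 := by
      have := (notMem_tsupport_iff_eventuallyEq.1 h).fderiv_eq (𝕜 := ℝ)
      rw [this]; simp
    simp only [(hPder x).fderiv, this]; simp
  obtain ⟨C2, hC2⟩ := hPd.bounded_above_of_compact_support hPdc
  have J2 := deriv_shift hP hD2 hC2 (test_integrable hζ)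
  have hev0 : (fun h : ℝ => ∫ x, ⟪Y (x + h • e), gradient ζ x⟫) =ᶠ[𝓝 0]
      (fun h : ℝ => ∫ x, ⟪P (x + h • e), ζ x⟫) := by
    have hsm : ∀ᶠ h : ℝ in 𝓝 0, ‖h • e‖ < δ := by
      have : Continuous (fun h : ℝ => ‖h • e‖) := by fun_prop
      have h2 := this.tendsto 0
      simp only [zero_smul, norm_zero] at h2
      exact h2.eventually (gt_mem_nhds hδ)
    filter_upwards [hsm] with h hh
    have hin : ∀ x, x - h • e ∈ tsupport ζ → x ∈ N := by
      intro x hx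
      refine hKN (mem_cthickening_of_dist_le x (x - h • e) δ _ hx ?_)
      rw [dist_eq_norm]; simpa using hh.le
    have htest := test_shift hζ (h • e) (fun x hx => hNΩ (hin x hx))
    have hs := hsol _ htest
    have e1 : ∫ x in Ω, a ‖gradient u x‖ * ⟪gradient u x, gradient (fun y => ζ (y - h • e)) x⟫
        = ∫ x, ⟪Y (x + h • e), gradient ζ x⟫ := by
      rw [← integral_sub_right_eq_self (fun x => ⟪Y (x + h • e), gradient ζ x⟫) (h • e)]
      rw [setIntegral_eq_integral_of_forall_compl_eq_zero]
      · refine integral_congr_ae (Filter.Eventually.of_forall fun x => ?_)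
        simp only [sub_add_cancel, grad_comp_sub]
        by_cases hx : x - h • e ∈ tsupport ζ
        · simp only [hYdef, hgr x (hin x hx), Vf, inner_smul_left]; simp
        · simp [grad_zero_off hx]
      · intro x hx
        rw [grad_comp_sub, grad_zero_off (fun h2 => hx (hNΩ (hin x h2)))]; simp
    have e2 : ∫ x in Ω, f (u x) * ζ (x - h • e) = ∫ x, ⟪P (x + h • e), ζ x⟫ := by
      rw [← integral_sub_right_eq_self (fun x => ⟪P (x + h • e), ζ x⟫) (h • e)]
      rw [setIntegral_eq_integral_of_forall_compl_eq_zero]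
      · refine integral_congr_ae (Filter.Eventually.of_forall fun x => ?_)
        simp only [sub_add_cancel]
        by_cases hx : x - h • e ∈ tsupport ζ
        · simp only [hPdef, hwu x (hin x hx)]; simp [mul_comm]
        · simp [image_eq_zero_of_notMem_tsupport hx]
      · intro x hx
        rw [image_eq_zero_of_notMem_tsupport (fun h2 => hx (hNΩ (hin x h2)))]; simp
    rw [← e1, ← e2, hs]
  have heq := (J1.congr_of_eventuallyEq hev0.symm).unique J2
  rw [setIntegral_eq_integral_of_forall_compl_eq_zero, setIntegral_eq_integral_of_forall_compl_eq_zero]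
  · have e1 : ∫ x, ⟪Aop a (gradient u x) (gradient (fun y => ⟪gradient u y, e⟫) x), gradient ζ x⟫
        = ∫ x, ⟪fderiv ℝ Y x e, gradient ζ x⟫ := by
      refine integral_congr_ae (Filter.Eventually.of_forall fun x => ?_)
      by_cases hx : x ∈ tsupport ζ
      · have hd : HasFDerivAt Y ((AL a (gradient w x)).comp (fderiv ℝ (gradient w) x)) x :=
          (Vf_hasFDerivAt ha _).comp x ((hGw.differentiable (by norm_num)) x).hasFDerivAt
        have : fderiv ℝ Y x e =
            Aop a (gradient u x) (gradient (fun y => ⟪gradient u y, e⟫) x) := by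
          rw [hd.fderiv, ContinuousLinearMap.comp_apply, AL_apply,
            fderiv_grad_symm ((hw.of_le (by norm_num)).contDiffAt), hgr x (hKN' hx),
            hg2 x (hKN' hx)]
        simp only [this]
      · simp [grad_zero_off hx]
    have e2 : ∫ x, deriv f (u x) * ⟪gradient u x, e⟫ * ζ x = ∫ x, ⟪fderiv ℝ P x e, ζ x⟫ := by
      refine integral_congr_ae (Filter.Eventually.of_forall fun x => ?_)
      by_cases hx : x ∈ tsupport ζ
      · simp only [(hPder x).fderiv]
        rw [← hgr x (hKN' hx), ← hwu x (hKN' hx), grad_inner]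
        simp [mul_comm]
      · simp [image_eq_zero_of_notMem_tsupport hx]
    rw [e1, e2, heq]
  · intro x hx
    rw [image_eq_zero_of_notMem_tsupport (fun h => hx (hζ.2.2 h))]; simp
  · intro x hx
    rw [grad_zero_off (fun h => hx (hζ.2.2 h))]; simp

/-! ### Part 4: truncations of directional derivatives are supersolutions -/

lemma meas_B {a : ℝ → ℝ} (ha : C11Loc a) (u : Eu n → ℝ) {P Q : Eu n → Eu n} (hP : Measurable P)
    (hQ : Measurable Q) : Measurable (fun x => ⟪Aop a (gradient u x) (P x), Q x⟫) := by
  have hc : Continuous (fun z : Eu n × Eu n => Aop a z.1 z.2) := by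
    have : (fun z : Eu n × Eu n => Aop a z.1 z.2) = fun z => AL a z.1 z.2 := by
      funext z; rw [AL_apply]
    rw [this]
    exact ((AL_continuous ha).comp continuous_fst).clm_apply continuous_snd
  exact (hc.measurable.comp ((grad_meas u).prodMk hP)).inner hQ

lemma vdir_contDiffOn {Ω : Set (Eu n)} (hΩ : IsOpen Ω) {u : Eu n → ℝ}
    (hu : ContDiffOn ℝ 3 u Ω) (e : Eu n) : ContDiffOn ℝ 2 (fun y => ⟪gradient u y, e⟫) Ω :=
  (grad_contDiffOn (k := 2) hΩ hu).inner ℝ contDiffOn_const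

lemma AL_bdd {a : ℝ → ℝ} (ha : C11Loc a) {s : Set (Eu n)} {G : Eu n → Eu n}
    (hG : ContinuousOn G s) (hs : IsCompact s) : ∃ C, ∀ x ∈ s, ‖AL a (G x)‖ ≤ C :=
  hs.exists_bound_of_continuousOn ((AL_continuous ha).comp_continuousOn hG)

lemma int_B {Ω : Set (Eu n)} (hΩ : IsOpen Ω) {a : ℝ → ℝ} (ha : C11Loc a) {u : Eu n → ℝ}
    (hu : ContDiffOn ℝ 3 u Ω) {P Q : Eu n → Eu n} (hP : Measurable P)
    (hQ : Measurable Q) {K : Set (Eu n)} (hK : IsCompact K) (hKΩ : K ⊆ Ω) {C D : ℝ}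
    (hC : ∀ x ∈ K, ‖P x‖ ≤ C) (hD : ∀ x ∈ K, ‖Q x‖ ≤ D)
    (h0 : ∀ x ∉ K, ⟪Aop a (gradient u x) (P x), Q x⟫ = 0) :
    Integrable (fun x => ⟪Aop a (gradient u x) (P x), Q x⟫) := by
  obtain ⟨L, hL⟩ := AL_bdd ha ((grad_contDiffOn (k := 2) hΩ hu).continuousOn.mono hKΩ) hK
  refine integrable_of_bdd (meas_B ha u hP hQ).aestronglyMeasurable hK (C := L * C * D) ?_ h0
  refine Filter.Eventually.of_forall fun x hx => ?_
  refine (Aop_abs_le _ _ _ _).trans ?_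
  have h1 := hL x hx
  have h2 := hC x hx
  have h3 := hD x hx
  have : 0 ≤ L := (norm_nonneg _).trans h1
  have : 0 ≤ C := (norm_nonneg _).trans h2
  gcongr

/-- integrability of `c(x) ζ(x)` -/
lemma int_c {Ω : Set (Eu n)} (hΩ : IsOpen Ω) {c ζ : Eu n → ℝ} (hc : ContinuousOn c Ω)
    (hζ : Continuous ζ) (hs : HasCompactSupport ζ) (hsΩ : tsupport ζ ⊆ Ω) :
    IntegrableOn (fun x => c x * ζ x) Ω := by
  have hcont : ContinuousOn (fun x => c x * ζ x) Ω := hc.mul hζ.continuousOn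
  obtain ⟨C, hC⟩ := hs.isCompact.exists_bound_of_continuousOn (hcont.mono hsΩ)
  refine integrable_of_bdd (hcont.aestronglyMeasurable hΩ.measurableSet) hs.isCompact (C := C)
    (Filter.Eventually.of_forall fun x hx => hC x hx) ?_
  intro x hx
  rw [image_eq_zero_of_notMem_tsupport hx, mul_zero]

/-- the truncated directional derivative -/
def wf (Ω₀ : Set (Eu n)) (Du : Eu n → Eu n) (e : Eu n) : Eu n → ℝ :=
  indicator Ω₀ (fun x => max ⟪Du x, e⟫ 0)

lemma wf_continuous {Ω Ω₀ : Set (Eu n)} {Du : Eu n → Eu n} (hDuc : ContinuousOn Du (closure Ω))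
    (hsub : Ω₀ ⊆ Ω) (hbd : ∀ p ∈ frontier Ω₀, Du p = 0) (e : Eu n) :
    Continuous (wf Ω₀ Du e) := by
  refine continuous_indicator ?_ ?_
  · intro p hp; simp [hbd p hp]
  · have h : ContinuousOn Du (closure Ω₀) := hDuc.mono (closure_mono hsub)
    exact (h.inner continuousOn_const).sup continuousOn_const

lemma wf_nonneg (Ω₀ : Set (Eu n)) (Du : Eu n → Eu n) (e x : Eu n) : 0 ≤ wf Ω₀ Du e x :=
  indicator_nonneg (fun _ _ => le_max_right _ _) x

lemma wf_pos {Ω₀ : Set (Eu n)} {Du : Eu n → Eu n} {e x : Eu n} (h : 0 < wf Ω₀ Du e x) :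
    x ∈ Ω₀ ∧ 0 < ⟪Du x, e⟫ ∧ wf Ω₀ Du e x = ⟪Du x, e⟫ := by
  have hx : x ∈ Ω₀ := by
    by_contra hx
    rw [wf, indicator_of_notMem hx] at h
    exact lt_irrefl _ h
  rw [wf, indicator_of_mem hx] at *
  have : 0 < ⟪Du x, e⟫ := by
    by_contra h2
    rw [max_eq_right (not_lt.1 h2)] at h
    exact lt_irrefl _ h
  exact ⟨hx, this, max_eq_left this.le⟩

lemma lip_pospart {f : Eu n → ℝ} {K : NNReal} (hf : LipschitzWith K f) (ε : ℝ) :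
    LipschitzWith K (fun x => max (f x - ε) 0) := by
  refine LipschitzWith.max_const ?_ 0
  refine LipschitzWith.of_dist_le_mul fun x y => ?_
  have := hf.dist_le_mul x y
  rwa [dist_sub_right]

lemma wf_eventually {Ω Ω₀ : Set (Eu n)} {u : Eu n → ℝ} {Du : Eu n → Eu n}
    (hDu : ∀ x ∈ Ω, Du x = gradient u x)
    (hDuc : ContinuousOn Du (closure Ω)) (hsub : Ω₀ ⊆ Ω) (hbd : ∀ p ∈ frontier Ω₀, Du p = 0)
    (e : Eu n) {x : Eu n} (h : 0 < wf Ω₀ Du e x) :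
    wf Ω₀ Du e =ᶠ[𝓝 x] fun y => ⟪gradient u y, e⟫ := by
  filter_upwards [(wf_continuous hDuc hsub hbd e).continuousAt.eventually (lt_mem_nhds h)] with y hy
  obtain ⟨h1, h2, h3⟩ := wf_pos hy
  rw [h3, hDu y (hsub h1)]

lemma trunc_test {Ω Ω₀ : Set (Eu n)} (hΩ : IsOpen Ω) {u : Eu n → ℝ}
    (hu : ContDiffOn ℝ 3 u Ω) {Du : Eu n → Eu n} (hDu : ∀ x ∈ Ω, Du x = gradient u x)
    (hDuc : ContinuousOn Du (closure Ω)) (ho : IsOpen Ω₀)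
    (hsub : Ω₀ ⊆ Ω) (hbd : ∀ p ∈ frontier Ω₀, Du p = 0) (e : Eu n) {ε : ℝ} (hε : 0 < ε)
    {ψ : Eu n → ℝ} (hψ : ∃ K, LipschitzWith K ψ) (hψc : HasCompactSupport ψ)
    (hψ0 : ∀ x, 0 ≤ ψ x) :
    (IsTestOn Ω (fun x => max (wf Ω₀ Du e x - ε) 0 * ψ x) ∧
      tsupport (fun x => max (wf Ω₀ Du e x - ε) 0 * ψ x) ⊆
        {x | ε ≤ wf Ω₀ Du e x} ∩ tsupport ψ) ∧
    ∀ x, DifferentiableAt ℝ ψ x →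
      gradient (fun x => max (wf Ω₀ Du e x - ε) 0 * ψ x) x =
        if ε < wf Ω₀ Du e x then ψ x • gradient (fun y => ⟪gradient u y, e⟫) x +
          (wf Ω₀ Du e x - ε) • gradient ψ x else 0 := by
  have hwc := wf_continuous hDuc hsub hbd e
  set w := wf Ω₀ Du e with hw
  set K := {x | ε ≤ w x} ∩ tsupport ψ with hKdef
  have hKc : IsCompact K := hψc.isCompact.inter_left (isClosed_le continuous_const hwc)
  have hKΩ₀ : K ⊆ Ω₀ := fun x hx => (wf_pos (lt_of_lt_of_le hε hx.1)).1
  have hts : tsupport (fun x => max (w x - ε) 0 * ψ x) ⊆ K := by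
    refine closure_minimal ?_ hKc.isClosed
    intro x hx
    simp only [Function.mem_support] at hx
    refine ⟨?_, subset_tsupport _ (right_ne_zero_of_mul hx)⟩
    have h1 := left_ne_zero_of_mul hx
    by_contra h2
    apply h1
    apply max_eq_right
    simp only [mem_setOf_eq, not_le] at h2
    linarith
  refine ⟨⟨⟨?_, hKc.of_isClosed_subset (isClosed_tsupport _) hts,
    hts.trans (hKΩ₀.trans hsub)⟩, hts⟩, ?_⟩
  · obtain ⟨χ, h1, h2, h3, ⟨N, hN, hKN, hN1⟩, h01⟩ := exists_cutoff hKc ho hKΩ₀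
    have hv2 := (vdir_contDiffOn hΩ hu e).mono hsub
    have hv := contDiff_cutoff_mul (k := 2) ho h1 h3 hv2
    obtain ⟨L, hL⟩ := ContDiff.lipschitzWith_of_hasCompactSupport h2.mul_right hv (by norm_num)
    obtain ⟨C, hC⟩ := bdd_of_cs hv.continuous h2.mul_right
    obtain ⟨Kψ, hKψ⟩ := hψ
    obtain ⟨D, hD⟩ := bdd_of_cs hKψ.continuous hψc
    have heq : (fun x => max (w x - ε) 0 * ψ x) =
        fun x => max (χ x * ⟪gradient u x, e⟫ - ε) 0 * ψ x := by
      funext x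
      by_cases hx : x ∈ tsupport ψ
      swap
      · rw [image_eq_zero_of_notMem_tsupport hx, mul_zero, mul_zero]
      by_cases hxw : ε ≤ w x
      · obtain ⟨p1, p2, p3⟩ := wf_pos (lt_of_lt_of_le hε hxw)
        rw [hN1 x (hKN ⟨hxw, hx⟩), hw, p3, hDu x (hsub p1), one_mul]
      · rw [max_eq_right (by linarith), max_eq_right]
        by_cases hx0 : x ∈ Ω₀
        · have e1 : w x = max ⟪gradient u x, e⟫ 0 := by
            rw [hw, wf, indicator_of_mem hx0, hDu x (hsub hx0)]
          have h5 : χ x * ⟪gradient u x, e⟫ ≤ w x := by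
            rw [e1]
            calc χ x * ⟪gradient u x, e⟫ ≤ χ x * max ⟪gradient u x, e⟫ 0 :=
                  mul_le_mul_of_nonneg_left (le_max_left _ _) (h01 x).1
              _ ≤ 1 * max ⟪gradient u x, e⟫ 0 :=
                  mul_le_mul_of_nonneg_right (h01 x).2 (le_max_right _ _)
              _ = _ := one_mul _
          linarith
        · have : χ x = 0 := image_eq_zero_of_notMem_tsupport (fun h => hx0 (h3 h))
          rw [this]; linarith
    rw [heq]
    refine lip_mul (lip_pospart hL ε) hKψ (C := C + |ε|) (fun x => ?_) hD
    have := hC x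
    rw [abs_le] at *
    constructor
    · have := le_max_right (χ x * ⟪gradient u x, e⟫ - ε) 0
      have := abs_nonneg ε
      linarith
    · apply max_le
      · have := neg_abs_le ε; linarith
      · have := abs_nonneg ε; linarith
  · intro x hd
    split_ifs with h
    · have hpos : 0 < w x := hε.trans h
      have hev := wf_eventually hDu hDuc hsub hbd e hpos
      obtain ⟨p1, p2, p3⟩ := wf_pos hpos
      have hxΩ := hsub p1
      have hvd : DifferentiableAt ℝ (fun y => ⟪gradient u y, e⟫) x :=
        ((vdir_contDiffOn hΩ hu e).contDiffAt (hΩ.mem_nhds hxΩ)).differentiableAt (by norm_num)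
      have hev2 : (fun x => max (w x - ε) 0 * ψ x) =ᶠ[𝓝 x]
          fun y => (⟪gradient u y, e⟫ + (-ε)) * ψ y := by
        filter_upwards [hev, hwc.continuousAt.eventually (lt_mem_nhds h)] with y h1 h2
        rw [max_eq_left (by linarith), ← h1]; ring
      rw [grad_congr hev2, grad_mul (hvd.add_const _) hd]
      have h6 : gradient (fun y => ⟪gradient u y, e⟫ + (-ε)) x =
          gradient (fun y => ⟪gradient u y, e⟫) x := by
        simp only [grad_def, fderiv_add_const]
      rw [h6, hw, hev.eq_of_nhds, add_comm, sub_eq_add_neg]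
    · apply grad_zero_of_min
      refine Filter.Eventually.of_forall fun y => ?_
      have h1 : max (w x - ε) 0 = 0 := max_eq_right (by linarith)
      change max (w x - ε) 0 * ψ x ≤ max (w y - ε) 0 * ψ y
      rw [h1, zero_mul]
      exact mul_nonneg (le_max_right _ _) (hψ0 y)

/-! ### Part 5: the supersolution inequality -/

lemma test_add {Ω : Set (Eu n)} {φ ψ : Eu n → ℝ} (h1 : IsTestOn Ω φ) (h2 : IsTestOn Ω ψ) (t : ℝ) :
    IsTestOn Ω (fun x => φ x + t * ψ x) := by
  obtain ⟨⟨K, hK⟩, hc, hs⟩ := h1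
  obtain ⟨⟨L, hL⟩, hd, hr⟩ := h2
  have hL2 : LipschitzWith (‖t‖₊ * L) (fun x => t * ψ x) := by
    refine LipschitzWith.of_dist_le_mul fun x y => ?_
    have := hL.dist_le_mul x y
    rw [Real.dist_eq, ← mul_sub, abs_mul, ← Real.dist_eq]
    simp only [NNReal.coe_mul, coe_nnnorm, Real.norm_eq_abs, mul_assoc]
    gcongr
  have ht : tsupport (fun x => φ x + t * ψ x) ⊆ tsupport φ ∪ tsupport ψ := by
    refine closure_minimal ?_ ((isClosed_tsupport _).union (isClosed_tsupport _))
    intro x hx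
    by_contra h
    simp only [mem_union, not_or] at h
    apply hx
    simp [image_eq_zero_of_notMem_tsupport h.1, image_eq_zero_of_notMem_tsupport h.2]
  exact ⟨⟨_, hK.add hL2⟩, (hc.isCompact.union hd.isCompact).of_isClosed_subset
    (isClosed_tsupport _) ht, ht.trans (union_subset hs hr)⟩

lemma int_B_test {Ω : Set (Eu n)} (hΩ : IsOpen Ω) {a : ℝ → ℝ} (ha : C11Loc a) {u : Eu n → ℝ}
    (hu : ContDiffOn ℝ 3 u Ω) {ζ θ : Eu n → ℝ} (hζ : IsTestOn Ω ζ) (hθ : IsTestOn Ω θ) :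
    Integrable (fun x => ⟪Aop a (gradient u x) (gradient θ x), gradient ζ x⟫) := by
  obtain ⟨⟨K, hK⟩, hc, hs⟩ := hζ
  obtain ⟨⟨L, hL⟩, hd, hr⟩ := hθ
  refine int_B hΩ ha hu (grad_meas _) (grad_meas _) hc.isCompact hs
    (fun x _ => grad_norm_le hL x) (fun x _ => grad_norm_le hK x) ?_
  intro x hx; rw [grad_zero_off hx, inner_zero_right]

lemma int_B_v {Ω : Set (Eu n)} (hΩ : IsOpen Ω) {a : ℝ → ℝ} (ha : C11Loc a) {u : Eu n → ℝ}
    (hu : ContDiffOn ℝ 3 u Ω) {ζ : Eu n → ℝ} (hζ : IsTestOn Ω ζ) (e : Eu n) :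
    Integrable (fun x => ⟪Aop a (gradient u x) (gradient (fun y => ⟪gradient u y, e⟫) x),
      gradient ζ x⟫) := by
  obtain ⟨⟨K, hK⟩, hc, hs⟩ := hζ
  obtain ⟨C, hC⟩ := hc.isCompact.exists_bound_of_continuousOn
    ((grad_contDiffOn (k := 1) hΩ (vdir_contDiffOn hΩ hu e)).continuousOn.mono hs)
  refine int_B hΩ ha hu (grad_meas _) (grad_meas _) hc.isCompact hs
    hC (fun x _ => grad_norm_le hK x) ?_
  intro x hx; rw [grad_zero_off hx, inner_zero_right]

lemma dfu_cont {Ω : Set (Eu n)} {f : ℝ → ℝ} (hf : ContDiff ℝ 1 f) {u : Eu n → ℝ}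
    (hu : ContinuousOn u Ω) : ContinuousOn (fun x => deriv f (u x)) Ω :=
  (hf.continuous_deriv (by norm_num)).comp_continuousOn hu

set_option maxHeartbeats 1000000 in
/-- One step of the stability argument. -/
lemma stab_step {Ω Ω₀ : Set (Eu n)} (hΩ : IsOpen Ω) {a f : ℝ → ℝ} (ha : C11Loc a)
    (hapos : ∀ t ≥ (0 : ℝ), 0 < a t) (hlam : ∀ t ≥ (0 : ℝ), 0 < lam1 a t)
    (hf : ContDiff ℝ 1 f) {u : Eu n → ℝ}
    (hu : ContDiffOn ℝ 3 u Ω) (hucl : ContinuousOn u (closure Ω))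
    {Du : Eu n → Eu n} (hDu : ∀ x ∈ Ω, Du x = gradient u x)
    (hDuc : ContinuousOn Du (closure Ω)) (hsol : IsWeakSolution a f Ω u)
    (hstab : IsStable a f Ω u) (ho : IsOpen Ω₀)
    (hsub : Ω₀ ⊆ Ω) (hbd : ∀ p ∈ frontier Ω₀, Du p = 0) (e : Eu n) (he : ‖e‖ = 1)
    {φ : Eu n → ℝ} (hφ : ∃ K, LipschitzWith K φ) (hφc : HasCompactSupport φ)
    (hφ0 : ∀ x, 0 ≤ φ x) {ζ : Eu n → ℝ} (hζ : IsTestOn Ω ζ) :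
    ∃ C, 0 ≤ C ∧ ∀ ε > 0, ∀ t : ℝ,
      0 ≤ ε * C + 2 * (∫ x in Ω₀, ‖gradient u x‖ ^ 2 *
        ⟪Aop a (gradient u x) (gradient φ x), gradient φ x⟫) +
        2 * t * (∫ x in Ω, ((if ε < wf Ω₀ Du e x then φ x *
          ⟪Aop a (gradient u x) (gradient (fun y => ⟪gradient u y, e⟫) x), gradient ζ x⟫ else 0) -
          deriv f (u x) * (max (wf Ω₀ Du e x - ε) 0 * φ x) * ζ x)) +
        t ^ 2 * (∫ x in Ω, (2 * ⟪Aop a (gradient u x) (gradient ζ x), gradient ζ x⟫ -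
          deriv f (u x) * ζ x ^ 2)) := by
  have hwc := wf_continuous hDuc hsub hbd e
  set w := wf Ω₀ Du e with hw
  set v : Eu n → ℝ := fun y => ⟪gradient u y, e⟫ with hv
  set B : Eu n → Eu n → Eu n → ℝ := fun x P Q => ⟪Aop a (gradient u x) P, Q⟫ with hB
  obtain ⟨Kφ, hKφ⟩ := hφ
  have hφcont := hKφ.continuous
  have hcl : closure Ω₀ ⊆ closure Ω := closure_mono hsub
  -- T2
  set T2 : Eu n → ℝ := indicator Ω₀ (fun x => |deriv f (u x)| * w x * φ x ^ 2) with hT2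
  have hΩm := hΩ.measurableSet
  have hΩ₀m := ho.measurableSet
  have hKc : IsCompact (closure Ω₀ ∩ tsupport φ) := hφc.isCompact.inter_left isClosed_closure
  have hT2int : Integrable T2 := by
    rw [hT2, integrable_indicator_iff hΩ₀m]
    have hcon : ContinuousOn (fun x => |deriv f (u x)| * w x * φ x ^ 2) (closure Ω₀) :=
      ((dfu_cont hf (hucl.mono hcl)).abs.mul hwc.continuousOn).mul (hφcont.pow 2).continuousOn
    obtain ⟨C, hC⟩ := hKc.exists_bound_of_continuousOn (hcon.mono inter_subset_left)
    refine integrable_of_bdd ((hcon.mono subset_closure).aestronglyMeasurable hΩ₀m)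
      hφc.isCompact (C := C) ?_ ?_
    · rw [ae_restrict_iff' hΩ₀m]
      exact Eventually.of_forall fun x hx hx2 => hC x ⟨subset_closure hx, hx2⟩
    · intro x hx; rw [image_eq_zero_of_notMem_tsupport hx]; ring
  have hT2nn : ∀ x, 0 ≤ T2 x := fun x => by
    refine indicator_nonneg (fun y _ => ?_) x
    have := wf_nonneg Ω₀ Du e y
    positivity
  -- T3
  set T3 : Eu n → ℝ := indicator Ω₀ (fun x => ‖gradient u x‖ ^ 2 *
        B x (gradient φ x) (gradient φ x)) with hT3
  have hT3int : Integrable T3 := by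
    rw [hT3, integrable_indicator_iff hΩ₀m]
    obtain ⟨L, hL⟩ := AL_bdd ha (hDuc.mono (inter_subset_left.trans hcl)) hKc
    obtain ⟨D, hD⟩ := hKc.exists_bound_of_continuousOn (hDuc.mono (inter_subset_left.trans hcl))
    refine integrable_of_bdd (((grad_meas u).norm.pow_const 2).mul
      (meas_B ha u (grad_meas _) (grad_meas _))).aestronglyMeasurable
      hφc.isCompact (C := D ^ 2 * (L * Kφ * Kφ)) ?_ ?_
    · rw [ae_restrict_iff' hΩ₀m]
      refine Eventually.of_forall fun x hx hx2 => ?_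
      have h1 := hL x ⟨subset_closure hx, hx2⟩
      have h2 := hD x ⟨subset_closure hx, hx2⟩
      rw [hDu x (hsub hx)] at h1 h2
      have h3 := grad_norm_le hKφ x
      have h4 : |B x (gradient φ x) (gradient φ x)| ≤ L * Kφ * Kφ := by
        refine (Aop_abs_le _ _ _ _).trans ?_
        have : 0 ≤ L := (norm_nonneg _).trans h1
        gcongr
      rw [abs_mul, abs_of_nonneg (by positivity : 0 ≤ ‖gradient u x‖ ^ 2)]
      gcongr
    · intro x hx
      rw [hB]
      simp only
      rw [grad_zero_off hx, inner_zero_right, mul_zero]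
  refine ⟨∫ x in Ω, T2 x, integral_nonneg hT2nn, ?_⟩
  intro ε hε t
  set g : Eu n → ℝ := fun x => max (w x - ε) 0 with hg
  obtain ⟨⟨ht1, hts1⟩, hgr1⟩ := trunc_test hΩ hu hDu hDuc ho hsub hbd e hε ⟨Kφ, hKφ⟩ hφc hφ0
  obtain ⟨D, hD⟩ := bdd_of_cs hφcont hφc
  have hφ2 : ∃ M, LipschitzWith M (fun x => φ x * φ x) := lip_mul hKφ hKφ hD hD
  obtain ⟨⟨ht2, hts2⟩, hgr2⟩ := trunc_test hΩ hu hDu hDuc ho hsub hbd e hε hφ2 hφc.mul_right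
    (fun x => mul_nonneg (hφ0 x) (hφ0 x))
  have hΘ := test_add ht1 hζ t
  have hS := hstab _ hΘ
  have hlin := linearized hΩ ha hf hu hsol e ht2
  have hcu := hu.continuousOn
  have hdf := dfu_cont hf hcu
  -- the pieces
  have i1a := (int_B_v hΩ ha hu ht2 e).integrableOn (s := Ω)
  have hvc : ContinuousOn v Ω := (vdir_contDiffOn hΩ hu e).continuousOn
  have i1b := int_c hΩ (hdf.mul hvc) ht2.1.choose_spec.continuous ht2.2.1 ht2.2.2
  have i4a : IntegrableOn (fun x => if ε < w x then φ x * B x (gradient v x) (gradient ζ x) else 0)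
      Ω := by
    have h1 := (int_B_v hΩ ha hu hζ e)
    have h2 : Integrable (fun x => φ x * B x (gradient v x) (gradient ζ x)) :=
      h1.bdd_mul (c := D) hφcont.aestronglyMeasurable (Eventually.of_forall hD)
    have hm : MeasurableSet {x | ε < w x} := (isOpen_lt continuous_const hwc).measurableSet
    have h3 := (h2.indicator hm).integrableOn (s := Ω)
    refine h3.congr (Eventually.of_forall fun x => ?_)
    simp only [indicator, Set.mem_ofPred_eq]
  have i4b : IntegrableOn (fun x => deriv f (u x) * (g x * φ x) * ζ x) Ω :=
    int_c hΩ (hdf.mul ht1.1.choose_spec.continuous.continuousOn) hζ.1.choose_spec.continuous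
      hζ.2.1 hζ.2.2
  have i5a := (int_B_test hΩ ha hu hζ hζ).integrableOn (s := Ω)
  have i5b : IntegrableOn (fun x => deriv f (u x) * ζ x ^ 2) Ω := by
    have := int_c hΩ (hdf.mul hζ.1.choose_spec.continuous.continuousOn)
      hζ.1.choose_spec.continuous hζ.2.1 hζ.2.2
    refine this.congr (Eventually.of_forall fun x => ?_)
    simp only [Pi.mul_apply]; ring
  have i0a := (int_B_test hΩ ha hu hΘ hΘ).integrableOn (s := Ω)
  have i0b : IntegrableOn (fun x => deriv f (u x) * (g x * φ x + t * ζ x) ^ 2) Ω := by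
    have := int_c hΩ (hdf.mul hΘ.1.choose_spec.continuous.continuousOn)
      hΘ.1.choose_spec.continuous hΘ.2.1 hΘ.2.2
    refine this.congr (Eventually.of_forall fun x => ?_)
    simp only [hg, Pi.mul_apply, ← hw]; ring
  set T1 : Eu n → ℝ := fun x => B x (gradient v x) (gradient (fun x => g x * (φ x * φ x)) x) -
    deriv f (u x) * v x * (g x * (φ x * φ x)) with hT1
  set T4 : Eu n → ℝ := fun x => (if ε < w x then φ x * B x (gradient v x) (gradient ζ x) else 0) -
    deriv f (u x) * (g x * φ x) * ζ x with hT4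
  set T5 : Eu n → ℝ := fun x => 2 * B x (gradient ζ x) (gradient ζ x) - deriv f (u x) * ζ x ^ 2
    with hT5
  have i1 : IntegrableOn T1 Ω := i1a.sub i1b
  have i4 : IntegrableOn T4 Ω := i4a.sub i4b
  have i5 : IntegrableOn T5 Ω := (i5a.const_mul 2).sub i5b
  have hT1z : ∫ x in Ω, T1 x = 0 := by
    have h7 := integral_sub i1a i1b
    change ∫ x in Ω, T1 x = _ at h7
    rw [h7, sub_eq_zero]
    exact hlin
  have hT3e : ∫ x in Ω, T3 x = ∫ x in Ω₀, ‖gradient u x‖ ^ 2 *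
        ⟪Aop a (gradient u x) (gradient φ x), gradient φ x⟫ := by
    rw [hT3, setIntegral_indicator hΩ₀m, inter_eq_self_of_subset_right hsub]
  have hpt : ∀ᵐ x ∂(volume.restrict Ω),
      B x (gradient (fun x => g x * φ x + t * ζ x) x) (gradient (fun x => g x * φ x + t * ζ x) x) -
        deriv f (u x) * (g x * φ x + t * ζ x) ^ 2 ≤
      T1 x + ε * T2 x + 2 * T3 x + 2 * t * T4 x + t ^ 2 * T5 x := by
    rw [ae_restrict_iff' hΩm]
    obtain ⟨Kζ, hKζ⟩ := hζ.1
    obtain ⟨K1, hK1⟩ := ht1.1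
    filter_upwards [hKφ.ae_differentiableAt, hKζ.ae_differentiableAt, hK1.ae_differentiableAt]
      with x d1 d2 d3 hxΩ
    have hgrad : gradient (fun x => g x * φ x + t * ζ x) x =
        gradient (fun x => g x * φ x) x + t • gradient ζ x := by
      rw [grad_add d3 (d2.const_mul t), grad_const_mul d2]
    rw [hgrad]
    simp only [hT1]
    have e1 := hgr1 x d1
    have e2 := hgr2 x (d1.mul d1)
    rw [grad_mul d1 d1] at e2
    change gradient (fun x => g x * φ x) x = _ at e1
    change gradient (fun x => g x * (φ x * φ x)) x = _ at e2
    rw [← hw] at e1 e2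
    rw [e1, e2]
    have key : ∀ P Q, B x (P + Q) (P + Q) = B x P P + 2 * B x P Q + B x Q Q := by
      intro P Q
      simp only [hB, Aop_add, inner_add_left, inner_add_right]
      have := Aop_symm (n := n) a (gradient u x) P Q
      linarith
    have ksm : ∀ (r s : ℝ) P Q, B x (r • P) (s • Q) = r * s * B x P Q := by
      intro r s P Q
      simp only [hB, Aop_smul, inner_smul_left, inner_smul_right]
      simp; ring
    have kad : ∀ P Q R, B x P (Q + R) = B x P Q + B x P R := by
      intro P Q R; simp only [hB, inner_add_right]
    have kad2 : ∀ P Q R, B x (P + Q) R = B x P R + B x Q R := by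
      intro P Q R; simp only [hB, Aop_add, inner_add_left]
    have ksl : ∀ (r : ℝ) P Q, B x P (r • Q) = r * B x P Q := by
      intro r P Q
      simp only [hB, inner_smul_right]
    have ksl2 : ∀ (r : ℝ) P Q, B x (r • P) Q = r * B x P Q := by
      intro r P Q
      simp only [hB, Aop_smul, inner_smul_left]; simp
    by_cases h : ε < w x
    · have hpos : 0 < w x := hε.trans h
      obtain ⟨p1, p2, p3⟩ := wf_pos hpos
      have p3' : w x = v x := by rw [hw, p3, hDu x hxΩ]
      have hgx : g x = w x - ε := max_eq_left (by linarith)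
      have hT2x : T2 x = |deriv f (u x)| * w x * φ x ^ 2 := indicator_of_mem p1 _
      have hT3x : T3 x = ‖gradient u x‖ ^ 2 * B x (gradient φ x) (gradient φ x) :=
        indicator_of_mem p1 _
      have hT4x : T4 x = φ x * B x (gradient v x) (gradient ζ x) -
        deriv f (u x) * (g x * φ x) * ζ x := by rw [hT4]; simp only [if_pos h]
      rw [hT2x, hT3x, hT4x, hT5]
      simp only [if_pos h]
      have hBnn : 0 ≤ B x (gradient φ x) (gradient φ x) := Aop_nonneg hapos hlam _ _
      have hvle : w x ≤ ‖gradient u x‖ := by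
        rw [p3']
        have := real_inner_le_norm (gradient u x) e
        rwa [he, mul_one] at this
      have hg2 : (w x - ε) ^ 2 ≤ ‖gradient u x‖ ^ 2 := by
        have : 0 ≤ w x - ε := by linarith
        gcongr
        linarith
      have b1 : (w x - ε) ^ 2 * B x (gradient φ x) (gradient φ x) ≤
        ‖gradient u x‖ ^ 2 * B x (gradient φ x) (gradient φ x) := by gcongr
      have am := Aop_amgm hapos hlam (gradient u x) ((w x - ε) • gradient φ x) (t • gradient ζ x)
      change 2 * B x _ _ ≤ B x _ _ + B x _ _ at am
      rw [ksm, ksm, ksm] at am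
      have b2 : deriv f (u x) * (w x - ε) * φ x ^ 2 ≤ |deriv f (u x)| * w x * φ x ^ 2 := by
        have : deriv f (u x) * (w x - ε) ≤ |deriv f (u x)| * w x := by
          have h0 : 0 ≤ w x - ε := by linarith
          calc _ ≤ |deriv f (u x)| * (w x - ε) := by gcongr; exact le_abs_self _
            _ ≤ _ := by gcongr; linarith
        gcongr
      have b3 := mul_le_mul_of_nonneg_left b2 hε.le
      have hs1 := Aop_symm (n := n) a (gradient u x) (gradient v x) (gradient φ x)
      change B x _ _ = _ at hs1
      rw [hgx]
      simp only [key, kad, kad2, ksl, ksl2]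
      rw [← p3']
      linarith [am, b1, b3]
    · have hgx : g x = 0 := max_eq_right (by linarith)
      have hT4x : T4 x = 0 := by
        rw [hT4]; simp only [if_neg h, hgx]; ring
      rw [hT4x, hT5]
      simp only [if_neg h, hgx]
      have hT3nn : 0 ≤ T3 x := indicator_nonneg
        (fun y _ => mul_nonneg (by positivity) (Aop_nonneg hapos hlam _ _)) x
      have h2 := mul_nonneg hε.le (hT2nn x)
      have hBnn : 0 ≤ B x (gradient ζ x) (gradient ζ x) := Aop_nonneg hapos hlam _ _
      have h6 : B x (gradient v x) 0 = 0 := by simp [hB]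
      rw [zero_add, ksm, h6]
      linarith [mul_nonneg (sq_nonneg t) hBnn]
  have i2 := hT2int.integrableOn (s := Ω)
  have i3 := hT3int.integrableOn (s := Ω)
  have hIntg : ∫ x in Ω, (T1 x + ε * T2 x + 2 * T3 x + 2 * t * T4 x + t ^ 2 * T5 x) =
      0 + ε * (∫ x in Ω, T2 x) + 2 * (∫ x in Ω, T3 x) + 2 * t * (∫ x in Ω, T4 x) +
      t ^ 2 * (∫ x in Ω, T5 x) := by
    rw [integral_add, integral_add, integral_add, integral_add, hT1z]
    · simp only [integral_const_mul]
    · exact i1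
    · exact i2.const_mul ε
    · exact i1.add (i2.const_mul ε)
    · exact i3.const_mul 2
    · exact (i1.add (i2.const_mul ε)).add (i3.const_mul 2)
    · exact i4.const_mul _
    · exact ((i1.add (i2.const_mul ε)).add (i3.const_mul 2)).add (i4.const_mul _)
    · exact i5.const_mul _
  have hmono := integral_mono_ae (i0a.sub i0b)
    ((((i1.add (i2.const_mul ε)).add (i3.const_mul 2)).add (i4.const_mul (2 * t))).add
      (i5.const_mul (t ^ 2))) hpt
  have hsub2 := integral_sub i0a i0b
  have hSS : 0 ≤ ∫ x in Ω, (B x (gradient (fun x => g x * φ x + t * ζ x) x)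
      (gradient (fun x => g x * φ x + t * ζ x) x) -
        deriv f (u x) * (g x * φ x + t * ζ x) ^ 2) := by
    have h7 : _ = _ := hsub2
    refine le_of_le_of_eq ?_ h7.symm
    exact sub_nonneg.2 hS
  have h8 := hSS.trans hmono
  have h9 : 0 ≤ ∫ x in Ω, (T1 x + ε * T2 x + 2 * T3 x + 2 * t * T4 x + t ^ 2 * T5 x) := h8
  rw [hIntg, hT3e, zero_add] at h9
  exact h9

lemma nonneg_of_quad {L C : ℝ} (h : ∀ t > 0, 0 ≤ 2 * t * L + t ^ 2 * C) : 0 ≤ L := by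
  have h1 : Tendsto (fun t : ℝ => 2 * L + t * C) (𝓝[>] 0) (𝓝 (2 * L + 0 * C)) :=
    ((continuous_const.add (continuous_id.mul continuous_const)).tendsto 0).mono_left
      nhdsWithin_le_nhds
  have h2 : 0 ≤ 2 * L + 0 * C := by
    refine ge_of_tendsto h1 ?_
    filter_upwards [self_mem_nhdsWithin] with t ht
    have ht' : 0 < t := ht
    have h3 := h t ht'
    have h4 : 0 ≤ t * (2 * L + t * C) := by nlinarith
    exact nonneg_of_mul_nonneg_right h4 ht'
  linarith

lemma supersol {Ω Ω₀ : Set (Eu n)} (hΩ : IsOpen Ω) {a f : ℝ → ℝ} (ha : C11Loc a)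
    (hapos : ∀ t ≥ (0 : ℝ), 0 < a t) (hlam : ∀ t ≥ (0 : ℝ), 0 < lam1 a t)
    (hf : ContDiff ℝ 1 f) {u : Eu n → ℝ}
    (hu : ContDiffOn ℝ 3 u Ω) (hucl : ContinuousOn u (closure Ω))
    {Du : Eu n → Eu n} (hDu : ∀ x ∈ Ω, Du x = gradient u x)
    (hDuc : ContinuousOn Du (closure Ω)) (hsol : IsWeakSolution a f Ω u)
    (hstab : IsStable a f Ω u) (ho : IsOpen Ω₀)
    (hsub : Ω₀ ⊆ Ω) (hbd : ∀ p ∈ frontier Ω₀, Du p = 0)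
    (hmeg : ModerateEnergyGrowth a u Ω₀) (e : Eu n) (he : ‖e‖ = 1)
    {ζ : Eu n → ℝ} (hζ : IsTestOn Ω ζ) :
    0 ≤ ∫ x in Ω, (if 0 < wf Ω₀ Du e x then
      ⟪Aop a (gradient u x) (gradient (fun y => ⟪gradient u y, e⟫) x), gradient ζ x⟫ -
        deriv f (u x) * wf Ω₀ Du e x * ζ x else 0) := by
  obtain ⟨φ, hφL, hφc, hφ0, hφ1, hφm⟩ := hmeg
  have hwc := wf_continuous hDuc hsub hbd e
  choose C hC0 hC using fun j => stab_step hΩ ha hapos hlam hf hu hucl hDu hDuc hsol hstab ho hsub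
    hbd e he (hφL j) (hφc j) (hφ0 j) hζ
  set w := wf Ω₀ Du e with hw
  set P : Eu n → ℝ := fun x =>
    ⟪Aop a (gradient u x) (gradient (fun y => ⟪gradient u y, e⟫) x), gradient ζ x⟫ with hP
  set ε : ℕ → ℝ := fun j => 1 / ((j + 1) * (C j + 1)) with hε
  have hεpos : ∀ j, 0 < ε j := fun j => by have := hC0 j; positivity
  have hεC : Tendsto (fun j => ε j * C j) atTop (𝓝 0) := by
    refine squeeze_zero (fun j => mul_nonneg (hεpos j).le (hC0 j)) (fun j => ?_)
      tendsto_one_div_add_atTop_nhds_zero_nat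
    have := hC0 j
    rw [hε]; simp only
    rw [div_mul_eq_mul_div, one_mul, div_le_div_iff₀ (by positivity) (by positivity)]
    nlinarith [(Nat.cast_nonneg j : (0:ℝ) ≤ j)]
  have hε0 : Tendsto ε atTop (𝓝 0) := by
    refine squeeze_zero (fun j => (hεpos j).le) (fun j => ?_)
      tendsto_one_div_add_atTop_nhds_zero_nat
    have := hC0 j
    rw [hε]; simp only
    apply one_div_le_one_div_of_le (by positivity)
    nlinarith [(Nat.cast_nonneg j : (0:ℝ) ≤ j)]
  have hPint : IntegrableOn P Ω := (int_B_v hΩ ha hu hζ e).integrableOn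
  obtain ⟨⟨Kζ, hKζ⟩, hζc, hζs⟩ := id hζ
  have hdf := dfu_cont hf hu.continuousOn
  have hQint : IntegrableOn (fun x => deriv f (u x) * w x * ζ x) Ω :=
    int_c hΩ (hdf.mul hwc.continuousOn) hKζ.continuous hζc hζs
  have hJ : Tendsto (fun j => ∫ x in Ω, ((if ε j < w x then φ j x * P x else 0) -
      deriv f (u x) * (max (w x - ε j) 0 * φ j x) * ζ x)) atTop
      (𝓝 (∫ x in Ω, (if 0 < w x then P x - deriv f (u x) * w x * ζ x else 0))) := by
    refine tendsto_integral_filter_of_dominated_convergence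
      (fun x => 2 * |P x| + 2 * |deriv f (u x) * w x * ζ x|) ?_ ?_
      ((hPint.abs.const_mul 2).add (hQint.abs.const_mul 2)) ?_
    · refine Eventually.of_forall fun j => ?_
      obtain ⟨K, hK⟩ := hφL j
      have hm : MeasurableSet {x | ε j < w x} := (isOpen_lt continuous_const hwc).measurableSet
      refine AEStronglyMeasurable.sub ?_ ?_
      · have h1 : Measurable (fun x => φ j x * P x) :=
          hK.continuous.measurable.mul (meas_B ha u (grad_meas _) (grad_meas _))
        exact (Measurable.ite hm h1 measurable_const).aestronglyMeasurable
      · refine ContinuousOn.aestronglyMeasurable ?_ hΩ.measurableSet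
        exact (hdf.mul (((hwc.sub continuous_const).max continuous_const).mul
          hK.continuous).continuousOn).mul hKζ.continuous.continuousOn
    · have hcomp : IsCompact (closure Ω₀ ∩ tsupport ζ) :=
        hζc.isCompact.inter_left isClosed_closure
      have h1 := hφ1 _ hcomp inter_subset_left
      rw [Metric.tendstoUniformlyOn_iff] at h1
      filter_upwards [h1 1 one_pos] with j hj
      refine Eventually.of_forall fun x => ?_
      by_cases hpos : 0 < w x
      swap
      · have hw0 : w x = 0 := le_antisymm (not_lt.1 hpos) (wf_nonneg _ _ _ _)
        have := hεpos j
        rw [if_neg (by linarith), max_eq_right (by linarith)]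
        simp only [zero_mul, mul_zero, sub_zero, norm_zero]
        positivity
      by_cases hx : x ∈ tsupport ζ
      swap
      · have hz : ζ x = 0 := image_eq_zero_of_notMem_tsupport hx
        have hP0 : P x = 0 := by rw [hP]; simp only; rw [grad_zero_off hx, inner_zero_right]
        simp [hz, hP0]
      have hx0 := (wf_pos hpos).1
      have h2 := hj x ⟨subset_closure hx0, hx⟩
      rw [Real.dist_eq, abs_lt] at h2
      have h3 : φ j x ≤ 2 := by linarith
      have h4 := hφ0 j x
      refine (norm_sub_le _ _).trans (add_le_add ?_ ?_)
      · split_ifs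
        · rw [norm_mul, Real.norm_eq_abs, Real.norm_eq_abs, abs_of_nonneg h4]
          gcongr
        · simp
      · have h5 : max (w x - ε j) 0 ≤ w x := max_le (by linarith [hεpos j]) hpos.le
        have h6 : 0 ≤ max (w x - ε j) 0 := le_max_right _ _
        rw [Real.norm_eq_abs, abs_mul, abs_mul, abs_mul, abs_mul, abs_mul, abs_of_nonneg h4,
          abs_of_nonneg h6, abs_of_nonneg hpos.le]
        calc |deriv f (u x)| * (max (w x - ε j) 0 * φ j x) * |ζ x|
            ≤ |deriv f (u x)| * (w x * 2) * |ζ x| := by gcongr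
          _ = _ := by ring
    · refine Eventually.of_forall fun x => ?_
      by_cases hpos : 0 < w x
      · have hx0 := (wf_pos hpos).1
        have h1 : Tendsto (fun j => φ j x) atTop (𝓝 1) :=
          (hφ1 {x} isCompact_singleton (by simpa using subset_closure hx0)).tendsto_at
            (mem_singleton x)
        rw [if_pos hpos]
        have h2 : ∀ᶠ j in atTop, ε j < w x := hε0.eventually (gt_mem_nhds hpos)
        have h3 : Tendsto (fun j => φ j x * P x -
            deriv f (u x) * (max (w x - ε j) 0 * φ j x) * ζ x) atTop
            (𝓝 (1 * P x - deriv f (u x) * (max (w x - 0) 0 * 1) * ζ x)) := by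
          refine (h1.mul_const _).sub ((Tendsto.mul_const _ (Tendsto.const_mul _ ?_)))
          exact ((tendsto_const_nhds.sub hε0).max tendsto_const_nhds).mul h1
        rw [sub_zero, max_eq_left hpos.le, mul_one, one_mul] at h3
        refine h3.congr' ?_
        filter_upwards [h2] with j hj
        rw [if_pos hj]
      · have hw0 : w x = 0 := le_antisymm (not_lt.1 hpos) (wf_nonneg _ _ _ _)
        rw [if_neg hpos]
        refine tendsto_const_nhds.congr fun j => ?_
        have := hεpos j
        rw [if_neg (by linarith), max_eq_right (by linarith)]
        ring
  refine nonneg_of_quad (C := ∫ x in Ω, (2 * ⟪Aop a (gradient u x) (gradient ζ x), gradient ζ x⟫ -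
          deriv f (u x) * ζ x ^ 2)) fun t ht => ?_
  have hlim := ((hεC.add (hφm.const_mul 2)).add (hJ.const_mul (2 * t))).add_const
    (t ^ 2 * ∫ x in Ω, (2 * ⟪Aop a (gradient u x) (gradient ζ x), gradient ζ x⟫ -
          deriv f (u x) * ζ x ^ 2))
  have h0 := ge_of_tendsto' hlim (fun j => hC j (ε j) (hεpos j) t)
  rw [mul_zero, zero_add, zero_add] at h0
  exact h0

/-! ### Part 7: the coefficient field is Lipschitz; integration by parts -/

/-- `N(p) v = ⟨p, v⟩ p / |p|` -/
lemma N_lip (p q v : Eu n) :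
    ‖(‖p‖⁻¹ * ⟪p, v⟫) • p - (‖q‖⁻¹ * ⟪q, v⟫) • q‖ ≤ 3 * ‖p - q‖ * ‖v‖ := by
  have hN : ∀ p : Eu n, ‖(‖p‖⁻¹ * ⟪p, v⟫) • p‖ ≤ ‖p‖ * ‖v‖ := by
    intro p
    by_cases hp : p = 0
    · simp [hp]
    have hp' : 0 < ‖p‖ := norm_pos_iff.2 hp
    rw [norm_smul, norm_mul, norm_inv, norm_norm, Real.norm_eq_abs]
    have := abs_real_inner_le_norm p v
    calc ‖p‖⁻¹ * |⟪p, v⟫| * ‖p‖ = |⟪p, v⟫| := by field_simp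
      _ ≤ _ := this
  by_cases hp : p = 0
  · subst hp
    have := hN q
    simp only [norm_zero, inv_zero, inner_zero_left, mul_zero, smul_zero, zero_sub, norm_neg]
    nlinarith [mul_nonneg (norm_nonneg q) (norm_nonneg v)]
  by_cases hq : q = 0
  · subst hq
    have := hN p
    simp only [norm_zero, inv_zero, inner_zero_left, mul_zero, smul_zero, sub_zero]
    nlinarith [mul_nonneg (norm_nonneg p) (norm_nonneg v)]
  have hp' : 0 < ‖p‖ := norm_pos_iff.2 hp
  have hq' : 0 < ‖q‖ := norm_pos_iff.2 hq
  set P := ‖p‖⁻¹ • p with hP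
  set Q := ‖q‖⁻¹ • q with hQ
  have hPn : ‖P‖ = 1 := by rw [hP, norm_smul, norm_inv, norm_norm]; field_simp
  have e : (‖p‖⁻¹ * ⟪p, v⟫) • p - (‖q‖⁻¹ * ⟪q, v⟫) • q =
      ⟪P, v⟫ • (p - q) + ⟪P - Q, v⟫ • q := by
    rw [inner_sub_left, hP, hQ, real_inner_smul_left, real_inner_smul_left]
    module
  have h1 : ‖⟪P, v⟫ • (p - q)‖ ≤ ‖p - q‖ * ‖v‖ := by
    rw [norm_smul, mul_comm]
    gcongr
    have := abs_real_inner_le_norm P v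
    rwa [hPn, one_mul] at this
  have h3 : ‖q‖ * ‖P - Q‖ ≤ 2 * ‖p - q‖ := by
    have e2 : ‖q‖ * ‖P - Q‖ = ‖‖q‖ • (P - Q)‖ := by rw [norm_smul, norm_norm]
    have e3 : ‖q‖ • (P - Q) = (‖q‖ - ‖p‖) • P + (p - q) := by
      have : q = ‖q‖ • Q := by rw [hQ, smul_smul, mul_inv_cancel₀ hq'.ne', one_smul]
      have h4 : p = ‖p‖ • P := by rw [hP, smul_smul, mul_inv_cancel₀ hp'.ne', one_smul]
      calc ‖q‖ • (P - Q) = (‖q‖ - ‖p‖) • P + (‖p‖ • P - ‖q‖ • Q) := by module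
        _ = _ := by rw [← this, ← h4]
    rw [e2, e3]
    refine (norm_add_le _ _).trans ?_
    rw [norm_smul, hPn, mul_one, Real.norm_eq_abs]
    have := abs_norm_sub_norm_le q p
    rw [norm_sub_rev q p] at this
    linarith
  have h2 : ‖⟪P - Q, v⟫ • q‖ ≤ 2 * ‖p - q‖ * ‖v‖ := by
    rw [norm_smul]
    calc ‖⟪P - Q, v⟫‖ * ‖q‖ ≤ (‖P - Q‖ * ‖v‖) * ‖q‖ := by
          gcongr; exact abs_real_inner_le_norm _ _
      _ = (‖q‖ * ‖P - Q‖) * ‖v‖ := by ring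
      _ ≤ _ := by gcongr
  rw [e]
  refine (norm_add_le _ _).trans ?_
  linarith

lemma AL_lip {a : ℝ → ℝ} (ha : C11Loc a) (T : ℝ) : ∃ L : ℝ, 0 ≤ L ∧ ∀ p q : Eu n,
    ‖p‖ ≤ T → ‖q‖ ≤ T → ‖AL a p - AL a q‖ ≤ L * ‖p - q‖ := by
  have hcI : IsCompact (Icc 0 T) := isCompact_Icc
  have hsub : Icc 0 T ⊆ Ici (0:ℝ) := fun t ht => ht.1
  obtain ⟨B, hB⟩ := hcI.exists_bound_of_continuousOn ((c11_deriv_cont ha).mono hsub)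
  obtain ⟨L1, hL1⟩ := LocallyLipschitzOn.exists_lipschitzOnWith_of_compact hcI
    ((c11_locLip ha).mono hsub)
  have hlipa : ∀ s ∈ Icc 0 T, ∀ t ∈ Icc 0 T, |a s - a t| ≤ |B| * |s - t| := by
    have key : ∀ s ∈ Icc 0 T, ∀ t ∈ Icc 0 T, s < t → |a t - a s| ≤ |B| * |t - s| := by
      intro s hs t ht hst
      obtain ⟨c, hc, hc2⟩ := exists_deriv_eq_slope a hst
        ((c11_cont ha).mono fun z hz => hs.1.trans hz.1)
        (fun z hz => ((c11_hasDerivAt ha (lt_of_le_of_lt hs.1 hz.1)).differentiableAt).differentiableWithinAt)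
      have hts : 0 < t - s := by linarith
      have h1 : a t - a s = deriv a c * (t - s) := by rw [hc2]; field_simp
      rw [h1, abs_mul]
      exact mul_le_mul_of_nonneg_right
        ((hB c ⟨hs.1.trans hc.1.le, hc.2.le.trans ht.2⟩).trans (le_abs_self B)) (abs_nonneg _)
    intro s hs t ht
    rcases lt_trichotomy s t with h | h | h
    · rw [abs_sub_comm, abs_sub_comm s t]; exact key s hs t ht h
    · subst h; simp
    · exact key t ht s hs h
  refine ⟨|B| + L1 * |T| + |B| * 3, by positivity, fun p q hp hq => ?_⟩
  refine ContinuousLinearMap.opNorm_le_bound _ (by positivity) fun v => ?_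
  have e : (AL a p - AL a q) v = (a ‖p‖ - a ‖q‖) • v +
      ((deriv a ‖p‖ - deriv a ‖q‖) • ((‖p‖⁻¹ * ⟪p, v⟫) • p) +
      deriv a ‖q‖ • ((‖p‖⁻¹ * ⟪p, v⟫) • p - (‖q‖⁻¹ * ⟪q, v⟫) • q)) := by
    rw [ContinuousLinearMap.sub_apply, AL_apply, AL_apply, Aop, Aop, div_eq_mul_inv, div_eq_mul_inv]
    module
  have hpI : ‖p‖ ∈ Icc 0 T := ⟨norm_nonneg _, hp⟩
  have hqI : ‖q‖ ∈ Icc 0 T := ⟨norm_nonneg _, hq⟩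
  have hpq := abs_norm_sub_norm_le p q
  have h1 : ‖(a ‖p‖ - a ‖q‖) • v‖ ≤ |B| * ‖p - q‖ * ‖v‖ := by
    rw [norm_smul]
    gcongr
    refine (hlipa _ hpI _ hqI).trans ?_
    gcongr
  have hNp : ‖(‖p‖⁻¹ * ⟪p, v⟫) • p‖ ≤ |T| * ‖v‖ := by
    by_cases hp0 : p = 0
    · simp [hp0]; positivity
    have hp' : 0 < ‖p‖ := norm_pos_iff.2 hp0
    rw [norm_smul, norm_mul, norm_inv, norm_norm, Real.norm_eq_abs]
    calc ‖p‖⁻¹ * |⟪p, v⟫| * ‖p‖ = |⟪p, v⟫| := by field_simp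
      _ ≤ ‖p‖ * ‖v‖ := abs_real_inner_le_norm p v
      _ ≤ _ := by gcongr; exact hp.trans (le_abs_self T)
  have h2 : ‖(deriv a ‖p‖ - deriv a ‖q‖) • ((‖p‖⁻¹ * ⟪p, v⟫) • p)‖ ≤
      L1 * ‖p - q‖ * (|T| * ‖v‖) := by
    rw [norm_smul]
    gcongr
    have := hL1.dist_le_mul _ hpI _ hqI
    rw [Real.dist_eq, Real.dist_eq] at this
    refine this.trans ?_
    gcongr
  have h3 : ‖deriv a ‖q‖ • ((‖p‖⁻¹ * ⟪p, v⟫) • p - (‖q‖⁻¹ * ⟪q, v⟫) • q)‖ ≤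
      |B| * (3 * ‖p - q‖ * ‖v‖) := by
    rw [norm_smul]
    gcongr
    · exact (hB _ hqI).trans (le_abs_self B)
    · exact N_lip p q v
  rw [e]
  refine (norm_add_le _ _).trans ((add_le_add h1 ((norm_add_le _ _).trans (add_le_add h2 h3))).trans ?_)
  apply le_of_eq; ring

/-- integration by parts estimate for Lipschitz vector fields -/
lemma ibp_lip {U : Set (Eu n)} {X : Eu n → Eu n} {L : NNReal} (hX : LipschitzOnWith L X U)
    {η : Eu n → ℝ} (hη : IsTestOn U η) :
    |∫ x, ⟪X x, gradient η x⟫| ≤ (n * L) * ∫ x, |η x| := by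
  obtain ⟨⟨K, hK⟩, hc, hs⟩ := hη
  set b := EuclideanSpace.basisFun (Fin n) ℝ with hb
  have hXi : ∀ i, ∃ F : Eu n → ℝ, LipschitzWith L F ∧ EqOn (fun x => ⟪X x, b i⟫) F U := by
    intro i
    refine LipschitzOnWith.extend_real (LipschitzOnWith.of_dist_le_mul fun x hx y hy => ?_)
    have h1 := hX.dist_le_mul x hx y hy
    refine le_trans ?_ h1
    rw [Real.dist_eq, ← inner_sub_left, dist_eq_norm]
    have := abs_real_inner_le_norm (X x - X y) (b i)
    rwa [b.norm_eq_one i, mul_one] at this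
  choose F hF hFX using hXi
  have hFb : ∀ i, ∃ C, ∀ x ∈ tsupport η, |F i x| ≤ C := fun i =>
    hc.isCompact.exists_bound_of_continuousOn (hF i).continuous.continuousOn
  have hIntg : ∀ i, Integrable (fun x => F i x * ⟪b i, gradient η x⟫) := by
    intro i
    obtain ⟨C, hC⟩ := hFb i
    refine integrable_of_bdd ((hF i).continuous.measurable.mul
      (measurable_const.inner (grad_meas η))).aestronglyMeasurable hc.isCompact (C := C * K) ?_ ?_
    · refine Eventually.of_forall fun x hx => ?_
      have h1 := hC x hx
      have h0 : 0 ≤ C := (abs_nonneg _).trans h1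
      rw [abs_mul]
      gcongr
      refine (abs_real_inner_le_norm _ _).trans ?_
      rw [b.norm_eq_one i, one_mul]
      exact grad_norm_le hK x
    · intro x hx; rw [grad_zero_off hx, inner_zero_right, mul_zero]
  have h1 : ∫ x, ⟪X x, gradient η x⟫ = ∑ i, ∫ x, F i x * ⟪b i, gradient η x⟫ := by
    rw [← integral_finsetSum _ (fun i _ => hIntg i)]
    congr 1; funext x
    by_cases hx : x ∈ tsupport η
    · rw [← b.sum_inner_mul_inner (X x) (gradient η x)]
      refine Finset.sum_congr rfl fun i _ => ?_
      rw [← hFX i (hs hx)]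
    · rw [grad_zero_off hx]; simp
  have hηi : Integrable (fun x => |η x|) := (hK.continuous.integrable_of_hasCompactSupport hc).abs
  have h2 : ∀ i, |∫ x, F i x * ⟪b i, gradient η x⟫| ≤ L * ∫ x, |η x| := by
    intro i
    have e1 : ∫ x, F i x * ⟪b i, gradient η x⟫ = ∫ x, lineDeriv ℝ η x (b i) * F i x := by
      apply integral_congr_ae
      filter_upwards [hK.ae_differentiableAt] with x hx
      rw [hx.lineDeriv_eq_fderiv, real_inner_comm, grad_inner, mul_comm]
    have e2 := LipschitzWith.integral_lineDeriv_mul_eq (μ := (volume : Measure (Eu n)))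
      (hF i) hK hc (-(b i))
    rw [neg_neg] at e2
    rw [e1, ← e2, ← integral_const_mul]
    refine (abs_integral_le_integral_abs).trans ?_
    refine integral_mono_of_nonneg (Eventually.of_forall fun x => abs_nonneg _)
      (hηi.const_mul _) (Eventually.of_forall fun x => ?_)
    simp only [abs_mul]
    gcongr
    have := norm_lineDeriv_le_of_lipschitz ℝ (hF i) (x₀ := x) (v := -(b i))
    rwa [norm_neg, b.norm_eq_one i, mul_one] at this
  rw [h1]
  refine (Finset.abs_sum_le_sum_abs _ _).trans ((Finset.sum_le_sum fun i _ => h2 i).trans ?_)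
  simp; rw [mul_assoc]

/-! ### Part 8: a touching ball -/

lemma touching_ball {S Ω : Set (Eu n)} (hS : IsOpen S) (hne : S.Nonempty) (hSΩ : S ⊆ Ω)
    (hΩ : IsOpen Ω) (hc : IsPreconnected Ω) (hneq : S ≠ Ω) :
    ∃ (y x0 : Eu n) (R : ℝ), 0 < R ∧ x0 ∈ Ω ∧ x0 ∉ S ∧ dist x0 y = R ∧
      ∀ x, dist x y ≤ R → x ≠ x0 → x ∈ S := by
  have hp : ∃ p ∈ Ω, p ∈ closure S ∧ p ∉ S := by
    by_contra hcon
    push Not at hcon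
    have h1 : Ω ⊆ S := by
      refine hc.subset_of_closure_inter_subset hS ?_ ?_
      · obtain ⟨x, hx⟩ := hne
        exact ⟨x, hSΩ hx, hx⟩
      · rintro x ⟨hx1, hx2⟩
        exact hcon x hx2 hx1
    exact hneq (hSΩ.antisymm h1)
  obtain ⟨p, hpΩ, hpc, hpS⟩ := hp
  obtain ⟨ε, hε, hball⟩ := Metric.isOpen_iff.1 hΩ p hpΩ
  obtain ⟨z, hzS, hz⟩ := Metric.mem_closure_iff.1 hpc (ε / 2) (by linarith)
  obtain ⟨x0, hx0, hd⟩ := (hS.isClosed_compl).exists_infDist_eq_dist ⟨p, hpS⟩ z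
  have hx0S : x0 ∉ S := hx0
  have hle : dist z x0 ≤ dist z p := by rw [← hd]; exact infDist_le_dist_of_mem hpS
  have hxz : z ≠ x0 := fun h => hx0S (h ▸ hzS)
  have hpos : 0 < dist z x0 := dist_pos.2 hxz
  have hx0Ω : x0 ∈ Ω := by
    apply hball
    rw [mem_ball]
    have h1 := dist_triangle x0 z p
    rw [dist_comm x0 z] at h1
    rw [dist_comm] at hz
    linarith
  have hin : ∀ x, dist x z < dist z x0 → x ∈ S := by
    intro x hx
    by_contra hxS
    have := infDist_le_dist_of_mem (x := z) (show x ∈ Sᶜ from hxS)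
    rw [hd, dist_comm z x] at this
    linarith
  have hy1 : dist x0 (midpoint ℝ z x0) = dist z x0 / 2 := by
    rw [dist_comm, dist_midpoint_right]; simp; ring
  refine ⟨midpoint ℝ z x0, x0, dist z x0 / 2, by linarith, hx0Ω, hx0S, hy1, fun x hx hne => ?_⟩
  apply hin
  set y := midpoint ℝ z x0 with hy
  have hyz : dist y z = dist z x0 / 2 := by rw [hy, dist_midpoint_left]; simp; ring
  rcases lt_or_eq_of_le (dist_triangle x y z) with h | h
  · linarith
  rcases lt_or_eq_of_le hx with h2 | h2
  · linarith
  exfalso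
  apply hne
  -- equality in the triangle inequality
  have h3 : dist z x = dist z x0 := by rw [dist_comm, h, h2, hyz]; ring
  have hym : y = midpoint ℝ z x := by
    refine eq_midpoint_of_dist_eq_half ?_ ?_
    · rw [dist_comm, hyz, h3]
    · rw [dist_comm, h2, h3]
  have : midpoint ℝ z x = midpoint ℝ z x0 := by rw [← hym]
  rw [← AffineEquiv.pointReflection_midpoint_left (R := ℝ) z x, this,
    AffineEquiv.pointReflection_midpoint_left]

/-! ### Part 9: the barrier argument (strong maximum principle) -/

lemma lip_indicator_ball {x0 : Eu n} {r : ℝ} (hr : 0 < r) {g : Eu n → ℝ} {L : NNReal}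
    (hg : LipschitzOnWith L g (closedBall x0 r)) {C : ℝ} (hC0 : 0 ≤ C)
    (hC : ∀ x ∈ closedBall x0 r, |g x| ≤ C)
    (h0 : ∀ x, r / 2 ≤ dist x x0 → dist x x0 ≤ r → g x = 0) :
    IsTestOn (ball x0 r) (indicator (ball x0 r) g) := by
  have hts : tsupport (indicator (ball x0 r) g) ⊆ closedBall x0 (r / 2) := by
    refine closure_minimal ?_ isClosed_closedBall
    intro x hx
    rw [Function.mem_support] at hx
    by_cases hxb : x ∈ ball x0 r
    · rw [indicator_of_mem hxb] at hx
      by_contra h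
      rw [mem_closedBall, not_le] at h
      exact hx (h0 x h.le (mem_ball.1 hxb).le)
    · exact absurd (indicator_of_notMem hxb g) hx
  refine ⟨⟨L + (C * 2 / r).toNNReal, LipschitzWith.of_dist_le_mul fun x z => ?_⟩,
    (isCompact_closedBall x0 (r / 2)).of_isClosed_subset (isClosed_tsupport _) hts,
    hts.trans (closedBall_subset_ball (by linarith))⟩
  have hnn : 0 ≤ C * 2 / r := by positivity
  rw [NNReal.coe_add, Real.coe_toNNReal _ hnn, add_mul]
  have hLd : 0 ≤ (L : ℝ) * dist x z := by positivity
  have hCd : 0 ≤ C * 2 / r * dist x z := by positivity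
  have key : ∀ x z : Eu n, x ∈ ball x0 r → z ∉ ball x0 r → |g x| ≤ C * 2 / r * dist x z := by
    intro x z hx hz
    by_cases h : r / 2 ≤ dist x x0
    · rw [h0 x h (mem_ball.1 hx).le, abs_zero]; positivity
    · rw [mem_ball, not_lt] at hz
      have h1 := dist_triangle z x x0
      rw [dist_comm z x] at h1
      have h2 : r / 2 ≤ dist x z := by linarith
      refine (hC x (ball_subset_closedBall hx)).trans ?_
      calc C = C * 2 / r * (r / 2) := by field_simp
        _ ≤ _ := by gcongr
  by_cases hx : x ∈ ball x0 r <;> by_cases hz : z ∈ ball x0 r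
  · rw [indicator_of_mem hx, indicator_of_mem hz]
    have := hg.dist_le_mul x (ball_subset_closedBall hx) z (ball_subset_closedBall hz)
    linarith
  · rw [indicator_of_mem hx, indicator_of_notMem hz, Real.dist_eq, sub_zero]
    have := key x z hx hz
    linarith
  · rw [indicator_of_notMem hx, indicator_of_mem hz, Real.dist_eq, zero_sub, abs_neg]
    have := key z x hz hx
    rw [dist_comm z x] at this
    linarith
  · rw [indicator_of_notMem hx, indicator_of_notMem hz, dist_self]; linarith

lemma grad_gauss (K : ℝ) (y x : Eu n) :
    gradient (fun x : Eu n => Real.exp (-K * ‖x - y‖ ^ 2)) x =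
      (-2 * K * Real.exp (-K * ‖x - y‖ ^ 2)) • (x - y) := by
  refine ext_inner_right ℝ fun v => ?_
  rw [grad_inner]
  have h1 : HasFDerivAt (fun x : Eu n => x - y) (ContinuousLinearMap.id ℝ (Eu n)) x :=
    (hasFDerivAt_id x).sub_const y
  have h2 := ((h1.norm_sq).const_mul (-K)).exp
  rw [h2.fderiv, real_inner_smul_left]
  simp
  rw [inner_sub_left]
  ring

lemma gauss_contDiff (K : ℝ) (y : Eu n) :
    ContDiff ℝ 1 (fun x : Eu n => Real.exp (-K * ‖x - y‖ ^ 2)) :=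
  (contDiff_const.mul ((contDiff_id.sub contDiff_const).norm_sq ℝ)).exp

lemma gauss_mul_test {U : Set (Eu n)} (K : ℝ) (y : Eu n) {ζ : Eu n → ℝ} (hζ : IsTestOn U ζ) :
    IsTestOn U (fun x => Real.exp (-K * ‖x - y‖ ^ 2) * ζ x) := by
  obtain ⟨⟨L, hL⟩, hc, hs⟩ := hζ
  obtain ⟨χ, h1, h2, h3, ⟨N, hN, hKN, hN1⟩, h01⟩ := exists_cutoff hc.isCompact isOpen_univ
    (subset_univ _)
  have hE : ContDiff ℝ 1 (fun x => χ x * Real.exp (-K * ‖x - y‖ ^ 2)) :=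
    (h1.of_le (by exact_mod_cast le_top)).mul (gauss_contDiff K y)
  obtain ⟨L2, hL2⟩ := ContDiff.lipschitzWith_of_hasCompactSupport h2.mul_right hE (by norm_num)
  obtain ⟨C, hC⟩ := bdd_of_cs hE.continuous h2.mul_right
  obtain ⟨D, hD⟩ := bdd_of_cs hL.continuous hc
  have heq : (fun x => Real.exp (-K * ‖x - y‖ ^ 2) * ζ x) =
      fun x => (χ x * Real.exp (-K * ‖x - y‖ ^ 2)) * ζ x := by
    funext x
    by_cases hx : x ∈ tsupport ζ
    · rw [hN1 x (hKN hx), one_mul]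
    · rw [image_eq_zero_of_notMem_tsupport hx, mul_zero, mul_zero]
  refine ⟨?_, hc.mul_left, (tsupport_mul_subset_right).trans hs⟩
  rw [heq]
  exact lip_mul hL2 hL hC hD

set_option maxHeartbeats 1000000 in
lemma barrier {Ω : Set (Eu n)} (hΩ : IsOpen Ω) {a : ℝ → ℝ} (ha : C11Loc a)
    (hapos : ∀ t ≥ (0 : ℝ), 0 < a t) (hlam : ∀ t ≥ (0 : ℝ), 0 < lam1 a t) {u : Eu n → ℝ}
    (hu : ContDiffOn ℝ 3 u Ω) {w : Eu n → ℝ} (hwc : Continuous w) (hw0 : ∀ x, 0 ≤ w x)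
    {x0 y : Eu n} {R r M : ℝ} (hR : 0 < R) (hr : 0 < r) (hM : 0 < M) (hrR : r ≤ R / 2)
    (hxy : dist x0 y = R) (hball : closedBall x0 r ⊆ Ω) (hwx0 : w x0 = 0)
    (hpos : ∀ x, dist x y ≤ R → x ≠ x0 → 0 < w x)
    (hwL : ∃ L, LipschitzOnWith L w (closedBall x0 r))
    (hsup : ∀ ζ, IsTestOn (ball x0 r) ζ → (∀ x, 0 ≤ ζ x) →
      0 ≤ ∫ x, (⟪Aop a (gradient u x) (gradient w x), gradient ζ x⟫ + M * w x * ζ x)) : False := by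
  obtain ⟨Lw, hwL⟩ := hwL
  have hcB : IsCompact (closedBall x0 r) := isCompact_closedBall _ _
  have hgc := grad_contDiffOn (k := 2) hΩ hu
  -- bounds on the gradient
  obtain ⟨T, hT⟩ := hcB.exists_bound_of_continuousOn (hgc.continuousOn.mono hball)
  obtain ⟨LG, hLG⟩ := (hgc.mono hball).exists_lipschitzOnWith (by norm_num)
    (convex_closedBall x0 r) hcB
  obtain ⟨LA, hLA0, hLA⟩ := AL_lip (n := n) ha T
  obtain ⟨l, hl, hell⟩ := exists_ellip (n := n) ha hapos hlam T
  obtain ⟨CA, hCA⟩ := AL_bdd ha (hgc.continuousOn.mono hball) hcB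
  have hCA0 : 0 ≤ CA := (norm_nonneg _).trans (hCA x0 (mem_closedBall_self hr.le))
  have hdy : ∀ x ∈ closedBall x0 r, ‖x - y‖ ≤ 2 * R := by
    intro x hx
    rw [← dist_eq_norm]
    have := dist_triangle x x0 y
    rw [mem_closedBall] at hx
    linarith
  have hdy2 : ∀ x ∈ closedBall x0 r, R / 2 ≤ ‖x - y‖ := by
    intro x hx
    rw [← dist_eq_norm]
    have := dist_triangle x0 x y
    rw [mem_closedBall] at hx
    rw [dist_comm x0 x] at this
    linarith
  set LX : ℝ := LA * LG * (2 * R) + CA with hLX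
  have hLX0 : 0 ≤ LX := by positivity
  have hX : LipschitzOnWith LX.toNNReal (fun x => AL a (gradient u x) (x - y))
      (closedBall x0 r) := by
    refine LipschitzOnWith.of_dist_le_mul fun x hx z hz => ?_
    rw [Real.coe_toNNReal _ hLX0, dist_eq_norm, dist_eq_norm]
    have e1 : AL a (gradient u x) (x - y) - AL a (gradient u z) (z - y) =
        (AL a (gradient u x) - AL a (gradient u z)) (x - y) + AL a (gradient u z) (x - z) := by
      rw [ContinuousLinearMap.sub_apply, map_sub, map_sub, map_sub, map_sub]; abel
    have hG := hLG.dist_le_mul x hx z hz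
    rw [dist_eq_norm, dist_eq_norm] at hG
    rw [e1]
    calc _ ≤ ‖AL a (gradient u x) - AL a (gradient u z)‖ * ‖x - y‖ +
          ‖AL a (gradient u z)‖ * ‖x - z‖ :=
        (norm_add_le _ _).trans (add_le_add (ContinuousLinearMap.le_opNorm _ _)
          (ContinuousLinearMap.le_opNorm _ _))
      _ ≤ (LA * (LG * ‖x - z‖)) * (2 * R) + CA * ‖x - z‖ := by
        gcongr
        · exact (hLA _ _ (hT x hx) (hT z hz)).trans (by gcongr)
        · exact hdy x hx
        · exact hCA z hz
      _ = _ := by rw [hLX]; ring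
  -- choice of K
  set CX : ℝ := n * LX with hCX
  have hCX0 : 0 ≤ CX := by positivity
  obtain ⟨K, hK0, hK⟩ : ∃ K : ℝ, 0 < K ∧ 2 * K * CX + M ≤ K ^ 2 * (l * R ^ 2) := by
    refine ⟨(2 * CX + M) / (l * R ^ 2) + 1, by positivity, ?_⟩
    set D := l * R ^ 2 with hD
    have hD0 : 0 < D := by positivity
    set K := (2 * CX + M) / D + 1 with hKd
    have h1 : K * D ≥ 2 * CX + M := by
      rw [hKd, add_mul, div_mul_cancel₀ _ hD0.ne']; linarith
    have hK1 : 1 ≤ K := by rw [hKd]; have : 0 ≤ (2 * CX + M) / D := by positivity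
                           linarith
    nlinarith
  -- the annulus
  have hAnn : IsCompact {x : Eu n | r / 2 ≤ dist x x0 ∧ dist x x0 ≤ r} := by
    refine hcB.of_isClosed_subset ?_ fun x hx => hx.2
    exact (isClosed_le continuous_const (continuous_id.dist continuous_const)).inter
      (isClosed_le (continuous_id.dist continuous_const) continuous_const)
  obtain ⟨m, hm0, hm⟩ := hAnn.exists_forall_le' (a := (0:ℝ))
    (f := fun x => max (w x) (dist x y - R))
    ((hwc.max ((continuous_id.dist continuous_const).sub continuous_const)).continuousOn)
    (by
      intro x hx
      rw [lt_max_iff]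
      by_cases h : dist x y ≤ R
      · left
        refine hpos x h ?_
        rintro rfl
        have := hx.1
        rw [dist_self] at this
        linarith
      · right; linarith)
  set ρ := R + m / 2 with hρ
  set E : Eu n → ℝ := fun x => Real.exp (-K * ‖x - y‖ ^ 2) with hE
  set b : Eu n → ℝ := fun x => E x - Real.exp (-K * ρ ^ 2) with hb
  have hE0 : ∀ x, 0 < E x := fun x => Real.exp_pos _
  have hE1 : ∀ x, E x ≤ 1 := fun x => by
    rw [hE]; simp only; rw [Real.exp_le_one_iff]; nlinarith [sq_nonneg ‖x - y‖]
  have hbE : ∀ x, b x ≤ E x := fun x => by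
    rw [hb]; simp only; linarith [Real.exp_pos (-K * ρ ^ 2)]
  have hbfar : ∀ x, ρ ≤ dist x y → b x ≤ 0 := by
    intro x hx
    rw [dist_eq_norm] at hx
    rw [hb, hE]; simp only
    have : ρ ^ 2 ≤ ‖x - y‖ ^ 2 := by
      have : 0 ≤ ρ := by positivity
      gcongr
    have := Real.exp_le_exp.2 (show -K * ‖x - y‖ ^ 2 ≤ -K * ρ ^ 2 by nlinarith)
    linarith
  have hbx0 : 0 < b x0 := by
    rw [hb, hE]; simp only
    rw [← dist_eq_norm, hxy, sub_pos]
    apply Real.exp_lt_exp.2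
    have : R ^ 2 < ρ ^ 2 := by
      have : R < ρ := by rw [hρ]; linarith
      gcongr
    nlinarith
  have hann : ∀ x, r / 2 ≤ dist x x0 → dist x x0 ≤ r → m * b x ≤ w x := by
    intro x h1 h2
    have h3 := hm x ⟨h1, h2⟩
    rcases le_max_iff.1 h3 with h | h
    · have := (hbE x).trans (hE1 x)
      nlinarith
    · have h4 := hbfar x (by rw [hρ]; linarith)
      have := hw0 x
      nlinarith
  have hEc : ContDiff ℝ 1 E := gauss_contDiff K y
  have hbc : ContDiff ℝ 1 b := hEc.sub contDiff_const
  have hgb : ∀ x, gradient b x = gradient E x := by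
    intro x
    simp only [grad_def, hb, fderiv_sub_const]
  have hgE : ∀ x, gradient E x = (-2 * K * E x) • (x - y) := fun x => grad_gauss K y x
  -- the test function
  set h : Eu n → ℝ := fun x => m * b x - w x with hh
  have hhc : Continuous h := (continuous_const.mul hbc.continuous).sub hwc
  have hgL : ∃ L, LipschitzOnWith L (fun x => max (h x) 0) (closedBall x0 r) := by
    obtain ⟨Lb, hLb⟩ := ((contDiff_const.mul hbc : ContDiff ℝ 1 (fun x => m * b x)).contDiffOn
      (s := closedBall x0 r)).exists_lipschitzOnWith (by norm_num) (convex_closedBall x0 r) hcB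
    refine ⟨Lb + Lw, LipschitzOnWith.of_dist_le_mul fun x hx z hz => ?_⟩
    have h1 := hLb.dist_le_mul x hx z hz
    have h2 := hwL.dist_le_mul x hx z hz
    rw [Real.dist_eq] at h1 h2 ⊢
    rw [NNReal.coe_add, add_mul]
    refine (abs_max_sub_max_le_abs _ _ _).trans ?_
    have e1 : h x - h z = (m * b x - m * b z) - (w x - w z) := by rw [hh]; ring
    rw [e1]
    exact (abs_sub _ _).trans (add_le_add h1 h2)
  obtain ⟨Lg, hgL⟩ := hgL
  obtain ⟨Cg, hCg⟩ := hcB.exists_bound_of_continuousOn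
    (f := fun x => max (h x) 0) ((hhc.max continuous_const).continuousOn)
  have hζt : IsTestOn (ball x0 r) (indicator (ball x0 r) (fun x => max (h x) 0)) := by
    refine lip_indicator_ball hr hgL ((norm_nonneg _).trans (hCg x0 (mem_closedBall_self hr.le)))
      hCg ?_
    intro x h1 h2
    apply max_eq_right
    have := hann x h1 h2
    rw [hh]; linarith
  set ζ : Eu n → ℝ := indicator (ball x0 r) (fun x => max (h x) 0) with hζ
  have hζ0 : ∀ x, 0 ≤ ζ x := fun x => indicator_nonneg (fun x _ => le_max_right _ _) x
  have hη := gauss_mul_test K y hζt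
  have hUΩ : ball x0 r ⊆ Ω := ball_subset_closedBall.trans hball
  -- almost everywhere differentiability of `w` in the ball
  have hwd : ∀ᵐ x, x ∈ ball x0 r → DifferentiableAt ℝ w x := by
    obtain ⟨W, hW, hWw⟩ := hwL.extend_real
    filter_upwards [hW.ae_differentiableAt] with x hx hxb
    refine hx.congr_of_eventuallyEq ?_
    filter_upwards [isOpen_ball.mem_nhds hxb] with z hz
    exact hWw (ball_subset_closedBall hz)
  have hζd : ∀ᵐ x, DifferentiableAt ℝ ζ x := by
    obtain ⟨L, hL⟩ := hζt.1
    exact hL.ae_differentiableAt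
  set X : Eu n → Eu n := fun x => AL a (gradient u x) (x - y) with hXd
  set η : Eu n → ℝ := fun x => E x * ζ x with hηd
  have hae : ∀ᵐ x, ⟪Aop a (gradient u x) (gradient w x), gradient ζ x⟫ + M * w x * ζ x ≤
      m * (-2 * K * ⟪X x, gradient η x⟫ + (M - K ^ 2 * (l * R ^ 2)) * |η x|) - M * ζ x ^ 2 := by
    filter_upwards [hwd, hζd] with x hx hzd
    by_cases hxz : 0 < ζ x
    swap
    · have hz0 : ζ x = 0 := le_antisymm (not_lt.1 hxz) (hζ0 x)
      have g1 : gradient ζ x = 0 := by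
        apply grad_zero_of_min
        filter_upwards with z
        rw [hz0]; exact hζ0 z
      have g2 : gradient η x = 0 := by
        apply grad_zero_of_min
        filter_upwards with z
        rw [hηd]; simp only; rw [hz0, mul_zero]; exact mul_nonneg (hE0 z).le (hζ0 z)
      have g3 : η x = 0 := by rw [hηd]; simp only; rw [hz0, mul_zero]
      rw [g1, g2, g3, hz0]; simp
    have hxb : x ∈ ball x0 r := by
      by_contra hcon
      rw [hζ, indicator_of_notMem hcon] at hxz
      exact lt_irrefl _ hxz
    have hxcb := ball_subset_closedBall hxb
    have hζx : ζ x = max (h x) 0 := by rw [hζ, indicator_of_mem hxb]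
    have hhx : 0 < h x := by
      rw [hζx] at hxz
      rcases lt_max_iff.1 hxz with h1 | h1
      · exact h1
      · exact absurd h1 (lt_irrefl _)
    rw [max_eq_left hhx.le] at hζx
    have hev : ζ =ᶠ[𝓝 x] fun z => m * b z + (-1) * w z := by
      filter_upwards [isOpen_ball.mem_nhds hxb, hhc.continuousAt.eventually (lt_mem_nhds hhx)]
        with z hz1 hz2
      rw [hζ, indicator_of_mem hz1, max_eq_left hz2.le, hh]; ring
    have hbd : DifferentiableAt ℝ b x := hbc.differentiable (by norm_num) x
    have hEd : DifferentiableAt ℝ E x := hEc.differentiable (by norm_num) x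
    have hwdx := hx hxb
    have gζ : gradient ζ x = m • gradient b x + (-1 : ℝ) • gradient w x := by
      rw [grad_congr hev, grad_add (hbd.const_mul m) (hwdx.const_mul (-1)),
        grad_const_mul hbd, grad_const_mul hwdx]
    have gη : gradient η x = E x • gradient ζ x + ζ x • gradient E x := grad_mul hEd hzd
    have gw : gradient w x = m • gradient b x + (-1 : ℝ) • gradient ζ x := by
      rw [gζ]; module
    have hA0 := Aop_nonneg hapos hlam (gradient u x) (gradient ζ x)
    have hAell := hell (gradient u x) (x - y) (hT x hxcb)
    have e1 : ⟪Aop a (gradient u x) (gradient w x), gradient ζ x⟫ =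
        m * (-2 * K * E x) * ⟪Aop a (gradient u x) (x - y), gradient ζ x⟫ -
          ⟪Aop a (gradient u x) (gradient ζ x), gradient ζ x⟫ := by
      rw [gw, hgb, hgE, Aop_add, Aop_smul, Aop_smul, Aop_smul, inner_add_left,
        real_inner_smul_left, real_inner_smul_left, real_inner_smul_left]
      ring
    have e2 : ⟪X x, gradient η x⟫ = E x * ⟪Aop a (gradient u x) (x - y), gradient ζ x⟫ +
        ζ x * (-2 * K * E x) * ⟪Aop a (gradient u x) (x - y), x - y⟫ := by
      rw [gη, hgE, hXd]; simp only
      rw [AL_apply, inner_add_right, real_inner_smul_right, real_inner_smul_right,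
        real_inner_smul_right]
      ring
    have e3 : |η x| = E x * ζ x := abs_of_nonneg (mul_nonneg (hE0 x).le (hζ0 x))
    have e4 : w x = m * b x - ζ x := by rw [hζx, hh]; ring
    rw [e1, e2, e3, e4]
    set P := ⟪Aop a (gradient u x) (x - y), gradient ζ x⟫
    set Q := ⟪Aop a (gradient u x) (x - y), x - y⟫
    set Z := ⟪Aop a (gradient u x) (gradient ζ x), gradient ζ x⟫
    have hQ : l * R ^ 2 / 4 ≤ Q := by
      refine le_trans ?_ hAell
      have := hdy2 x hxcb
      have h5 : (R / 2) ^ 2 ≤ ‖x - y‖ ^ 2 := by gcongr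
      nlinarith
    have hEζ : 0 < E x * ζ x := mul_pos (hE0 x) hxz
    have h6 : M * b x * ζ x ≤ M * (E x * ζ x) := by
      have := mul_le_mul_of_nonneg_right (mul_le_mul_of_nonneg_left (hbE x) hM.le) hxz.le
      linarith
    have h7 : K ^ 2 * (l * R ^ 2) * (E x * ζ x) ≤ 4 * K ^ 2 * Q * (E x * ζ x) := by
      apply mul_le_mul_of_nonneg_right _ hEζ.le
      nlinarith [sq_nonneg K]
    have h8 : m * (M * b x * ζ x + K ^ 2 * (l * R ^ 2) * (E x * ζ x)) ≤
        m * (M * (E x * ζ x) + 4 * K ^ 2 * Q * (E x * ζ x)) :=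
      mul_le_mul_of_nonneg_left (add_le_add h6 h7) hm0.le
    linarith
  -- integrability
  have hζc : Continuous ζ := by obtain ⟨L, hL⟩ := hζt.1; exact hL.continuous
  have hηc : Continuous η := hEc.continuous.mul hζc
  obtain ⟨⟨Lζ, hLζ⟩, hζcs, hζs⟩ := id hζt
  obtain ⟨⟨Lη, hLη⟩, hηcs, hηs⟩ := id hη
  have i1 : Integrable (fun x => ⟪Aop a (gradient u x) (gradient w x), gradient ζ x⟫) := by
    refine int_B hΩ ha hu (grad_meas _) (grad_meas _) hζcs.isCompact (hζs.trans hUΩ)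
      (C := Lw) (D := Lζ) ?_ (fun x _ => grad_norm_le hLζ x) ?_
    · intro x hx
      rw [grad_norm]
      exact norm_fderiv_le_of_lipschitzOn ℝ (isOpen_ball.mem_nhds (hζs hx))
        (hwL.mono ball_subset_closedBall)
    · intro x hx; rw [grad_zero_off hx, inner_zero_right]
  have i2 : Integrable (fun x => M * w x * ζ x) :=
    ((continuous_const.mul hwc).mul hζc).integrable_of_hasCompactSupport hζcs.mul_left
  have i3 : Integrable (fun x => ⟪X x, gradient η x⟫) := by
    have : (fun x => ⟪X x, gradient η x⟫) =
        fun x => ⟪Aop a (gradient u x) (x - y), gradient η x⟫ := by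
      funext x; rw [hXd]; simp only; rw [AL_apply]
    rw [this]
    refine int_B hΩ ha hu (measurable_id.sub_const y) (grad_meas _) hηcs.isCompact
      (hηs.trans hUΩ) (C := 2 * R) (D := Lη) ?_ (fun x _ => grad_norm_le hLη x) ?_
    · intro x hx
      exact hdy x (ball_subset_closedBall (hηs hx))
    · intro x hx; rw [grad_zero_off hx, inner_zero_right]
  have i4 : Integrable (fun x => |η x|) := (hηc.integrable_of_hasCompactSupport hηcs).abs
  have i5 : Integrable (fun x => ζ x ^ 2) := by
    have : (fun x => ζ x ^ 2) = fun x => ζ x * ζ x := by funext x; ring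
    rw [this]
    exact (hζc.mul hζc).integrable_of_hasCompactSupport hζcs.mul_left
  have hfin := integral_mono_ae (i1.add i2)
    ((((i3.const_mul (-2 * K)).add (i4.const_mul (M - K ^ 2 * (l * R ^ 2)))).const_mul m).sub
      (i5.const_mul M)) hae
  have h0 := (hsup ζ hζt hζ0).trans hfin
  have hIntg : ∫ x, (m * (-2 * K * ⟪X x, gradient η x⟫ + (M - K ^ 2 * (l * R ^ 2)) * |η x|) -
      M * ζ x ^ 2) = m * (-2 * K * (∫ x, ⟪X x, gradient η x⟫) +
        (M - K ^ 2 * (l * R ^ 2)) * ∫ x, |η x|) - M * ∫ x, ζ x ^ 2 := by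
    have i6 : Integrable (fun x => m * (-2 * K * ⟪X x, gradient η x⟫ +
        (M - K ^ 2 * (l * R ^ 2)) * |η x|)) := ((i3.const_mul (-2 * K)).add
      (i4.const_mul (M - K ^ 2 * (l * R ^ 2)))).const_mul m
    rw [integral_sub i6 (i5.const_mul M),
      integral_const_mul, integral_const_mul,
      integral_add (i3.const_mul (-2 * K)) (i4.const_mul (M - K ^ 2 * (l * R ^ 2))),
      integral_const_mul, integral_const_mul]
  have h1 : 0 ≤ m * (-2 * K * (∫ x, ⟪X x, gradient η x⟫) +
        (M - K ^ 2 * (l * R ^ 2)) * ∫ x, |η x|) - M * ∫ x, ζ x ^ 2 := by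
    rw [← hIntg]; exact h0
  have h2 := ibp_lip (hX.mono ball_subset_closedBall) hη
  rw [Real.coe_toNNReal _ hLX0, abs_le] at h2
  have h3 : 0 ≤ ∫ x, |η x| := integral_nonneg fun x => abs_nonneg _
  have h4 : 0 < ∫ x, ζ x ^ 2 := by
    have hc2 : Continuous (fun x => ζ x ^ 2) := hζc.pow 2
    refine hc2.integral_pos_of_hasCompactSupport_nonneg_nonzero ?_ (fun x => sq_nonneg _)
      (x := x0) ?_
    · have : (fun x => ζ x ^ 2) = fun x => ζ x * ζ x := by funext x; ring
      rw [this]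
      exact hζcs.mul_left
    · have : ζ x0 = m * b x0 := by
        rw [hζ, indicator_of_mem (mem_ball_self hr), hh]
        simp only
        rw [hwx0, sub_zero, max_eq_left (by positivity)]
      rw [this]; positivity
  have h5 : -2 * K * (∫ x, ⟪X x, gradient η x⟫) +
        (M - K ^ 2 * (l * R ^ 2)) * ∫ x, |η x| ≤ 0 := by
    have h6 : -2 * K * (∫ x, ⟪X x, gradient η x⟫) ≤ 2 * K * (CX * ∫ x, |η x|) := by
      have := mul_le_mul_of_nonneg_left h2.1 (show (0:ℝ) ≤ 2 * K by positivity)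
      linarith
    have h7 := mul_le_mul_of_nonneg_right hK h3
    linarith
  have h6 := mul_nonneg hm0.le (neg_nonneg.2 h5)
  linarith [mul_pos hM h4]

/-! ### Part 10: strict positivity of `⟨∇u, e⟩` -/

lemma wf_lip {Ω Ω₀ : Set (Eu n)} (hΩ : IsOpen Ω) {u : Eu n → ℝ}
    (hu : ContDiffOn ℝ 3 u Ω) {Du : Eu n → Eu n} (hDu : ∀ x ∈ Ω, Du x = gradient u x)
    (ho : IsOpen Ω₀)
    (hsub : Ω₀ ⊆ Ω) (hbd : ∀ p ∈ frontier Ω₀, Du p = 0) (e : Eu n) {x0 : Eu n} {r : ℝ}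
    (hball : closedBall x0 r ⊆ Ω) : ∃ L, LipschitzOnWith L (wf Ω₀ Du e) (closedBall x0 r) := by
  obtain ⟨L, hL⟩ := ((vdir_contDiffOn hΩ hu e).mono hball).exists_lipschitzOnWith (by norm_num)
    (convex_closedBall x0 r) (isCompact_closedBall x0 r)
  refine ⟨L, LipschitzOnWith.of_dist_le_mul fun x hx z hz => ?_⟩
  have hin : ∀ x ∈ Ω₀, wf Ω₀ Du e x = max ⟪gradient u x, e⟫ 0 := by
    intro x hx
    rw [wf, indicator_of_mem hx, hDu x (hsub hx)]
  have hout : ∀ x ∉ Ω₀, wf Ω₀ Du e x = 0 := fun x hx => by rw [wf, indicator_of_notMem hx]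
  have key : ∀ x ∈ closedBall x0 r, ∀ z ∈ closedBall x0 r, x ∈ Ω₀ → z ∉ Ω₀ →
      |wf Ω₀ Du e x| ≤ L * dist x z := by
    intro x hx z hz h1 h2
    obtain ⟨q, hq1, hq2⟩ : ∃ q ∈ segment ℝ x z, q ∈ frontier Ω₀ := by
      by_contra hno
      push Not at hno
      have h3 : segment ℝ x z ⊆ Ω₀ := by
        refine (convex_segment x z).isPreconnected.subset_of_closure_inter_subset ho
          ⟨x, left_mem_segment ℝ x z, h1⟩ ?_
        rintro q ⟨hq1, hq2⟩
        by_contra hq3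
        exact hno q hq2 ⟨hq1, by rwa [ho.interior_eq]⟩
      exact h2 (h3 (right_mem_segment ℝ x z))
    have hqb := (convex_closedBall x0 r).segment_subset hx hz hq1
    have hd : dist q x ≤ dist z x := by
      have := (convex_closedBall x (dist z x)).segment_subset
        (mem_closedBall_self dist_nonneg) (show z ∈ closedBall x (dist z x) from mem_closedBall.2 le_rfl) hq1
      exact this
    have hq0 : gradient u q = 0 := by rw [← hDu q (hball hqb)]; exact hbd q hq2
    have h3 := hL.dist_le_mul x hx q hqb
    rw [Real.dist_eq] at h3
    simp only [hq0, inner_zero_left, sub_zero] at h3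
    rw [hin x h1]
    have h4 : |max ⟪gradient u x, e⟫ 0| ≤ |⟪gradient u x, e⟫| := by
      rw [abs_of_nonneg (le_max_right _ _)]
      exact max_le (le_abs_self _) (abs_nonneg _)
    refine h4.trans (h3.trans ?_)
    rw [dist_comm x q, dist_comm x z]
    gcongr
  by_cases h1 : x ∈ Ω₀ <;> by_cases h2 : z ∈ Ω₀
  · rw [hin x h1, hin z h2]
    have h3 := hL.dist_le_mul x hx z hz
    rw [Real.dist_eq] at h3 ⊢
    exact (abs_max_sub_max_le_abs _ _ _).trans h3
  · rw [hout z h2, Real.dist_eq, sub_zero]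
    exact key x hx z hz h1 h2
  · rw [hout x h1, Real.dist_eq, zero_sub, abs_neg, dist_comm x z]
    exact key z hz x hx h2 h1
  · rw [hout x h1, hout z h2, dist_self]; positivity

lemma wf_pos_all {Ω Ω₀ : Set (Eu n)} (hΩ : IsOpen Ω) (hΩc : IsPreconnected Ω)
    {a f : ℝ → ℝ} (ha : C11Loc a)
    (hapos : ∀ t ≥ (0 : ℝ), 0 < a t) (hlam : ∀ t ≥ (0 : ℝ), 0 < lam1 a t)
    (hf : ContDiff ℝ 1 f) {u : Eu n → ℝ}
    (hu : ContDiffOn ℝ 3 u Ω) (hucl : ContinuousOn u (closure Ω))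
    {Du : Eu n → Eu n} (hDu : ∀ x ∈ Ω, Du x = gradient u x)
    (hDuc : ContinuousOn Du (closure Ω)) (hsol : IsWeakSolution a f Ω u)
    (hstab : IsStable a f Ω u) (ho : IsOpen Ω₀)
    (hsub : Ω₀ ⊆ Ω) (hbd : ∀ p ∈ frontier Ω₀, Du p = 0)
    (hmeg : ModerateEnergyGrowth a u Ω₀) (e : Eu n) (he : ‖e‖ = 1)
    (hne : ∃ x, 0 < wf Ω₀ Du e x) : ∀ x ∈ Ω, 0 < wf Ω₀ Du e x := by
  have hwc := wf_continuous hDuc hsub hbd e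
  set w := wf Ω₀ Du e with hw
  have hWo : IsOpen {x | 0 < w x} := isOpen_lt continuous_const hwc
  have hWΩ : {x | 0 < w x} ⊆ Ω := fun x hx => hsub (wf_pos hx).1
  by_contra hcon
  have hneq : {x | 0 < w x} ≠ Ω := by
    intro h
    apply hcon
    intro x hx
    rw [← h] at hx
    exact hx
  obtain ⟨y, x0, R, hR, hx0, hx0W, hd, hin⟩ := touching_ball hWo hne hWΩ hΩ hΩc hneq
  obtain ⟨ε, hε, hεb⟩ := Metric.isOpen_iff.1 hΩ x0 hx0
  set r := min (ε / 2) (R / 2) with hr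
  have hr0 : 0 < r := by rw [hr]; positivity
  have hball : closedBall x0 r ⊆ Ω :=
    (closedBall_subset_ball (by rw [hr]; exact lt_of_le_of_lt (min_le_left _ _) (by linarith))).trans
      hεb
  have hcB : IsCompact (closedBall x0 r) := isCompact_closedBall _ _
  have hdf := dfu_cont hf hu.continuousOn
  obtain ⟨C, hC⟩ := hcB.exists_bound_of_continuousOn (hdf.mono hball)
  have hC0 : 0 ≤ C := (norm_nonneg _).trans (hC x0 (mem_closedBall_self hr0.le))
  obtain ⟨Lw, hLw⟩ := wf_lip hΩ hu hDu ho hsub hbd e hball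
  have hUΩ : ball x0 r ⊆ Ω := ball_subset_closedBall.trans hball
  have hw0 : ∀ x, 0 ≤ w x := fun x => wf_nonneg _ _ _ x
  refine barrier hΩ ha hapos hlam hu hwc hw0 (M := C + 1) hR hr0 (by linarith)
    (min_le_right _ _) hd hball ?_ (fun x h1 h2 => hin x h1 h2) ⟨Lw, hLw⟩ ?_
  · exact le_antisymm (not_lt.1 hx0W) (hw0 x0)
  intro ζ hζ hζ0
  obtain ⟨⟨Lζ, hLζ⟩, hζcs, hζs⟩ := id hζ
  have h1 := supersol hΩ ha hapos hlam hf hu hucl hDu hDuc hsol hstab ho hsub hbd hmeg e he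
    (ζ := ζ) ⟨⟨Lζ, hLζ⟩, hζcs, hζs.trans hUΩ⟩
  have i1 : Integrable (fun x => ⟪Aop a (gradient u x) (gradient w x), gradient ζ x⟫) := by
    refine int_B hΩ ha hu (grad_meas _) (grad_meas _) hζcs.isCompact (hζs.trans hUΩ)
      (C := Lw) (D := Lζ) ?_ (fun x _ => grad_norm_le hLζ x) ?_
    · intro x hx
      rw [grad_norm]
      exact norm_fderiv_le_of_lipschitzOn ℝ (isOpen_ball.mem_nhds (hζs hx))
        (hLw.mono ball_subset_closedBall)
    · intro x hx; rw [grad_zero_off hx, inner_zero_right]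
  have i2 : Integrable (fun x => (C + 1) * w x * ζ x) :=
    ((continuous_const.mul hwc).mul hLζ.continuous).integrable_of_hasCompactSupport hζcs.mul_left
  have i3 : IntegrableOn (fun x => deriv f (u x) * w x * ζ x) Ω :=
    int_c hΩ (hdf.mul hwc.continuousOn) hLζ.continuous hζcs (hζs.trans hUΩ)
  have heq : ∀ x, (if 0 < w x then
      ⟪Aop a (gradient u x) (gradient (fun y => ⟪gradient u y, e⟫) x), gradient ζ x⟫ -
        deriv f (u x) * w x * ζ x else 0) =
      ⟪Aop a (gradient u x) (gradient w x), gradient ζ x⟫ - deriv f (u x) * w x * ζ x := by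
    intro x
    by_cases hx : 0 < w x
    · rw [if_pos hx, grad_congr (wf_eventually hDu hDuc hsub hbd e hx)]
    · have hx0 : w x = 0 := le_antisymm (not_lt.1 hx) (hw0 x)
      have : gradient w x = 0 := by
        apply grad_zero_of_min
        filter_upwards with z
        rw [hx0]; exact hw0 z
      rw [if_neg hx, this, hx0, Aop_zero, inner_zero_left]; ring
  have hle : ∫ x in Ω, (⟪Aop a (gradient u x) (gradient w x), gradient ζ x⟫ -
      deriv f (u x) * w x * ζ x) ≤
      ∫ x in Ω, (⟪Aop a (gradient u x) (gradient w x), gradient ζ x⟫ + (C + 1) * w x * ζ x) := by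
    refine integral_mono (i1.integrableOn.sub i3) (i1.add i2).integrableOn fun x => ?_
    simp only
    by_cases hx : x ∈ tsupport ζ
    · have h2 := hC x (ball_subset_closedBall (hζs hx))
      rw [Real.norm_eq_abs, abs_le] at h2
      have h3 : 0 ≤ w x * ζ x := mul_nonneg (hw0 x) (hζ0 x)
      nlinarith
    · rw [image_eq_zero_of_notMem_tsupport hx]; simp
  have hwhole : ∫ x in Ω, (⟪Aop a (gradient u x) (gradient w x), gradient ζ x⟫ +
      (C + 1) * w x * ζ x) =
      ∫ x, (⟪Aop a (gradient u x) (gradient w x), gradient ζ x⟫ + (C + 1) * w x * ζ x) := by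
    apply setIntegral_eq_integral_of_forall_compl_eq_zero
    intro x hx
    have hx2 : x ∉ tsupport ζ := fun h => hx (hUΩ (hζs h))
    rw [image_eq_zero_of_notMem_tsupport hx2, grad_zero_off hx2, inner_zero_right]; ring
  rw [← hwhole]
  refine le_trans ?_ hle
  refine h1.trans (le_of_eq ?_)
  congr 1
  funext x
  exact heq x

/-! ### Part 11: divergence calculus and the strong form of the equation -/

/-- divergence of a vector field -/
def dv (X : Eu n → Eu n) (x : Eu n) : ℝ :=
  ∑ i, ⟪fderiv ℝ X x (EuclideanSpace.basisFun (Fin n) ℝ i), EuclideanSpace.basisFun (Fin n) ℝ i⟫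

lemma dv_congr {X Y : Eu n → Eu n} {x : Eu n} (h : X =ᶠ[𝓝 x] Y) : dv X x = dv Y x := by
  rw [dv, dv, h.fderiv_eq]

lemma dv_add {X Y : Eu n → Eu n} {x : Eu n} (hX : DifferentiableAt ℝ X x)
    (hY : DifferentiableAt ℝ Y x) : dv (fun y => X y + Y y) x = dv X x + dv Y x := by
  rw [dv, dv, dv, fderiv_fun_add hX hY, ← Finset.sum_add_distrib]
  refine Finset.sum_congr rfl fun i _ => ?_
  rw [ContinuousLinearMap.add_apply, inner_add_left]

lemma dv_smul {g : Eu n → ℝ} {Y : Eu n → Eu n} {x : Eu n} (hg : DifferentiableAt ℝ g x)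
    (hY : DifferentiableAt ℝ Y x) :
    dv (fun y => g y • Y y) x = ⟪gradient g x, Y x⟫ + g x * dv Y x := by
  rw [dv, dv, fderiv_fun_smul hg hY, Finset.mul_sum,
    ← (EuclideanSpace.basisFun (Fin n) ℝ).sum_inner_mul_inner (gradient g x) (Y x),
    ← Finset.sum_add_distrib]
  refine Finset.sum_congr rfl fun i _ => ?_
  rw [ContinuousLinearMap.add_apply, inner_add_left, ContinuousLinearMap.smul_apply,
    real_inner_smul_left, ContinuousLinearMap.smulRight_apply, real_inner_smul_left, grad_inner,
    real_inner_comm (Y x)]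
  ring

lemma dv_contOn {X : Eu n → Eu n} {U : Set (Eu n)} (hU : IsOpen U) (hX : ContDiffOn ℝ 1 X U) :
    ContinuousOn (dv X) U := by
  unfold dv
  refine continuousOn_finsetSum _ fun i _ => ?_
  have h := (hX.continuousOn_fderiv_of_isOpen hU le_rfl)
  exact (h.clm_apply continuousOn_const).inner continuousOn_const

lemma dv_cont {X : Eu n → Eu n} (hX : ContDiff ℝ 1 X) : Continuous (dv X) := by
  rw [← continuousOn_univ]
  exact dv_contOn isOpen_univ (contDiffOn_univ.2 hX)

lemma dv_zero_off {X : Eu n → Eu n} {x : Eu n} (hx : x ∉ tsupport X) : dv X x = 0 := by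
  have : X =ᶠ[𝓝 x] fun _ => 0 := notMem_tsupport_iff_eventuallyEq.1 hx
  rw [dv_congr this]
  simp [dv]

lemma dv_integrable {X : Eu n → Eu n} (hX : ContDiff ℝ 1 X) (hc : HasCompactSupport X) :
    Integrable (dv X) := by
  refine (dv_cont hX).integrable_of_hasCompactSupport ?_
  refine HasCompactSupport.intro hc.isCompact fun x hx => dv_zero_off hx

lemma int_dv {X : Eu n → Eu n} (hX : ContDiff ℝ 1 X) (hc : HasCompactSupport X) :
    ∫ x, dv X x = 0 := by
  set b := EuclideanSpace.basisFun (Fin n) ℝ with hb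
  have hXi : ∀ i, ContDiff ℝ 1 (fun x => ⟪X x, b i⟫) := fun i => hX.inner ℝ contDiff_const
  have hci : ∀ i, HasCompactSupport (fun x => ⟪X x, b i⟫) := fun i =>
    HasCompactSupport.intro hc.isCompact fun x hx => by
      rw [image_eq_zero_of_notMem_tsupport hx, inner_zero_left]
  have hfd : ∀ i x v, ⟪fderiv ℝ X x v, b i⟫ = fderiv ℝ (fun x => ⟪X x, b i⟫) x v := by
    intro i x v
    rw [fderiv_inner_apply ℝ (hX.differentiable (by norm_num) x) (differentiableAt_const _)]
    simp
  have hfc : ∀ i, Continuous (fun x => fderiv ℝ (fun x => ⟪X x, b i⟫) x (b i)) := fun i =>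
    ((hXi i).continuous_fderiv (by norm_num)).clm_apply continuous_const
  have hfs : ∀ i, HasCompactSupport (fun x => fderiv ℝ (fun x => ⟪X x, b i⟫) x (b i)) := fun i =>
    (hci i).fderiv_apply ℝ (b i)
  have hii : ∀ i, Integrable (fun x => fderiv ℝ (fun x => ⟪X x, b i⟫) x (b i)) := fun i =>
    (hfc i).integrable_of_hasCompactSupport (hfs i)
  have h1 : ∫ x, dv X x = ∑ i, ∫ x, fderiv ℝ (fun x => ⟪X x, b i⟫) x (b i) := by
    rw [← integral_finsetSum _ (fun i _ => hii i)]
    congr 1; funext x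
    rw [dv]
    exact Finset.sum_congr rfl fun i _ => hfd i x _
  rw [h1]
  refine Finset.sum_eq_zero fun i _ => ?_
  have h2 := integral_mul_fderiv_eq_neg_fderiv_mul_of_integrable (μ := (volume : Measure (Eu n)))
    (f := fun _ => (1:ℝ)) (g := fun x => ⟪X x, b i⟫) (v := b i)
    (by simp) (by simpa using hii i)
    (by simpa using ((hXi i).continuous.integrable_of_hasCompactSupport (hci i)))
    (fun x _ => differentiableAt_const _)
    (fun x _ => (hXi i).differentiable (by norm_num) x)
  simpa using h2

lemma contDiff_cutoff_smul {χ : Eu n → ℝ} {Y : Eu n → Eu n} {U : Set (Eu n)} (hU : IsOpen U)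
    (hχ : ContDiff ℝ (⊤ : ℕ∞) χ) (hs : tsupport χ ⊆ U) (hY : ContDiffOn ℝ 1 Y U) :
    ContDiff ℝ 1 (fun x => χ x • Y x) := by
  rw [contDiff_iff_contDiffAt]
  intro x
  by_cases hx : x ∈ tsupport χ
  · exact (hχ.contDiffAt.of_le (by exact_mod_cast le_top)).smul
      (hY.contDiffAt (hU.mem_nhds (hs hx)))
  · have : (fun x => χ x • Y x) =ᶠ[𝓝 x] fun _ => 0 := by
      filter_upwards [notMem_tsupport_iff_eventuallyEq.1 hx] with z hz
      rw [hz]; simp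
    exact contDiffAt_const.congr_of_eventuallyEq this

lemma strong_form {Ω : Set (Eu n)} (hΩ : IsOpen Ω) {a f : ℝ → ℝ} (ha : C11Loc a)
    (hf : ContDiff ℝ 1 f) {u : Eu n → ℝ} (hu : ContDiffOn ℝ 3 u Ω)
    (hsol : IsWeakSolution a f Ω u) : ∀ x ∈ Ω,
    a ‖gradient u x‖ * dv (gradient u) x + (deriv a ‖gradient u x‖ / ‖gradient u x‖) *
      ⟪gradient u x, fderiv ℝ (gradient u) x (gradient u x)⟫ + f (u x) = 0 := by
  have hg := grad_contDiffOn (k := 2) hΩ hu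
  have hY : ContDiffOn ℝ 1 (fun x => Vf a (gradient u x)) Ω :=
    (Vf_contDiff ha).comp_contDiffOn (hg.of_le (by norm_num))
  have hdc := dv_contOn hΩ hY
  have hFc : ContinuousOn (fun x => dv (fun x => Vf a (gradient u x)) x + f (u x)) Ω :=
    hdc.add (hf.continuous.comp_continuousOn hu.continuousOn)
  have hae : ∀ᵐ x, x ∈ Ω → dv (fun x => Vf a (gradient u x)) x + f (u x) = 0 := by
    refine hΩ.ae_eq_zero_of_integral_contDiff_smul_eq_zero
      (hFc.locallyIntegrableOn hΩ.measurableSet) ?_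
    intro φ hφ hφc hφs
    obtain ⟨L, hL⟩ := ContDiff.lipschitzWith_of_hasCompactSupport hφc hφ (by simp)
    have h1 := hsol φ ⟨⟨L, hL⟩, hφc, hφs⟩
    have hX := contDiff_cutoff_smul hΩ hφ hφs hY
    have hXc : HasCompactSupport (fun x => φ x • Vf a (gradient u x)) := hφc.smul_right
    have h2 := int_dv hX hXc
    have h3 : ∀ x, dv (fun x => φ x • Vf a (gradient u x)) x =
        a ‖gradient u x‖ * ⟪gradient u x, gradient φ x⟫ +
          φ x * dv (fun x => Vf a (gradient u x)) x := by
      intro x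
      by_cases hx : x ∈ tsupport φ
      · rw [dv_smul (hφ.differentiable (by simp) x)
          ((hY.contDiffAt (hΩ.mem_nhds (hφs hx))).differentiableAt (by norm_num))]
        rw [Vf, real_inner_smul_right, real_inner_comm]
      · rw [dv_zero_off (fun h => hx (tsupport_smul_subset_left _ _ h)), grad_zero_off hx,
          image_eq_zero_of_notMem_tsupport hx]
        simp
    have i2 : IntegrableOn (fun x => dv (fun x => Vf a (gradient u x)) x * φ x) Ω :=
      int_c hΩ hdc hL.continuous hφc hφs
    have i3 : IntegrableOn (fun x => f (u x) * φ x) Ω :=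
      int_c hΩ (hf.continuous.comp_continuousOn hu.continuousOn) hL.continuous hφc hφs
    have i1 : IntegrableOn (fun x => a ‖gradient u x‖ * ⟪gradient u x, gradient φ x⟫) Ω := by
      have : (fun x => a ‖gradient u x‖ * ⟪gradient u x, gradient φ x⟫) =
          fun x => dv (fun x => φ x • Vf a (gradient u x)) x -
            dv (fun x => Vf a (gradient u x)) x * φ x := by
        funext x; rw [h3 x]; ring
      rw [this]
      exact (dv_integrable hX hXc).integrableOn.sub i2
    have h4 : ∫ x in Ω, dv (fun x => φ x • Vf a (gradient u x)) x = 0 := by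
      rw [setIntegral_eq_integral_of_forall_compl_eq_zero, h2]
      intro x hx
      rw [h3, grad_zero_off (fun h => hx (hφs h)),
        image_eq_zero_of_notMem_tsupport (fun h => hx (hφs h))]
      simp
    have h5 : ∫ x in Ω, dv (fun x => φ x • Vf a (gradient u x)) x =
        (∫ x in Ω, a ‖gradient u x‖ * ⟪gradient u x, gradient φ x⟫) +
          ∫ x in Ω, dv (fun x => Vf a (gradient u x)) x * φ x := by
      rw [← integral_add i1 i2]
      congr 1; funext x; rw [h3 x]; ring
    have h6 : ∫ x, φ x • (dv (fun x => Vf a (gradient u x)) x + f (u x)) =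
        ∫ x in Ω, (dv (fun x => Vf a (gradient u x)) x * φ x + f (u x) * φ x) := by
      rw [← setIntegral_eq_integral_of_forall_compl_eq_zero (s := Ω)]
      · congr 1; funext x; rw [smul_eq_mul]; ring
      · intro x hx
        rw [image_eq_zero_of_notMem_tsupport (fun h => hx (hφs h)), zero_smul]
    rw [h6, integral_add i2 i3]
    linarith
  have hzero : EqOn (fun x => dv (fun x => Vf a (gradient u x)) x + f (u x)) (fun _ => 0) Ω := by
    refine Measure.eqOn_open_of_ae_eq (μ := (volume : Measure (Eu n))) ?_ hΩ hFc continuousOn_const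
    rw [Filter.EventuallyEq, ae_restrict_iff' hΩ.measurableSet]
    exact hae
  intro x hx
  have h1 := hzero hx
  simp only at h1
  rw [← h1]
  congr 1
  have hgd : DifferentiableAt ℝ (gradient u) x :=
    (hg.contDiffAt (hΩ.mem_nhds hx)).differentiableAt (by norm_num)
  have hfd : fderiv ℝ (fun x => Vf a (gradient u x)) x =
      (AL a (gradient u x)).comp (fderiv ℝ (gradient u) x) :=
    ((Vf_hasFDerivAt ha (gradient u x)).comp x hgd.hasFDerivAt).fderiv
  set b := EuclideanSpace.basisFun (Fin n) ℝ with hb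
  set G := gradient u x with hG
  set H := fderiv ℝ (gradient u) x with hH
  have hsum : ⟪G, H G⟫ = ∑ i, ⟪G, H (b i)⟫ * ⟪G, b i⟫ := by
    have : H G = ∑ i, ⟪b i, G⟫ • H (b i) := by
      conv_lhs => rw [← b.sum_repr' G, map_sum]
      refine Finset.sum_congr rfl fun i _ => by rw [map_smul]
    rw [this, inner_sum]
    refine Finset.sum_congr rfl fun i _ => ?_
    rw [real_inner_smul_right, real_inner_comm (b i)]; ring
  rw [dv, dv, hfd, hsum, Finset.mul_sum, Finset.mul_sum, ← Finset.sum_add_distrib]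
  refine Finset.sum_congr rfl fun i _ => ?_
  rw [ContinuousLinearMap.comp_apply, AL_apply, Aop_inner]
  ring

/-! ### Part 12: a Carleman inequality for the Laplacian -/

lemma hess_symm {z : Eu n → ℝ} {x : Eu n} (hz : ContDiffAt ℝ 2 z x) (v w : Eu n)
    (hd : DifferentiableAt ℝ (gradient z) x) :
    ⟪fderiv ℝ (gradient z) x v, w⟫ = ⟪fderiv ℝ (gradient z) x w, v⟫ := by
  rw [fderiv_grad_symm hz v, grad_inner, fderiv_inner_apply ℝ hd (differentiableAt_const _)]
  simp

/-- The vector field of the Carleman identity. -/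
def carF (p : Eu n → Eu n) (κ c τ : ℝ) (z : Eu n → ℝ) (y : Eu n) : Eu n :=
  (-4 * τ * ⟪p y, gradient z y⟫ - (2 * τ * κ + 5 * τ * c) * z y) • gradient z y +
    (2 * τ * ⟪gradient z y, gradient z y⟫ - 2 * τ ^ 3 * (⟪p y, p y⟫ * (z y * z y))) • p y

lemma carF_dv {p : Eu n → Eu n} {H : Eu n →L[ℝ] Eu n} (hp : ∀ x, HasFDerivAt p H x) {κ c τ : ℝ}
    (hκ : ∀ x, dv p x = κ) {z : Eu n → ℝ} (hz : ContDiff ℝ 2 z) (x : Eu n) :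
    dv (carF p κ c τ z) x =
      -2 * (dv (gradient z) x + τ ^ 2 * ⟪p x, p x⟫ * z x) *
        (2 * τ * ⟪p x, gradient z x⟫ + τ * κ * z x) - 4 * τ * ⟪H (gradient z x), gradient z x⟫
        - 4 * τ ^ 3 * ⟪H (p x), p x⟫ * z x ^ 2
        - 5 * τ * c * (⟪gradient z x, gradient z x⟫ + z x * dv (gradient z) x) := by
  have hg1 : ContDiff ℝ 1 (gradient z) := grad_contDiff (k := 1) hz
  have hgd : DifferentiableAt ℝ (gradient z) x := hg1.differentiable (by norm_num) x
  have hzd : DifferentiableAt ℝ z x := hz.differentiable (by norm_num) x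
  have hpx := hp x
  have hpd : DifferentiableAt ℝ p x := hpx.differentiableAt
  set Hz := fderiv ℝ (gradient z) x with hHz
  have d1 : HasFDerivAt (fun y => -4 * τ * ⟪p y, gradient z y⟫ - (2 * τ * κ + 5 * τ * c) * z y)
      _ x := ((hpx.inner ℝ hgd.hasFDerivAt).const_mul (-4 * τ)).sub
        (hzd.hasFDerivAt.const_mul (2 * τ * κ + 5 * τ * c))
  have d2 : HasFDerivAt (fun y => 2 * τ * ⟪gradient z y, gradient z y⟫ -
      2 * τ ^ 3 * (⟪p y, p y⟫ * (z y * z y))) _ x :=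
    ((hgd.hasFDerivAt.inner ℝ hgd.hasFDerivAt).const_mul (2 * τ)).sub
      (((hpx.inner ℝ hpx).mul (hzd.hasFDerivAt.mul hzd.hasFDerivAt)).const_mul (2 * τ ^ 3))
  have hsy := hess_symm hz.contDiffAt (gradient z x) (p x) hgd
  have e0 : dv (carF p κ c τ z) x = dv (fun y =>
    (-4 * τ * ⟪p y, gradient z y⟫ - (2 * τ * κ + 5 * τ * c) * z y) • gradient z y +
    (2 * τ * ⟪gradient z y, gradient z y⟫ - 2 * τ ^ 3 * (⟪p y, p y⟫ * (z y * z y))) • p y) x := rfl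
  have f1 : DifferentiableAt ℝ (fun y =>
    (-4 * τ * ⟪p y, gradient z y⟫ - (2 * τ * κ + 5 * τ * c) * z y) • gradient z y) x :=
    d1.differentiableAt.smul hgd
  have f2 : DifferentiableAt ℝ (fun y =>
    (2 * τ * ⟪gradient z y, gradient z y⟫ - 2 * τ ^ 3 * (⟪p y, p y⟫ * (z y * z y))) • p y) x :=
    d2.differentiableAt.smul hpd
  rw [e0, dv_add f1 f2,
    dv_smul d1.differentiableAt hgd, dv_smul d2.differentiableAt hpd, hκ, grad_inner, grad_inner,
    d1.fderiv, d2.fderiv]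
  simp only [ContinuousLinearMap.sub_apply, ContinuousLinearMap.smul_apply,
    ContinuousLinearMap.add_apply, ContinuousLinearMap.comp_apply, smul_eq_mul,
    fderivInnerCLM_apply, ContinuousLinearMap.prod_apply, ← hHz]
  rw [← grad_inner, ← grad_inner]
  rw [real_inner_comm (Hz (p x)) (gradient z x), real_inner_comm (Hz (gradient z x)) (p x),
    real_inner_comm (H (p x)) (p x), real_inner_comm (p x) (gradient z x)] 
  rw [← hHz] at hsy
  rw [hsy]
  simp only [Pi.mul_apply]
  ring

lemma carF_contDiff {p : Eu n → Eu n} (hp : ContDiff ℝ 1 p) {κ c τ : ℝ}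
    {z : Eu n → ℝ} (hz : ContDiff ℝ 2 z) : ContDiff ℝ 1 (carF p κ c τ z) := by
  have hg1 : ContDiff ℝ 1 (gradient z) := grad_contDiff (k := 1) hz
  have hz1 : ContDiff ℝ 1 z := hz.of_le (by norm_num)
  unfold carF
  have h1 : ContDiff ℝ 1 (fun y => -4 * τ * ⟪p y, gradient z y⟫ -
      (2 * τ * κ + 5 * τ * c) * z y) :=
    (contDiff_const.mul (hp.inner ℝ hg1)).sub (contDiff_const.mul hz1)
  have h2 : ContDiff ℝ 1 (fun y => 2 * τ * ⟪gradient z y, gradient z y⟫ -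
      2 * τ ^ 3 * (⟪p y, p y⟫ * (z y * z y))) :=
    (contDiff_const.mul (hg1.inner ℝ hg1)).sub
      (contDiff_const.mul ((hp.inner ℝ hp).mul (hz1.mul hz1)))
  exact (h1.smul hg1).add (h2.smul hp)

lemma grad_cs {z : Eu n → ℝ} (hzc : HasCompactSupport z) : HasCompactSupport (gradient z) :=
  HasCompactSupport.intro hzc.isCompact fun _ hx => grad_zero_off hx

lemma carF_cs {p : Eu n → Eu n} {κ c τ : ℝ}
    {z : Eu n → ℝ} (hzc : HasCompactSupport z) : HasCompactSupport (carF p κ c τ z) := by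
  refine HasCompactSupport.intro hzc.isCompact fun x hx => ?_
  rw [carF, grad_zero_off hx, image_eq_zero_of_notMem_tsupport hx]
  simp

lemma grad_off_dv {z : Eu n → ℝ} {x : Eu n} (hx : x ∉ tsupport z) : dv (gradient z) x = 0 := by
  apply dv_zero_off
  intro h
  refine hx (closure_minimal ?_ (isClosed_tsupport z) h)
  intro y hy
  by_contra hy2
  exact hy (grad_zero_off hy2)

lemma carleman {p : Eu n → Eu n} {H : Eu n →L[ℝ] Eu n} (hp : ∀ x, HasFDerivAt p H x)
    (hpc : ContDiff ℝ 1 p) {κ c τ : ℝ} {ν : Eu n}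
    (hH : ∀ v, H v = (5 * c * ⟪ν, v⟫) • ν - c • v) (hκ : ∀ x, dv p x = κ) {z : Eu n → ℝ}
    (hz : ContDiff ℝ 2 z) (hzc : HasCompactSupport z) {U : Set (Eu n)} (hzU : tsupport z ⊆ U)
    (hpU : ∀ x ∈ U, 9 / 10 ≤ ⟪ν, p x⟫ ∧ ⟪p x, p x⟫ ≤ 121 / 100) (hc : 0 < c) (hτ : 0 < τ)
    (hcτ : 5 * c ≤ τ) :
    ∫ x, (τ * c * ⟪gradient z x, gradient z x⟫ + 4 * c * τ ^ 3 * z x ^ 2) ≤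
      ∫ x, (dv (gradient z) x + τ ^ 2 * ⟪p x, p x⟫ * z x -
        (2 * τ * ⟪p x, gradient z x⟫ + τ * κ * z x)) ^ 2 := by
  have hg1 : ContDiff ℝ 1 (gradient z) := grad_contDiff (k := 1) hz
  have hFd := carF_contDiff (κ := κ) (c := c) (τ := τ) hpc hz
  have hFc := carF_cs (p := p) (κ := κ) (c := c) (τ := τ) hzc
  have hF0 := int_dv hFd hFc
  have iF := dv_integrable hFd hFc
  have i1 : Integrable (fun x => τ * c * ⟪gradient z x, gradient z x⟫ + 4 * c * τ ^ 3 * z x ^ 2) := by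
    refine Continuous.integrable_of_hasCompactSupport ?_ ?_
    · exact (continuous_const.mul (hg1.continuous.inner hg1.continuous)).add
        (continuous_const.mul (hz.continuous.pow 2))
    · refine HasCompactSupport.intro hzc.isCompact fun x hx => ?_
      rw [grad_zero_off hx, image_eq_zero_of_notMem_tsupport hx]; simp
  have i2 : Integrable (fun x => (dv (gradient z) x + τ ^ 2 * ⟪p x, p x⟫ * z x -
        (2 * τ * ⟪p x, gradient z x⟫ + τ * κ * z x)) ^ 2) := by
    refine Continuous.integrable_of_hasCompactSupport ?_ ?_
    · have c1 : Continuous fun x => ⟪p x, p x⟫ := hpc.continuous.inner hpc.continuous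
      have c2 : Continuous fun x => ⟪p x, gradient z x⟫ := hpc.continuous.inner hg1.continuous
      have c3 := dv_cont hg1
      have c4 := hz.continuous
      fun_prop
    · refine HasCompactSupport.intro hzc.isCompact fun x hx => ?_
      rw [grad_off_dv hx, grad_zero_off hx, image_eq_zero_of_notMem_tsupport hx]; simp
  have key : ∀ x, (τ * c * ⟪gradient z x, gradient z x⟫ + 4 * c * τ ^ 3 * z x ^ 2) +
      dv (carF p κ c τ z) x ≤ (dv (gradient z) x + τ ^ 2 * ⟪p x, p x⟫ * z x -
        (2 * τ * ⟪p x, gradient z x⟫ + τ * κ * z x)) ^ 2 := by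
    intro x
    by_cases hx : x ∈ tsupport z
    swap
    · rw [carF_dv hp hκ hz, grad_off_dv hx, grad_zero_off hx,
        image_eq_zero_of_notMem_tsupport hx]
      simp
    obtain ⟨hν, hpp⟩ := hpU x (hzU hx)
    rw [carF_dv hp hκ hz, hH, hH, inner_sub_left, inner_sub_left, real_inner_smul_left,
      real_inner_smul_left, real_inner_smul_left, real_inner_smul_left]
    set D := dv (gradient z) x
    set PP := ⟪p x, p x⟫
    set N := ⟪ν, gradient z x⟫
    set NP := ⟪ν, p x⟫
    set GG := ⟪gradient z x, gradient z x⟫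
    set PG := ⟪p x, gradient z x⟫
    set Z := z x
    set S := D + τ ^ 2 * PP * Z with hS
    set T := 2 * τ * PG + τ * κ * Z
    have hD : D = S - τ ^ 2 * PP * Z := by rw [hS]; ring
    rw [hD]
    have h1 : 0 ≤ T ^ 2 := sq_nonneg T
    have h2 : 0 ≤ τ * c * N ^ 2 := by positivity
    have h3 : 131 / 100 ≤ 20 * NP ^ 2 - 9 * PP - 4 := by nlinarith
    have h4 : 0 ≤ (S + 5 / 2 * τ * c * Z) ^ 2 := sq_nonneg _
    have h5 : 0 ≤ τ ^ 3 * c * Z ^ 2 := by positivity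
    have h6 := mul_le_mul_of_nonneg_left h3 h5
    have h7 : 25 / 4 * τ ^ 2 * c ^ 2 * Z ^ 2 ≤ τ ^ 3 * c * Z ^ 2 * (131 / 100) := by
      have h8 : 0 ≤ τ ^ 2 * c * Z ^ 2 := by positivity
      nlinarith
    nlinarith
  have h1 := integral_mono (i1.add iF) i2 key
  have h2 : ∫ x, ((τ * c * ⟪gradient z x, gradient z x⟫ + 4 * c * τ ^ 3 * z x ^ 2) +
      dv (carF p κ c τ z) x) = ∫ x, (τ * c * ⟪gradient z x, gradient z x⟫ +
        4 * c * τ ^ 3 * z x ^ 2) := by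
    rw [integral_add i1 iF, hF0, add_zero]
  rw [← h2]
  exact h1

/-! ### Part 13: the Carleman inequality with an explicit weight -/

/-- The quadratic Carleman weight. -/
def phi (x0 ν : Eu n) (c : ℝ) (x : Eu n) : ℝ :=
  ⟪x - x0, ν⟫ + 5 * c / 2 * (⟪x - x0, ν⟫ * ⟪x - x0, ν⟫) - c / 2 * ⟪x - x0, x - x0⟫

/-- The gradient of the weight. -/
def pv (x0 ν : Eu n) (c : ℝ) (x : Eu n) : Eu n :=
  (1 + 5 * c * ⟪x - x0, ν⟫) • ν - c • (x - x0)

/-- The Hessian of the weight. -/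
def Hop (ν : Eu n) (c : ℝ) : Eu n →L[ℝ] Eu n :=
  ((5 * c) • (innerSL ℝ ν)).smulRight ν - c • ContinuousLinearMap.id ℝ (Eu n)

lemma phi_contDiff (x0 ν : Eu n) (c : ℝ) {k : WithTop ℕ∞} : ContDiff ℝ k (phi x0 ν c) := by
  have h1 : ContDiff ℝ k (fun x : Eu n => x - x0) := contDiff_id.sub contDiff_const
  have h2 : ContDiff ℝ k (fun x : Eu n => ⟪x - x0, ν⟫) := h1.inner ℝ contDiff_const
  exact (h2.add (contDiff_const.mul (h2.mul h2))).sub (contDiff_const.mul (h1.inner ℝ h1))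

lemma phi_fderiv (x0 ν : Eu n) (c : ℝ) (x v : Eu n) :
    fderiv ℝ (phi x0 ν c) x v = ⟪pv x0 ν c x, v⟫ := by
  have h1 : HasFDerivAt (fun x : Eu n => x - x0) (ContinuousLinearMap.id ℝ (Eu n)) x :=
    (hasFDerivAt_id x).sub_const x0
  have h2 : HasFDerivAt (fun x : Eu n => ⟪x - x0, ν⟫) _ x := h1.inner ℝ (hasFDerivAt_const ν x)
  have h3 : HasFDerivAt (phi x0 ν c) _ x :=
    (h2.add ((h2.mul h2).const_mul (5 * c / 2))).sub ((h1.inner ℝ h1).const_mul (c / 2))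
  rw [h3.fderiv]
  simp only [ContinuousLinearMap.sub_apply, ContinuousLinearMap.smul_apply,
    ContinuousLinearMap.add_apply, ContinuousLinearMap.comp_apply, smul_eq_mul,
    fderivInnerCLM_apply, ContinuousLinearMap.prod_apply, ContinuousLinearMap.id_apply,
    ContinuousLinearMap.zero_apply, inner_zero_right, pv, inner_sub_left (𝕜 := ℝ) (_ • ν),
    real_inner_smul_left]
  rw [real_inner_comm ν v, real_inner_comm (x - x0) v]
  ring

lemma phi_grad (x0 ν : Eu n) (c : ℝ) (x : Eu n) : gradient (phi x0 ν c) x = pv x0 ν c x := by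
  refine ext_inner_right ℝ fun v => ?_
  rw [grad_inner, phi_fderiv]

lemma pv_hasFDerivAt (x0 ν : Eu n) (c : ℝ) (x : Eu n) : HasFDerivAt (pv x0 ν c) (Hop ν c) x := by
  have h1 : HasFDerivAt (fun x : Eu n => x - x0) (ContinuousLinearMap.id ℝ (Eu n)) x :=
    (hasFDerivAt_id x).sub_const x0
  have h2 : HasFDerivAt (fun x : Eu n => ⟪x - x0, ν⟫) _ x := h1.inner ℝ (hasFDerivAt_const ν x)
  have h3 : HasFDerivAt (pv x0 ν c) _ x :=
    (((h2.const_mul (5 * c)).const_add 1).smul (hasFDerivAt_const ν x)).sub (h1.const_smul c)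
  refine h3.congr_fderiv ?_
  ext1 v
  simp [Hop, fderivInnerCLM_apply, real_inner_comm]

lemma Hop_apply (ν : Eu n) (c : ℝ) (v : Eu n) : Hop ν c v = (5 * c * ⟪ν, v⟫) • ν - c • v := by
  simp [Hop]

lemma pv_contDiff (x0 ν : Eu n) (c : ℝ) {k : WithTop ℕ∞} : ContDiff ℝ k (pv x0 ν c) := by
  have h1 : ContDiff ℝ k (fun x : Eu n => x - x0) := contDiff_id.sub contDiff_const
  have h2 : ContDiff ℝ k (fun x : Eu n => ⟪x - x0, ν⟫) := h1.inner ℝ contDiff_const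
  exact ((contDiff_const.add (contDiff_const.mul h2)).smul contDiff_const).sub
    (h1.const_smul c)

lemma pv_bounds {x0 ν : Eu n} {c r : ℝ} (hν : ‖ν‖ = 1) (hc : 0 < c) (hr : 6 * c * r ≤ 1 / 10)
    {x : Eu n} (hx : x ∈ ball x0 r) :
    9 / 10 ≤ ⟪ν, pv x0 ν c x⟫ ∧ ⟪pv x0 ν c x, pv x0 ν c x⟫ ≤ 121 / 100 := by
  have hd : ‖x - x0‖ < r := by rwa [mem_ball, dist_eq_norm] at hx
  have hin : |⟪x - x0, ν⟫| ≤ ‖x - x0‖ := by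
    have := abs_real_inner_le_norm (x - x0) ν
    rwa [hν, mul_one] at this
  have hq : ‖pv x0 ν c x - ν‖ ≤ 1 / 10 := by
    have e : pv x0 ν c x - ν = (5 * c * ⟪x - x0, ν⟫) • ν - c • (x - x0) := by
      rw [pv, add_smul, one_smul]; abel
    rw [e]
    refine (norm_sub_le _ _).trans ?_
    rw [norm_smul, norm_smul, hν, Real.norm_eq_abs, Real.norm_eq_abs, abs_mul, abs_of_pos hc,
      abs_of_pos (by positivity : 0 < 5 * c)]
    have h1 : 5 * c * |⟪x - x0, ν⟫| ≤ 5 * c * ‖x - x0‖ :=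
      mul_le_mul_of_nonneg_left hin (by positivity)
    have h2 : c * ‖x - x0‖ ≤ c * r := mul_le_mul_of_nonneg_left hd.le hc.le
    nlinarith
  have hνν : ⟪ν, ν⟫ = 1 := by rw [real_inner_self_eq_norm_sq, hν]; norm_num
  constructor
  · have e : ⟪ν, pv x0 ν c x⟫ = 1 + ⟪ν, pv x0 ν c x - ν⟫ := by rw [inner_sub_right, hνν]; ring
    have h := abs_real_inner_le_norm ν (pv x0 ν c x - ν)
    rw [hν, one_mul] at h
    have := neg_abs_le ⟪ν, pv x0 ν c x - ν⟫
    linarith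
  · have h : ‖pv x0 ν c x‖ ≤ 11 / 10 := by
      have := norm_add_le (pv x0 ν c x - ν) ν
      rw [sub_add_cancel, hν] at this
      linarith
    rw [real_inner_self_eq_norm_sq]
    nlinarith [norm_nonneg (pv x0 ν c x)]

lemma carleman2 {x0 ν : Eu n} {c r : ℝ} (hν : ‖ν‖ = 1) (hc : 0 < c) (hr : 6 * c * r ≤ 1 / 10)
    {w : Eu n → ℝ} (hw : ContDiff ℝ 2 w) (hwc : HasCompactSupport w)
    (hws : tsupport w ⊆ ball x0 r) {τ : ℝ} (hτ : 1 ≤ τ) (hcτ : 5 * c ≤ τ) :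
    ∫ x, c * τ / 2 * (Real.exp (τ * phi x0 ν c x) ^ 2 *
        (⟪gradient w x, gradient w x⟫ + w x ^ 2)) ≤
      ∫ x, Real.exp (τ * phi x0 ν c x) ^ 2 * dv (gradient w) x ^ 2 := by
  set p := pv x0 ν c with hp
  set E : Eu n → ℝ := fun x => Real.exp (τ * phi x0 ν c x) with hE
  set κ := dv p x0 with hκ
  have hκc : ∀ x, dv p x = κ := fun x => by
    rw [hκ, dv, dv, (pv_hasFDerivAt x0 ν c x).fderiv, (pv_hasFDerivAt x0 ν c x0).fderiv]
  have hEc : ContDiff ℝ 2 E := (contDiff_const.mul (phi_contDiff x0 ν c)).exp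
  have hEd : Differentiable ℝ E := hEc.differentiable (by norm_num)
  have hwd : Differentiable ℝ w := hw.differentiable (by norm_num)
  have hpd : Differentiable ℝ p := fun x => (pv_hasFDerivAt x0 ν c x).differentiableAt
  have hg1 : ContDiff ℝ 1 (gradient w) := grad_contDiff (k := 1) hw
  have hgd : Differentiable ℝ (gradient w) := hg1.differentiable (by norm_num)
  have hgE : ∀ x, gradient E x = (τ * E x) • p x := by
    intro x
    refine ext_inner_right ℝ fun v => ?_
    have h1 : HasFDerivAt E _ x := (((phi_contDiff x0 ν c (k := 1)).differentiable
      (by norm_num) x).hasFDerivAt.const_mul τ).exp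
    rw [grad_inner, h1.fderiv, real_inner_smul_left, hp, ← phi_fderiv]
    simp only [ContinuousLinearMap.smul_apply, smul_eq_mul, hE]
    ring
  set z : Eu n → ℝ := fun x => E x * w x with hz
  have hzc2 : ContDiff ℝ 2 z := hEc.mul hw
  have hzd : Differentiable ℝ z := hzc2.differentiable (by norm_num)
  have hzcs : HasCompactSupport z := hwc.mul_left
  have hzs : tsupport z ⊆ tsupport w := tsupport_mul_subset_right
  have hgz : ∀ x, gradient z x = E x • gradient w x + (τ * z x) • p x := by
    intro x
    have h := grad_mul (hEd x) (hwd x)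
    rw [hz]
    rw [h, hgE, smul_smul]
    congr 2
    ring
  have hdz : ∀ x, dv (gradient z) x = E x * (dv (gradient w) x + 2 * τ * ⟪p x, gradient w x⟫ +
      τ ^ 2 * ⟪p x, p x⟫ * w x + τ * κ * w x) := by
    intro x
    have e : gradient z = fun y => E y • gradient w y + (τ * z y) • p y := funext hgz
    have f1 : DifferentiableAt ℝ (fun y => E y • gradient w y) x := (hEd x).smul (hgd x)
    have f3 : DifferentiableAt ℝ (fun y => τ * z y) x := (hzd x).const_mul τ
    have f2 : DifferentiableAt ℝ (fun y => (τ * z y) • p y) x := f3.smul (hpd x)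
    rw [e, dv_add f1 f2, dv_smul (hEd x) (hgd x), dv_smul f3 (hpd x), hκc, hgE,
      grad_const_mul (hzd x), hgz]
    rw [real_inner_smul_left, real_inner_smul_left, inner_add_left, real_inner_smul_left,
      real_inner_smul_left, real_inner_comm (p x) (gradient w x)]
    simp only [hz]
    ring
  have key := carleman (p := p) (H := Hop ν c) (pv_hasFDerivAt x0 ν c) (pv_contDiff x0 ν c)
    (Hop_apply ν c) hκc hzc2 hzcs (hzs.trans hws) (fun x hx => pv_bounds hν hc hr hx) hc
    (by linarith) hcτ
  have e2 : ∀ x, (dv (gradient z) x + τ ^ 2 * ⟪p x, p x⟫ * z x -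
        (2 * τ * ⟪p x, gradient z x⟫ + τ * κ * z x)) ^ 2 = E x ^ 2 * dv (gradient w) x ^ 2 := by
    intro x
    rw [hdz, hgz, inner_add_right, real_inner_smul_right, real_inner_smul_right]
    simp only [hz]
    ring
  simp only [e2] at key
  refine le_trans (integral_mono ?_ ?_ ?_) key
  · refine Continuous.integrable_of_hasCompactSupport ?_ ?_
    · have c1 : Continuous fun x => ⟪gradient w x, gradient w x⟫ :=
        hg1.continuous.inner hg1.continuous
      have c2 := hw.continuous
      have c3 := hEc.continuous
      exact continuous_const.mul ((c3.pow 2).mul (c1.add (c2.pow 2)))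
    · refine HasCompactSupport.intro hwc.isCompact fun x hx => ?_
      rw [grad_zero_off hx, image_eq_zero_of_notMem_tsupport hx]; simp
  · have hgz1 : ContDiff ℝ 1 (gradient z) := grad_contDiff (k := 1) hzc2
    refine Continuous.integrable_of_hasCompactSupport ?_ ?_
    · exact (continuous_const.mul (hgz1.continuous.inner hgz1.continuous)).add
        (continuous_const.mul (hzc2.continuous.pow 2))
    · refine HasCompactSupport.intro hzcs.isCompact fun x hx => ?_
      rw [grad_zero_off hx, image_eq_zero_of_notMem_tsupport hx]; simp
  · intro x
    show c * τ / 2 * (E x ^ 2 * (⟪gradient w x, gradient w x⟫ + w x ^ 2)) ≤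
      τ * c * ⟪gradient z x, gradient z x⟫ + 4 * c * τ ^ 3 * z x ^ 2
    by_cases hx : x ∈ tsupport w
    swap
    · rw [grad_zero_off hx, grad_zero_off (fun h => hx (hzs h)),
        image_eq_zero_of_notMem_tsupport hx, image_eq_zero_of_notMem_tsupport (fun h => hx (hzs h))]
      simp
    have hpp := (pv_bounds hν hc hr (hws hx)).2
    rw [← hp] at hpp
    have e3 : E x ^ 2 * ⟪gradient w x, gradient w x⟫ =
        ⟪gradient z x - (τ * z x) • p x, gradient z x - (τ * z x) • p x⟫ := by
      rw [hgz, add_sub_cancel_right, real_inner_smul_left, real_inner_smul_right]; ring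
    have e4 : ⟪gradient z x - (τ * z x) • p x, gradient z x - (τ * z x) • p x⟫ ≤
        2 * ⟪gradient z x, gradient z x⟫ + 2 * (τ * z x) ^ 2 * ⟪p x, p x⟫ := by
      have h := real_inner_self_nonneg (x := gradient z x + (τ * z x) • p x)
      rw [real_inner_add_add_self] at h
      rw [real_inner_sub_sub_self]
      have h2 : ⟪(τ * z x) • p x, (τ * z x) • p x⟫ = (τ * z x) ^ 2 * ⟪p x, p x⟫ := by
        rw [real_inner_smul_left, real_inner_smul_right]; ring
      rw [h2] at h ⊢
      linarith
    have e5 : E x ^ 2 * w x ^ 2 = z x ^ 2 := by simp only [hz]; ring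
    have e6 : E x ^ 2 * (⟪gradient w x, gradient w x⟫ + w x ^ 2) ≤
        2 * ⟪gradient z x, gradient z x⟫ + 4 * τ ^ 2 * z x ^ 2 := by
      rw [mul_add, e3, e5]
      have h1 : (τ * z x) ^ 2 * ⟪p x, p x⟫ ≤ (τ * z x) ^ 2 * (121 / 100) :=
        mul_le_mul_of_nonneg_left hpp (sq_nonneg _)
      have h2 : z x ^ 2 ≤ τ ^ 2 * z x ^ 2 := by
        have : 1 ≤ τ ^ 2 := by nlinarith
        nlinarith [sq_nonneg (z x)]
      have h3 : 0 ≤ z x ^ 2 := sq_nonneg _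
      nlinarith
    have h7 := mul_le_mul_of_nonneg_left e6 (by positivity : 0 ≤ c * τ / 2)
    have h8 : 0 ≤ c * τ ^ 3 * z x ^ 2 := by positivity
    nlinarith

/-! ### Part 14: local unique continuation across a sphere -/

lemma phi_neg {x0 y x : Eu n} {R : ℝ} (hR : 0 < R) (hd : dist x0 y = R)
    (hx : 10 * ‖x - x0‖ ≤ R) (hxy : R ≤ dist x y) :
    phi x0 (R⁻¹ • (y - x0)) (4 / R) x ≤ -(‖x - x0‖ ^ 2 / R) := by
  set ν := R⁻¹ • (y - x0) with hν
  set d := x - x0 with hdd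
  have hn : ‖y - x0‖ = R := by rw [← dist_eq_norm, dist_comm, hd]
  have hν1 : ‖ν‖ = 1 := by
    rw [hν, norm_smul, hn, Real.norm_eq_abs, abs_of_pos (inv_pos.2 hR), inv_mul_cancel₀ hR.ne']
  have hin : |⟪d, ν⟫| ≤ ‖d‖ := by
    have := abs_real_inner_le_norm d ν
    rwa [hν1, mul_one] at this
  have hyν : y - x0 = R • ν := by rw [hν, smul_smul, mul_inv_cancel₀ hR.ne', one_smul]
  have h1 : R ^ 2 ≤ ‖d - R • ν‖ ^ 2 := by
    have : d - R • ν = x - y := by rw [← hyν, hdd]; abel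
    rw [this, ← dist_eq_norm]
    gcongr
  rw [norm_sub_sq_real, real_inner_smul_right, norm_smul, hν1, Real.norm_eq_abs,
    abs_of_pos hR] at h1
  rw [phi, ← hdd, real_inner_self_eq_norm_sq]
  set t := ⟪d, ν⟫ with ht
  set D := ‖d‖ with hD
  have hD0 : 0 ≤ D := norm_nonneg _
  obtain ⟨ha, hb⟩ := abs_le.1 hin
  have e : t + 5 * (4 / R) / 2 * (t * t) - 4 / R / 2 * D ^ 2 =
      (R * t + 10 * (t * t) - 2 * D ^ 2) / R := by
    field_simp
    ring
  rw [e, ← neg_div]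
  refine div_le_div_of_nonneg_right ?_ hR.le
  rcases le_total t 0 with h | h
  · nlinarith
  · nlinarith

lemma uc_local {x0 y : Eu n} {R : ℝ} (hR : 0 < R) (hd : dist x0 y = R) {W : Set (Eu n)}
    (hW : IsOpen W) (hxW : x0 ∈ W) {v : Eu n → ℝ} (hv : ContDiffOn ℝ 2 v W)
    (hv0 : ∀ x, dist x y < R → v x = 0) {C : ℝ}
    (hC : ∀ᶠ x in 𝓝 x0, |dv (gradient v) x| ≤ C * (|v x| + ‖gradient v x‖)) :
    ∀ᶠ x in 𝓝 x0, v x = 0 := by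
  set ν := R⁻¹ • (y - x0) with hν
  have hn : ‖y - x0‖ = R := by rw [← dist_eq_norm, dist_comm, hd]
  have hν1 : ‖ν‖ = 1 := by
    rw [hν, norm_smul, hn, Real.norm_eq_abs, abs_of_pos (inv_pos.2 hR), inv_mul_cancel₀ hR.ne']
  set c := 4 / R with hc
  have hc0 : 0 < c := by positivity
  obtain ⟨r1, hr1, hr1s⟩ := Metric.mem_nhds_iff.1 (inter_mem (hW.mem_nhds hxW) hC)
  set r := min r1 (R / 240) with hr
  have hr0 : 0 < r := lt_min hr1 (by positivity)
  have hrR : r ≤ R / 240 := min_le_right _ _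
  have hrc : 6 * c * r ≤ 1 / 10 := by
    have : 6 * c * r ≤ 6 * c * (R / 240) := mul_le_mul_of_nonneg_left hrR (by positivity)
    refine this.trans (le_of_eq ?_)
    rw [hc]; field_simp; norm_num
  have hrs : ball x0 r ⊆ W ∩ {x | |dv (gradient v) x| ≤ C * (|v x| + ‖gradient v x‖)} :=
    (ball_subset_ball (min_le_left _ _)).trans hr1s
  set ρ := r / 2 with hρ
  have hρ0 : 0 < ρ := by positivity
  obtain ⟨χ, hχ, hχc, hχs, ⟨N, hN, hKN, hN1⟩, hχ01⟩ := exists_cutoff (isCompact_closedBall x0 ρ)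
    (isOpen_ball (x := x0) (ε := r)) (closedBall_subset_ball (by rw [hρ]; linarith))
  set w : Eu n → ℝ := fun x => χ x * v x with hw
  have hw2 : ContDiff ℝ 2 w := contDiff_cutoff_mul (k := 2) isOpen_ball hχ hχs
    (hv.mono fun x hx => (hrs hx).1)
  have hwc : HasCompactSupport w := hχc.mul_right
  have hws : tsupport w ⊆ ball x0 r := (tsupport_mul_subset_left).trans hχs
  have hg1 : ContDiff ℝ 1 (gradient w) := grad_contDiff (k := 1) hw2
  have hwN : ∀ x ∈ N, w =ᶠ[𝓝 x] v := fun x hx => by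
    filter_upwards [hN.mem_nhds hx] with z hz
    simp only [hw, hN1 z hz, one_mul]
  have hdw := dv_cont hg1
  obtain ⟨M, hM⟩ := bdd_of_cs hdw (HasCompactSupport.intro hwc.isCompact
    fun x hx => grad_off_dv hx)
  obtain ⟨ψ, hψ, hψc, -, ⟨N2, hN2, hKN2, hN21⟩, hψ01⟩ := exists_cutoff hwc.isCompact
    isOpen_univ (subset_univ _)
  set Q := ∫ x, ψ x with hQ
  have iψ : Integrable ψ := hψ.continuous.integrable_of_hasCompactSupport hψc
  set m := ρ ^ 2 / R with hm
  have hm0 : 0 < m := by positivity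
  have hφc : Continuous (phi x0 ν c) := (phi_contDiff x0 ν c (k := 0)).continuous
  -- pointwise bound of the source
  have hpt : ∀ τ : ℝ, 0 < τ → ∀ x, Real.exp (τ * phi x0 ν c x) ^ 2 * dv (gradient w) x ^ 2 ≤
      2 * C ^ 2 * (Real.exp (τ * phi x0 ν c x) ^ 2 *
        (⟪gradient w x, gradient w x⟫ + w x ^ 2)) +
      M ^ 2 * Real.exp (-(2 * τ * m)) * ψ x := by
    intro τ hτ x
    have hpos1 : 0 ≤ M ^ 2 * Real.exp (-(2 * τ * m)) * ψ x :=
      mul_nonneg (by positivity) (hψ01 x).1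
    have hpos2 : 0 ≤ 2 * C ^ 2 * (Real.exp (τ * phi x0 ν c x) ^ 2 *
        (⟪gradient w x, gradient w x⟫ + w x ^ 2)) := by
      have := real_inner_self_nonneg (x := gradient w x)
      positivity
    by_cases hxK : x ∈ closedBall x0 ρ
    · have hev := hwN x (hKN hxK)
      have hev2 : gradient w =ᶠ[𝓝 x] gradient v := by
        filter_upwards [hev.eventuallyEq_nhds] with z hz using grad_congr hz
      have hb := (hrs ((closedBall_subset_ball (by rw [hρ]; linarith)) hxK)).2
      have hb : |dv (gradient v) x| ≤ C * (|v x| + ‖gradient v x‖) := hb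
      rw [← dv_congr hev2, ← hev.eq_of_nhds, ← hev2.eq_of_nhds] at hb
      have h1 : dv (gradient w) x ^ 2 ≤ 2 * C ^ 2 * (⟪gradient w x, gradient w x⟫ + w x ^ 2) := by
        rw [real_inner_self_eq_norm_sq, ← sq_abs (dv (gradient w) x), ← sq_abs (w x)]
        have h2 : |dv (gradient w) x| ^ 2 ≤ (C * (|w x| + ‖gradient w x‖)) ^ 2 :=
          pow_le_pow_left₀ (abs_nonneg _) hb 2
        nlinarith [mul_nonneg (sq_nonneg C) (sq_nonneg (|w x| - ‖gradient w x‖))]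
      have h3 := mul_le_mul_of_nonneg_left h1 (sq_nonneg (Real.exp (τ * phi x0 ν c x)))
      linarith
    · by_cases hz : dv (gradient w) x = 0
      · rw [hz]
        have : Real.exp (τ * phi x0 ν c x) ^ 2 * (0 : ℝ) ^ 2 = 0 := by ring
        linarith
      have hxw : x ∈ tsupport w := by
        by_contra h
        exact hz (grad_off_dv h)
      have hxy : R ≤ dist x y := by
        by_contra h
        push Not at h
        refine hz (grad_off_dv ?_)
        rw [notMem_tsupport_iff_eventuallyEq]
        filter_upwards [(isOpen_ball (x := y) (ε := R)).mem_nhds h] with z hz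
        simp only [hw, hv0 z hz, mul_zero, Pi.zero_apply]
      have hxr : ‖x - x0‖ < r := by
        have := hws hxw
        rwa [mem_ball, dist_eq_norm] at this
      have hxρ : ρ < ‖x - x0‖ := by
        rw [mem_closedBall, dist_eq_norm] at hxK
        linarith
      have h1 := phi_neg hR hd (x := x) (by linarith) hxy
      have h2 : phi x0 ν c x ≤ -m := by
        refine h1.trans (neg_le_neg ?_)
        rw [hm]
        gcongr
      have h3 : Real.exp (τ * phi x0 ν c x) ^ 2 ≤ Real.exp (-(2 * τ * m)) := by
        rw [← Real.exp_nat_mul]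
        apply Real.exp_le_exp.2
        push_cast
        nlinarith
      have h4 : dv (gradient w) x ^ 2 ≤ M ^ 2 := by
        rw [← sq_abs]
        exact pow_le_pow_left₀ (abs_nonneg _) (hM x) 2
      have h5 : ψ x = 1 := hN21 x (hKN2 hxw)
      have h6 := mul_le_mul h3 h4 (sq_nonneg _) (Real.exp_pos _).le
      rw [h5]
      linarith
  have hI : ∀ τ : ℝ, Integrable (fun x => Real.exp (τ * phi x0 ν c x) ^ 2 *
        (⟪gradient w x, gradient w x⟫ + w x ^ 2)) := by
    intro τ
    refine Continuous.integrable_of_hasCompactSupport ?_ ?_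
    · have c1 : Continuous fun x => ⟪gradient w x, gradient w x⟫ :=
        hg1.continuous.inner hg1.continuous
      exact (((continuous_const.mul hφc).rexp).pow 2).mul (c1.add (hw2.continuous.pow 2))
    · refine HasCompactSupport.intro hwc.isCompact fun x hx => ?_
      rw [grad_zero_off hx, image_eq_zero_of_notMem_tsupport hx]; simp
  have hI2 : ∀ τ : ℝ, Integrable (fun x => Real.exp (τ * phi x0 ν c x) ^ 2 *
        dv (gradient w) x ^ 2) := by
    intro τ
    refine Continuous.integrable_of_hasCompactSupport ?_ ?_
    · exact (((continuous_const.mul hφc).rexp).pow 2).mul (hdw.pow 2)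
    · refine HasCompactSupport.intro hwc.isCompact fun x hx => ?_
      rw [grad_off_dv hx]; simp
  have hbound : ∀ᶠ τ : ℝ in atTop, ∫ x, Real.exp (τ * phi x0 ν c x) ^ 2 *
        (⟪gradient w x, gradient w x⟫ + w x ^ 2) ≤ M ^ 2 * Real.exp (-(2 * τ * m)) * Q := by
    filter_upwards [eventually_ge_atTop (1 : ℝ), eventually_ge_atTop (5 * c),
      eventually_ge_atTop (2 / c * (2 * C ^ 2 + 1))] with τ h1 h2 h3
    have hk := carleman2 hν1 hc0 hrc hw2 hwc hws h1 h2
    have hk2 := integral_mono (hI2 τ) (((hI τ).const_mul (2 * C ^ 2)).add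
      (iψ.const_mul (M ^ 2 * Real.exp (-(2 * τ * m))))) (hpt τ (by linarith))
    simp only [Pi.add_apply] at hk2
    rw [integral_add ((hI τ).const_mul (2 * C ^ 2))
      (iψ.const_mul (M ^ 2 * Real.exp (-(2 * τ * m)))), integral_const_mul, integral_const_mul,
      ← hQ] at hk2
    rw [integral_const_mul] at hk
    set I := ∫ x, Real.exp (τ * phi x0 ν c x) ^ 2 * (⟪gradient w x, gradient w x⟫ + w x ^ 2)
    have hI0 : 0 ≤ I := integral_nonneg fun x => by
      have := real_inner_self_nonneg (x := gradient w x)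
      show 0 ≤ Real.exp (τ * phi x0 ν c x) ^ 2 * (⟪gradient w x, gradient w x⟫ + w x ^ 2)
      positivity
    have h4 : 2 * C ^ 2 + 1 ≤ c * τ / 2 := by
      have := mul_le_mul_of_nonneg_left h3 (by positivity : 0 ≤ c / 2)
      have e : c / 2 * (2 / c * (2 * C ^ 2 + 1)) = 2 * C ^ 2 + 1 := by field_simp
      linarith
    nlinarith
  -- the neighbourhood
  set V : Set (Eu n) := ball x0 ρ ∩ {x | -(m / 2) < phi x0 ν c x} with hV
  have hVo : IsOpen V := isOpen_ball.inter (isOpen_lt continuous_const hφc)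
  have hxV : x0 ∈ V := by
    refine ⟨mem_ball_self hρ0, ?_⟩
    show -(m / 2) < phi x0 ν c x0
    simp only [phi, sub_self, inner_zero_left]
    linarith
  filter_upwards [hVo.mem_nhds hxV] with x1 hx1
  by_contra hne
  have hw1 : w x1 ≠ 0 := by
    rw [(hwN x1 (hKN (ball_subset_closedBall hx1.1))).eq_of_nhds]; exact hne
  obtain ⟨θ, hθ, hθc, hθs, ⟨N3, hN3, hKN3, hN31⟩, hθ01⟩ := exists_cutoff
    (isCompact_singleton (x := x1)) hVo (singleton_subset_iff.2 hx1)
  set J := ∫ x, θ x * w x ^ 2 with hJ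
  have cJ : Continuous fun x => θ x * w x ^ 2 := hθ.continuous.mul (hw2.continuous.pow 2)
  have sJ : HasCompactSupport fun x => θ x * w x ^ 2 := hθc.mul_right
  have iJ := cJ.integrable_of_hasCompactSupport (μ := volume) sJ
  have hJ0 : 0 < J := by
    refine cJ.integral_pos_of_hasCompactSupport_nonneg_nonzero sJ
      (fun x => mul_nonneg (hθ01 x).1 (sq_nonneg _)) (x := x1) ?_
    show θ x1 * w x1 ^ 2 ≠ 0
    rw [hN31 x1 (hKN3 rfl), one_mul]
    exact pow_ne_zero 2 hw1
  have hJτ : ∀ᶠ τ : ℝ in atTop, J ≤ M ^ 2 * Q * Real.exp (-(m * τ)) := by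
    filter_upwards [hbound, eventually_ge_atTop (1 : ℝ)] with τ h1 h2
    have h3 : ∫ x, Real.exp (-(m * τ)) * (θ x * w x ^ 2) ≤
        ∫ x, Real.exp (τ * phi x0 ν c x) ^ 2 * (⟪gradient w x, gradient w x⟫ + w x ^ 2) := by
      refine integral_mono (iJ.const_mul _) (hI τ) fun x => ?_
      show Real.exp (-(m * τ)) * (θ x * w x ^ 2) ≤ Real.exp (τ * phi x0 ν c x) ^ 2 *
        (⟪gradient w x, gradient w x⟫ + w x ^ 2)
      have hgn := real_inner_self_nonneg (x := gradient w x)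
      by_cases hxV : x ∈ V
      · have h4 : Real.exp (-(m * τ)) ≤ Real.exp (τ * phi x0 ν c x) ^ 2 := by
          rw [← Real.exp_nat_mul]
          apply Real.exp_le_exp.2
          push_cast
          have : -(m / 2) < phi x0 ν c x := hxV.2
          nlinarith
        have h5 : θ x * w x ^ 2 ≤ ⟪gradient w x, gradient w x⟫ + w x ^ 2 := by
          have := (hθ01 x).2
          nlinarith [sq_nonneg (w x)]
        exact mul_le_mul h4 h5 (mul_nonneg (hθ01 x).1 (sq_nonneg _)) (sq_nonneg _)
      · have : θ x = 0 := image_eq_zero_of_notMem_tsupport fun h => hxV (hθs h)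
        rw [this, zero_mul, mul_zero]
        positivity
    rw [integral_const_mul, ← hJ] at h3
    have h4 := h3.trans h1
    have e : Real.exp (-(2 * τ * m)) = Real.exp (-(m * τ)) * Real.exp (-(m * τ)) := by
      rw [← Real.exp_add]; congr 1; ring
    rw [e] at h4
    refine le_of_mul_le_mul_left ?_ (Real.exp_pos (-(m * τ)))
    linarith
  have hlim : Tendsto (fun τ : ℝ => M ^ 2 * Q * Real.exp (-(m * τ))) atTop (𝓝 (M ^ 2 * Q * 0)) := by
    refine Tendsto.const_mul _ ?_
    exact Real.tendsto_exp_neg_atTop_nhds_zero.comp (tendsto_id.const_mul_atTop hm0)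
  have := ge_of_tendsto hlim hJτ
  linarith

/-! ### Part 15: unique continuation -/

lemma fderiv_zero_of_grad {u : Eu n → ℝ} {x : Eu n} (h : gradient u x = 0) :
    fderiv ℝ u x = 0 := by
  ext1 v
  rw [← grad_inner, h, inner_zero_left]; rfl

lemma grad_sub_const (u : Eu n → ℝ) (c0 : ℝ) : gradient (fun x => u x - c0) = gradient u := by
  funext x
  rw [grad_def, grad_def, fderiv_sub_const]

/-- Near a point where `u` takes a value `c0` with `f c0 = 0`, the Laplacian is controlled. -/
lemma lap_bound {Ω : Set (Eu n)} (hΩ : IsOpen Ω) {a f : ℝ → ℝ} (ha : C11Loc a)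
    (hapos : ∀ t ≥ (0 : ℝ), 0 < a t) (hf : ContDiff ℝ 1 f) {u : Eu n → ℝ}
    (hu : ContDiffOn ℝ 3 u Ω) (hsol : IsWeakSolution a f Ω u) {x0 : Eu n} (hx0 : x0 ∈ Ω)
    (hf0 : f (u x0) = 0) :
    ∃ C, ∀ᶠ x in 𝓝 x0, |dv (gradient u) x| ≤ C * (|u x - u x0| + ‖gradient u x‖) := by
  have hg := grad_contDiffOn (k := 2) hΩ hu
  have hgc : ContinuousAt (gradient u) x0 := (hg.continuousOn).continuousAt (hΩ.mem_nhds hx0)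
  have huc : ContinuousAt u x0 := (hu.continuousOn).continuousAt (hΩ.mem_nhds hx0)
  have hHc : ContinuousAt (fderiv ℝ (gradient u)) x0 :=
    ((hg.of_le (by norm_num : (1 : WithTop ℕ∞) ≤ (2 : ℕ))).continuousOn_fderiv_of_isOpen hΩ
      le_rfl).continuousAt (hΩ.mem_nhds hx0)
  have hac : ContinuousAt (fun x => a ‖gradient u x‖) x0 :=
    ContinuousAt.comp (f := gradient u) (g := fun p : Eu n => a ‖p‖)
      (cont_a_norm ha).continuousAt hgc
  have hdc : ContinuousAt (fun x => |deriv a ‖gradient u x‖|) x0 :=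
    (ContinuousAt.comp (f := gradient u) (g := fun p : Eu n => deriv a ‖p‖)
      (cont_da_norm ha).continuousAt hgc).abs
  obtain ⟨L, t, ht, hL⟩ := (hf.contDiffAt (x := u x0)).exists_lipschitzOnWith
  set m := a ‖gradient u x0‖ / 2 with hm
  have ha0 : 0 < a ‖gradient u x0‖ := hapos _ (norm_nonneg _)
  have hm0 : 0 < m := by positivity
  set D := |deriv a ‖gradient u x0‖| + 1 with hD
  have hD0 : 0 < D := by positivity
  set B := ‖fderiv ℝ (gradient u) x0‖ + 1 with hB
  have hB0 : 0 < B := by positivity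
  refine ⟨(D * B + L) / m, ?_⟩
  filter_upwards [hΩ.mem_nhds hx0, hac.eventually (lt_mem_nhds (by linarith : m < _)),
    hdc.eventually (gt_mem_nhds (by linarith : _ < D)),
    hHc.norm.eventually (gt_mem_nhds (by linarith : _ < B)), huc.eventually ht] with x h1 h2 h3 h4 h5
  have hs := strong_form hΩ ha hf hu hsol x h1
  set g := gradient u x with hgdef
  set T := deriv a ‖g‖ / ‖g‖ * ⟪g, fderiv ℝ (gradient u) x g⟫ with hT
  have hTb : |T| ≤ D * B * ‖g‖ := by
    have hi : |⟪g, fderiv ℝ (gradient u) x g⟫| ≤ ‖g‖ * (B * ‖g‖) := by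
      refine (abs_real_inner_le_norm _ _).trans ?_
      refine mul_le_mul_of_nonneg_left ?_ (norm_nonneg _)
      refine (ContinuousLinearMap.le_opNorm _ _).trans ?_
      exact mul_le_mul_of_nonneg_right h4.le (norm_nonneg _)
    rcases eq_or_ne ‖g‖ 0 with h0 | h0
    · rw [hT, h0]; simp
    rw [hT, abs_mul, abs_div, abs_norm]
    have hgp : 0 < ‖g‖ := lt_of_le_of_ne (norm_nonneg _) (Ne.symm h0)
    calc |deriv a ‖g‖| / ‖g‖ * |⟪g, fderiv ℝ (gradient u) x g⟫|
        ≤ D / ‖g‖ * (‖g‖ * (B * ‖g‖)) := by gcongr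
      _ = D * B * ‖g‖ := by field_simp
  have hfb : |f (u x)| ≤ L * |u x - u x0| := by
    have := hL.dist_le_mul _ h5 _ (mem_of_mem_nhds ht)
    rwa [hf0, Real.dist_eq, Real.dist_eq, sub_zero] at this
  have e : a ‖g‖ * dv (gradient u) x = -(T + f (u x)) := by linarith
  have e2 : a ‖g‖ * |dv (gradient u) x| ≤ D * B * ‖g‖ + L * |u x - u x0| := by
    rw [← abs_of_pos (hm0.trans h2), ← abs_mul, e, abs_neg]
    exact (abs_add_le _ _).trans (add_le_add hTb hfb)
  have e3 : m * |dv (gradient u) x| ≤ a ‖g‖ * |dv (gradient u) x| :=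
    mul_le_mul_of_nonneg_right h2.le (abs_nonneg _)
  rw [div_mul_eq_mul_div, le_div_iff₀ hm0]
  have hL0 : (0 : ℝ) ≤ L := L.2
  have k1 : 0 ≤ D * B * |u x - u x0| := by positivity
  have k2 : 0 ≤ (L : ℝ) * ‖g‖ := by positivity
  nlinarith

lemma unique_cont {Ω : Set (Eu n)} (hΩ : IsOpen Ω) (hΩc : IsPreconnected Ω) {a f : ℝ → ℝ}
    (ha : C11Loc a) (hapos : ∀ t ≥ (0 : ℝ), 0 < a t) (hf : ContDiff ℝ 1 f) {u : Eu n → ℝ}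
    (hu : ContDiffOn ℝ 3 u Ω) (hsol : IsWeakSolution a f Ω u) {V : Set (Eu n)} (hV : IsOpen V)
    (hVne : V.Nonempty) (hVΩ : V ⊆ Ω) (hV0 : ∀ x ∈ V, gradient u x = 0) :
    ∃ c : ℝ, ∀ x ∈ Ω, u x = c := by
  have hud : DifferentiableOn ℝ u Ω := hu.differentiableOn (by norm_num)
  set Z := interior {x | x ∈ Ω ∧ gradient u x = 0} with hZ
  have hZo : IsOpen Z := isOpen_interior
  have hZs : ∀ x ∈ Z, x ∈ Ω ∧ gradient u x = 0 := fun x hx => by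
    have h : x ∈ {x | x ∈ Ω ∧ gradient u x = 0} := interior_subset hx
    exact h
  have hVZ : V ⊆ Z := interior_maximal (fun x hx => ⟨hVΩ hx, hV0 x hx⟩) hV
  by_cases hZΩ : Z = Ω
  · refine hΩ.exists_is_const_of_fderiv_eq_zero hΩc hud fun x hx => ?_
    rw [← hZΩ] at hx
    exact fderiv_zero_of_grad (hZs x hx).2
  exfalso
  obtain ⟨y, x0, R, hR, hx0, hx0Z, hd, hball⟩ := touching_ball hZo (hVne.mono hVZ)
    (fun x hx => (hZs x hx).1) hΩ hΩc hZΩ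
  have hbZ : ball y R ⊆ Z := fun x hx => hball x (le_of_lt hx) (by
    rintro rfl
    rw [mem_ball, hd] at hx
    exact lt_irrefl _ hx)
  have hyZ : y ∈ Z := hbZ (mem_ball_self hR)
  have hconst : ∀ x ∈ ball y R, u x = u y := fun x hx =>
    isOpen_ball.is_const_of_fderiv_eq_zero (convex_ball y R).isPreconnected
      (hud.mono fun z hz => (hZs z (hbZ hz)).1)
      (fun z hz => fderiv_zero_of_grad (hZs z (hbZ hz)).2) hx (mem_ball_self hR)
  have hux0 : u x0 = u y := by
    have h1 : x0 ∈ closure (ball y R) := by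
      rw [closure_ball y hR.ne']; exact hd.le
    have h2 : ContinuousWithinAt u (ball y R) x0 :=
      ((hu.continuousOn).continuousAt (hΩ.mem_nhds hx0)).continuousWithinAt
    have h3 : (𝓝[ball y R] x0).NeBot := mem_closure_iff_nhdsWithin_neBot.1 h1
    refine tendsto_nhds_unique h2 ?_
    refine tendsto_const_nhds.congr' ?_
    filter_upwards [self_mem_nhdsWithin] with z hz using (hconst z hz).symm
  have hfy : f (u y) = 0 := by
    have hs := strong_form hΩ ha hf hu hsol y (hZs y hyZ).1
    have h1 : dv (gradient u) y = 0 := by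
      have : gradient u =ᶠ[𝓝 y] fun _ => 0 := by
        filter_upwards [hZo.mem_nhds hyZ] with z hz using (hZs z hz).2
      rw [dv_congr this]
      simp [dv]
    rw [h1, (hZs y hyZ).2, inner_zero_left] at hs
    linarith
  obtain ⟨C, hC⟩ := lap_bound hΩ ha hapos hf hu hsol hx0 (by rw [hux0]; exact hfy)
  have hgs := grad_sub_const u (u x0)
  have hloc := uc_local hR hd hΩ hx0 (v := fun x => u x - u x0)
    ((hu.of_le (by norm_num)).sub contDiffOn_const)
    (fun x hx => by rw [hconst x hx, hux0, sub_self]) (C := C) (by rw [hgs]; exact hC)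
  refine hx0Z ?_
  rw [hZ, mem_interior_iff_mem_nhds]
  filter_upwards [hΩ.mem_nhds hx0, hloc.eventually_nhds] with x h1 h2
  refine ⟨h1, ?_⟩
  have h3 : (fun x => u x - u x0) =ᶠ[𝓝 x] fun _ => 0 := h2
  rw [← hgs, grad_congr h3]
  simp [grad_def]

theorem main_result
    (n : ℕ) (Ω : Set (Eu n))
    (hΩ : IsCkDomain 1 Ω)
    (a : ℝ → ℝ) (ha : C11Loc a)
    (hapos : ∀ t ≥ (0 : ℝ), 0 < a t) (hlam : ∀ t ≥ (0 : ℝ), 0 < lam1 a t)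
    (f : ℝ → ℝ) (hf : ContDiff ℝ 1 f)
    (u : Eu n → ℝ)
    (hu3 : ContDiffOn ℝ 3 u Ω) (hucl : ContinuousOn u (closure Ω))
    (Du : Eu n → Eu n)
    (hDu : ∀ x ∈ Ω, Du x = gradient u x) (hDuc : ContinuousOn Du (closure Ω))
    (hnc : ¬ ∃ c : ℝ, ∀ x ∈ Ω, u x = c)
    (hsol : IsWeakSolution a f Ω u) (hstab : IsStable a f Ω u)
    (Ω₀ : Set (Eu n))
    (hΩ₀o : IsOpen Ω₀) (hΩ₀c : IsConnected Ω₀) (hΩ₀sub : Ω₀ ⊆ Ω)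
    (hbd : ∀ p ∈ frontier Ω₀, Du p = 0)
    (hmeg : ModerateEnergyGrowth a u Ω₀) :
    Ω₀ = Ω ∧ (∀ x ∈ Ω, gradient u x ≠ 0) ∧
      ∃ e : Eu n, ‖e‖ = 1 ∧ ∀ x ∈ Ω, 0 < ⟪gradient u x, e⟫ := by
  obtain ⟨-, hΩo, hΩc, -⟩ := hΩ
  have hex : ∃ x ∈ Ω₀, gradient u x ≠ 0 := by
    by_contra h
    push Not at h
    exact hnc (unique_cont hΩo hΩc.isPreconnected ha hapos hf hu3 hsol hΩ₀o hΩ₀c.nonempty hΩ₀sub h)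
  obtain ⟨x1, hx1, hg1⟩ := hex
  have hgp : 0 < ‖gradient u x1‖ := norm_pos_iff.2 hg1
  set e := ‖gradient u x1‖⁻¹ • gradient u x1 with he
  have he1 : ‖e‖ = 1 := by
    rw [he, norm_smul, norm_inv, norm_norm, inv_mul_cancel₀ hgp.ne']
  have hin : 0 < ⟪Du x1, e⟫ := by
    rw [hDu x1 (hΩ₀sub hx1), he, real_inner_smul_right, real_inner_self_eq_norm_sq]
    positivity
  have hall := wf_pos_all hΩo hΩc.isPreconnected ha hapos hlam hf hu3 hucl hDu hDuc hsol hstab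
    hΩ₀o hΩ₀sub hbd hmeg e he1 ⟨x1, by
      rw [wf, indicator_of_mem hx1]; exact lt_max_of_lt_left hin⟩
  have hpos : ∀ x ∈ Ω, 0 < ⟪gradient u x, e⟫ := fun x hx => by
    rw [← hDu x hx]; exact (wf_pos (hall x hx)).2.1
  refine ⟨Subset.antisymm hΩ₀sub fun x hx => (wf_pos (hall x hx)).1, fun x hx h0 => ?_,
    e, he1, hpos⟩
  have := hpos x hx
  rw [h0, inner_zero_left] at this
  exact lt_irrefl _ this

/-- Lemma 5.2 of the paper: if `∇u` vanishes on the whole boundary of a connected open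
`Ω₀ ⊆ Ω` and `u` has moderate energy growth in `Ω₀`, then `Ω₀ = Ω`, `u` has no interior
critical points, and `u` is strictly monotone in some direction `e`. -/
theorem no_critical_points_from_vanishing_boundary_gradient
    (n : ℕ) (Ω : Set (EuclideanSpace ℝ (Fin n)))
    (hΩ : IsCkDomain 1 Ω)
    (a : ℝ → ℝ) (ha : C11Loc a)
    (hapos : ∀ t ≥ (0 : ℝ), 0 < a t) (hlam : ∀ t ≥ (0 : ℝ), 0 < lam1 a t)
    (f : ℝ → ℝ) (hf : ContDiff ℝ 1 f)
    (u : EuclideanSpace ℝ (Fin n) → ℝ)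
    (hu3 : ContDiffOn ℝ 3 u Ω) (hucl : ContinuousOn u (closure Ω))
    (Du : EuclideanSpace ℝ (Fin n) → EuclideanSpace ℝ (Fin n))
    (hDu : ∀ x ∈ Ω, Du x = gradient u x) (hDuc : ContinuousOn Du (closure Ω))
    (hnc : ¬ ∃ c : ℝ, ∀ x ∈ Ω, u x = c)
    (hsol : IsWeakSolution a f Ω u) (hstab : IsStable a f Ω u)
    (Ω₀ : Set (EuclideanSpace ℝ (Fin n)))
    (hΩ₀o : IsOpen Ω₀) (hΩ₀c : IsConnected Ω₀) (hΩ₀sub : Ω₀ ⊆ Ω)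
    (hbd : ∀ p ∈ frontier Ω₀, Du p = 0)
    (hmeg : ModerateEnergyGrowth a u Ω₀) :
    Ω₀ = Ω ∧ (∀ x ∈ Ω, gradient u x ≠ 0) ∧
      ∃ e : EuclideanSpace ℝ (Fin n), ‖e‖ = 1 ∧ ∀ x ∈ Ω, 0 < ⟪gradient u x, e⟫ := by
  exact main_result n Ω hΩ a ha hapos hlam f hf u hu3 hucl Du hDu hDuc hnc hsol hstab Ω₀ hΩ₀o
    hΩ₀c hΩ₀sub hbd hmeg
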